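/- arXiv:1311.7456 — 4 statements merged into one kernel-verified Lean document; each statement's English description precedes it below -/
import Mathlib

section
/- Let p be a prime, K a finite extension of ℚ_p, E/K a quadratic field extension with nontrivial K-automorphism τ, and (V,φ) a nondegenerate Hermitian space over E of dimension 2m with m ≥ 1. Then exactly one of the following holds: (i) V is an orthogonal direct sum of m hyperbolic planes; (ii) V is an orthogonal direct sum of m−1 hyperbolic planes and a 2-dimensional subspace containing no nonzero isotropic vector. -/
/-!
Splitting off hyperbolic planes as long as there are isotropic vectors writes `V` as an orthogonal
sum of hyperbolic planes and an anisotropic space `P`. The number of planes is the dimension of a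
maximal totally isotropic subspace, hence an invariant of `V`, and it remains to bound `dim P`
by `2`.

On `P`, viewed as a `K`-space, `v ↦ B v v` is an anisotropic quadratic form `Q` with values in `K`,
so the bound becomes `dim_K P ≤ 4`. By anisotropy and completeness, `{x | ‖Q x‖ ≤ 1}` and
`{x | ‖Q x‖ < 1}` are modules over the ring of integers. By Chevalley's theorem over the residue
field their quotient has dimension at most `2`. Applying this to `Q` and to `π⁻¹ • Q`, for a
uniformizer `π`, gives a subspace `T` with `dim_K T ≤ 4` that contains `{x | ‖Q x‖ ≤ 1}` modulo
`π`, hence modulo every power of `π`. A vector orthogonal to `T` is therefore orthogonal to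
everything.
-/

open Module QuadraticMap

section Chevalley

variable {σ : Type*} [Fintype σ]

theorem exists_ne_zero_eval_eq_zero {k : Type*} [Field k] [Finite k] {F : MvPolynomial σ k}
    (hF : F.totalDegree < Fintype.card σ) (h0 : MvPolynomial.eval 0 F = 0) :
    ∃ x ≠ 0, MvPolynomial.eval x F = 0 := by
  classical
  have := Fintype.ofFinite k
  obtain ⟨p, hp⟩ := CharP.exists k
  have hprime : p.Prime :=
    (CharP.char_is_prime_or_zero k p).resolve_right (CharP.char_ne_zero_of_finite k p)
  have hpos : 0 < Fintype.card {x : σ → k // MvPolynomial.eval x F = 0} :=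
    Fintype.card_pos_iff.mpr ⟨⟨0, h0⟩⟩
  have hlt := hprime.one_lt.trans_le (Nat.le_of_dvd hpos (char_dvd_card_solutions p hF))
  obtain ⟨⟨x, hx⟩, hne⟩ := Fintype.exists_ne_of_one_lt_card hlt ⟨0, h0⟩
  exact ⟨x, fun h => hne (Subtype.ext h), hx⟩

open IsLocalRing in
theorem exists_isUnit_eval_mem_maximalIdeal {R : Type*} [CommRing R] [IsLocalRing R]
    [Finite (ResidueField R)] {F : MvPolynomial σ R} (hF : F.totalDegree < Fintype.card σ)
    (h0 : MvPolynomial.eval 0 F ∈ maximalIdeal R) :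
    ∃ x : σ → R, (∃ i, IsUnit (x i)) ∧ MvPolynomial.eval x F ∈ maximalIdeal R := by
  have eval_residue (x : σ → R) : MvPolynomial.eval (residue R ∘ x) (F.map (residue R)) =
      residue R (MvPolynomial.eval x F) := by
    rw [MvPolynomial.eval_map, ← MvPolynomial.eval₂_comp]
  obtain ⟨y, hy, hyF⟩ := exists_ne_zero_eval_eq_zero (F := F.map (residue R))
    ((Finset.sup_mono (MvPolynomial.support_map_subset _ _)).trans_lt hF) (by
      rw [← (residue_eq_zero_iff _).mpr h0, ← eval_residue]
      congr 1)
  choose x hx using fun i => residue_surjective (y i)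
  obtain rfl : residue R ∘ x = y := funext hx
  obtain ⟨i, hi⟩ := Function.ne_iff.mp hy
  exact ⟨x, ⟨i, residue_ne_zero_iff_isUnit _ |>.mp hi⟩,
    (residue_eq_zero_iff _).mp ((eval_residue x).symm.trans hyF)⟩

end Chevalley

section LocalField

open scoped NormedField Valued

variable (K : Type*) [NontriviallyNormedField K] [IsUltrametricDist K] [ProperSpace K]

theorem isDiscreteValuationRing_and_finite_residueField :
    IsDiscreteValuationRing 𝒪[K] ∧ Finite 𝓀[K] := by
  have : CompactSpace 𝒪[K] := by
    refine (isCompact_iff_compactSpace (s := (𝒪[K] : Set K))).mp ?_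
    convert! isCompact_closedBall (0 : K) 1
    ext x
    simpa using Valued.integer.mem_iff
  have : (Valued.v : Valuation K NNReal).RankOne :=
    inferInstanceAs (NormedField.valuation (K := K)).RankOne
  open Valued.integer in
  exact (compactSpace_iff_completeSpace_and_isDiscreteValuationRing_and_finite_residueField.mp
    ‹_›).2

theorem exists_norm_lt_one_forall_norm_le :
    ∃ π : K, π ≠ 0 ∧ ‖π‖ < 1 ∧ ∀ x : K, ‖x‖ < 1 → ‖x‖ ≤ ‖π‖ := by
  obtain ⟨_, -⟩ := isDiscreteValuationRing_and_finite_residueField K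
  obtain ⟨ϖ, hϖ⟩ := IsDiscreteValuationRing.exists_irreducible 𝒪[K]
  refine ⟨ϖ, by simpa using hϖ.ne_zero, Valued.integer.norm_irreducible_lt_one hϖ,
    fun x hx => ?_⟩
  have hmem : (⟨x, Valued.integer.mem_iff.mpr hx.le⟩ : 𝒪[K]) ∈ (𝓂[K] : Set 𝒪[K]) := by
    rw [SetLike.mem_coe, IsLocalRing.mem_maximalIdeal, mem_nonunits_iff,
      Valued.integer.isUnit_iff_norm_eq_one]
    exact hx.ne
  rw [hϖ.maximalIdeal_eq_closedBall] at hmem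
  simpa using hmem

variable {K}

theorem exists_norm_eq_one_norm_sum_lt_one {ι : Type*} [Fintype ι] (hι : 2 < Fintype.card ι)
    {A : ι → ι → K} (hA : ∀ i j, ‖A i j‖ ≤ 1) :
    ∃ c : ι → K, (∀ i, ‖c i‖ ≤ 1) ∧ (∃ i, ‖c i‖ = 1) ∧
      ‖∑ i, ∑ j, c i * c j * A i j‖ < 1 := by
  obtain ⟨_, _⟩ := isDiscreteValuationRing_and_finite_residueField K
  let a (i j : ι) : 𝒪[K] := ⟨A i j, Valued.integer.mem_iff.mpr (hA i j)⟩
  let F : MvPolynomial ι 𝒪[K] := ∑ i, ∑ j, .X i * .X j * .C (a i j)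
  have hF : F.IsHomogeneous 2 := .sum _ _ _ fun i _ => .sum _ _ _ fun j _ =>
    ((MvPolynomial.isHomogeneous_X _ i).mul (MvPolynomial.isHomogeneous_X _ j)).mul
      (MvPolynomial.isHomogeneous_C _ _)
  obtain ⟨c, ⟨i, hi⟩, hc⟩ := exists_isUnit_eval_mem_maximalIdeal
    (hF.totalDegree_le.trans_lt hι) (by simp [F])
  refine ⟨fun i => c i, fun i => Valued.integer.norm_le_one (c i),
    ⟨i, Valued.integer.isUnit_iff_norm_eq_one.mp hi⟩, ?_⟩
  rw [IsLocalRing.mem_maximalIdeal, mem_nonunits_iff, Valued.integer.isUnit_iff_norm_eq_one] at hc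
  simpa [F, a] using (Valued.integer.norm_le_one _).lt_of_ne hc

end LocalField

theorem exists_one_sub_add_mul_sq_eq_zero {K : Type*} [NormedField K] [IsUltrametricDist K]
    [CompleteSpace K] {c : K} (hc : ‖c‖ < 1) : ∃ s : K, 1 - s + c * s ^ 2 = 0 := by
  let f (s : K) : K := 1 + c * s ^ 2
  have hmaps : Set.MapsTo f (Metric.closedBall 0 1) (Metric.closedBall 0 1) := by
    intro s hs
    simp only [mem_closedBall_zero_iff] at hs ⊢
    refine (IsUltrametricDist.norm_add_le_max _ _).trans (max_le (by simp) ?_)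
    rw [norm_mul, norm_pow]
    exact mul_le_one₀ hc.le (by positivity) (pow_le_one₀ (norm_nonneg _) hs)
  have hcontr : ContractingWith ‖c‖₊ (hmaps.restrict f _ _) := by
    refine ⟨hc, LipschitzWith.of_dist_le_mul fun s t => ?_⟩
    have hs : ‖(s : K)‖ ≤ 1 := mem_closedBall_zero_iff.mp s.2
    have ht : ‖(t : K)‖ ≤ 1 := mem_closedBall_zero_iff.mp t.2
    have hsub : f s - f t = c * (s - t) * (s + t) := by simp only [f]; ring
    change dist (f s) (f t) ≤ ‖c‖ * dist (s : K) t
    rw [dist_eq_norm, dist_eq_norm, hsub, norm_mul, norm_mul]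
    exact mul_le_of_le_one_right (by positivity)
      ((IsUltrametricDist.norm_add_le_max _ _).trans (max_le hs ht))
  obtain ⟨s, -, hs, -⟩ := hcontr.exists_fixedPoint' Metric.isClosed_closedBall.isComplete hmaps
    (x := 0) (by simp) (edist_ne_top _ _)
  have hs' : 1 + c * s ^ 2 = s := hs
  exact ⟨s, by linear_combination hs'⟩

theorem map_sum_smul_eq_sum_sum {R M ι : Type*} [CommRing R] [AddCommGroup M] [Module R M]
    [Fintype ι] [LinearOrder ι] (Q : QuadraticForm R M) (x : ι → M) (c : ι → R) :
    Q (∑ i, c i • x i) =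
      ∑ i, ∑ j, c i * c j *
        if i = j then Q (x i) else if i < j then polar Q (x i) (x j) else 0 := by
  let q : QuadraticForm R (ι → R) := Q.comp (Fintype.linearCombination R x)
  have hq : q c = q.toBilin (Pi.basisFun R ι) c c :=
    (DFunLike.congr_fun (q.toQuadraticMap_toBilin (Pi.basisFun R ι)) c).symm
  have hpolar (v w) : polar q v w =
      polar Q (Fintype.linearCombination R x v) (Fintype.linearCombination R x w) := by
    simp [polar, q]
  have hqc : q c = Q (∑ i, c i • x i) := by simp [q, Fintype.linearCombination_apply]
  rw [← hqc, hq, ← LinearMap.sum_repr_mul_repr_mul (Pi.basisFun R ι) (Pi.basisFun R ι),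
    Finsupp.sum_fintype _ _ (by simp)]
  refine Finset.sum_congr rfl fun i _ => ?_
  rw [Finsupp.sum_fintype _ _ (by simp)]
  refine Finset.sum_congr rfl fun j _ => ?_
  rw [toBilin_apply, hpolar]
  simp [q, mul_assoc]

section Ultrametric

variable {K V : Type*} [NormedField K] [AddCommGroup V] [Module K V] {Q : QuadraticForm K V}

theorem norm_map_smul_lt_one {a : K} {x : V} (ha : ‖a‖ < 1) (hx : ‖Q x‖ ≤ 1) :
    ‖Q (a • x)‖ < 1 := by
  rw [QuadraticMap.map_smul, smul_eq_mul, norm_mul, norm_mul]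
  exact mul_lt_one_of_nonneg_of_lt_one_left (by positivity)
    (mul_lt_one_of_nonneg_of_lt_one_left (norm_nonneg a) ha ha.le) hx

variable [IsUltrametricDist K]

theorem sq_norm_polar_smul_self_le (r : K) (y : V) :
    ‖polar Q (r • y) y‖ ^ 2 ≤ ‖Q (r • y)‖ * ‖Q y‖ := by
  have h2 : ‖(2 : K)‖ ≤ 1 := by simpa using IsUltrametricDist.norm_natCast_le_one K 2
  have hpolar : polar Q (r • y) y = 2 * (r * Q y) := by
    rw [polar_smul_left, polar_self, smul_eq_mul, nsmul_eq_mul, Nat.cast_two]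
    ring
  rw [hpolar, QuadraticMap.map_smul, smul_eq_mul]
  simp only [norm_mul]
  calc (‖(2 : K)‖ * (‖r‖ * ‖Q y‖)) ^ 2 = ‖(2 : K)‖ ^ 2 * (‖r‖ * ‖r‖ * ‖Q y‖ * ‖Q y‖) := by ring
    _ ≤ ‖r‖ * ‖r‖ * ‖Q y‖ * ‖Q y‖ :=
      mul_le_of_le_one_left (by positivity) (pow_le_one₀ (norm_nonneg _) h2)

section CompleteSpace

variable [CompleteSpace K]

/-- If the inequality failed, then `Q x - r * polar Q x y + r ^ 2 * Q y` would have a root `r` in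
`K`, so that `x = r • y` by anisotropy. -/
theorem sq_norm_polar_le (hQ : Q.Anisotropic) (x y : V) :
    ‖polar Q x y‖ ^ 2 ≤ ‖Q x‖ * ‖Q y‖ := by
  by_contra! hlt
  have hB : polar Q x y ≠ 0 := by
    intro h
    rw [h, norm_zero, zero_pow two_ne_zero] at hlt
    exact hlt.not_ge (by positivity)
  obtain ⟨s, hs⟩ := exists_one_sub_add_mul_sq_eq_zero (c := Q x * Q y / polar Q x y ^ 2)
    (by rwa [norm_div, norm_mul, norm_pow, div_lt_one (by positivity)])
  let r : K := Q x / polar Q x y * s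
  have hzero : Q (x + (-r) • y) = 0 := by
    rw [QuadraticMap.map_add Q, QuadraticMap.map_smul, polar_smul_right, smul_eq_mul, smul_eq_mul]
    simp only [r]
    field_simp at hs ⊢
    linear_combination Q x * hs
  have hx : x = r • y := by simpa [add_neg_eq_zero] using hQ _ hzero
  rw [hx] at hlt
  exact hlt.not_ge (sq_norm_polar_smul_self_le r y)

theorem norm_polar_le_max (hQ : Q.Anisotropic) (x y : V) :
    ‖polar Q x y‖ ≤ max ‖Q x‖ ‖Q y‖ := by
  refine le_of_sq_le_sq ((sq_norm_polar_le hQ x y).trans ?_) (le_max_of_le_left (norm_nonneg _))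
  rw [pow_two]
  gcongr
  exacts [le_max_left _ _, le_max_right _ _]

theorem norm_map_add_le_max (hQ : Q.Anisotropic) (x y : V) :
    ‖Q (x + y)‖ ≤ max ‖Q x‖ ‖Q y‖ := by
  rw [QuadraticMap.map_add Q]
  exact (IsUltrametricDist.norm_add_le_max _ _).trans
    (max_le (IsUltrametricDist.norm_add_le_max _ _) (norm_polar_le_max hQ x y))

end CompleteSpace

/-- A family of vectors of `{x | ‖Q x‖ ≤ 1}` that is linearly independent over the residue field in
the quotient by `{x | ‖Q x‖ < 1}`. For anisotropic `Q` over a complete ultrametric field both sets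
are modules over the ring of integers. The quotient is not formed: its relations are lifted to
integral coefficients. -/
structure IsResiduallyIndependent (Q : QuadraticForm K V) {ι : Type*} [Fintype ι] (x : ι → V) :
    Prop where
  norm_map_le_one : ∀ i, ‖Q (x i)‖ ≤ 1
  norm_lt_one : ∀ c : ι → K, (∀ i, ‖c i‖ ≤ 1) → ‖Q (∑ i, c i • x i)‖ < 1 → ∀ i, ‖c i‖ < 1

theorem IsResiduallyIndependent.cons [CompleteSpace K] (hQ : Q.Anisotropic) {n : ℕ} {x : Fin n → V}
    (hx : IsResiduallyIndependent Q x) {y : V} (hy : ‖Q y‖ ≤ 1)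
    (hyx : ∀ w ∈ Submodule.span K (Set.range x), 1 ≤ ‖Q (y - w)‖) :
    IsResiduallyIndependent Q (Fin.cons y x : Fin (n + 1) → V) := by
  refine ⟨Fin.cases hy hx.norm_map_le_one, fun c hc hlt => ?_⟩
  rw [Fin.sum_univ_succ] at hlt
  simp only [Fin.cons_zero, Fin.cons_succ] at hlt
  set w := ∑ i : Fin n, c i.succ • x i
  have hw : w ∈ Submodule.span K (Set.range x) :=
    sum_mem fun i _ => Submodule.smul_mem _ _ (Submodule.subset_span ⟨i, rfl⟩)
  have hc0 : ‖c 0‖ < 1 := by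
    refine (hc 0).lt_of_ne fun h => (hyx _ (Submodule.smul_mem _ (-(c 0)⁻¹) hw)).not_gt ?_
    have h0 : c 0 ≠ 0 := norm_ne_zero_iff.mp (h ▸ one_ne_zero)
    rwa [show c 0 • y + w = c 0 • (y - (-(c 0)⁻¹) • w) by simp [smul_smul, h0],
      QuadraticMap.map_smul, norm_smul, norm_mul, h, one_mul, one_mul] at hlt
  refine Fin.cases hc0 (hx.norm_lt_one _ (fun i => hc i.succ) ?_)
  calc ‖Q w‖ = ‖Q (c 0 • y + w + -(c 0 • y))‖ := by rw [add_neg_cancel_comm]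
    _ ≤ max ‖Q (c 0 • y + w)‖ ‖Q (-(c 0 • y))‖ := norm_map_add_le_max hQ _ _
    _ < 1 := max_lt hlt (by rw [QuadraticMap.map_neg]; exact norm_map_smul_lt_one hc0 hy)

end Ultrametric

section LocalFieldForms

variable {K V : Type*} [NontriviallyNormedField K] [IsUltrametricDist K] [ProperSpace K]
  [AddCommGroup V] [Module K V] {Q : QuadraticForm K V}

theorem IsResiduallyIndependent.card_le_two (hQ : Q.Anisotropic) {ι : Type*} [Fintype ι]
    [LinearOrder ι] {x : ι → V} (hx : IsResiduallyIndependent Q x) : Fintype.card ι ≤ 2 := by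
  by_contra! hcard
  obtain ⟨c, hc, ⟨i, hi⟩, hlt⟩ := exists_norm_eq_one_norm_sum_lt_one hcard
    (A := fun i j => if i = j then Q (x i) else if i < j then polar Q (x i) (x j) else 0)
    fun i j => by
      split_ifs
      exacts [hx.norm_map_le_one i, (norm_polar_le_max hQ _ _).trans
        (max_le (hx.norm_map_le_one i) (hx.norm_map_le_one j)), by simp]
  rw [← map_sum_smul_eq_sum_sum] at hlt
  exact (hx.norm_lt_one c hc hlt i).ne hi

theorem exists_submodule_finrank_le_two (hQ : Q.Anisotropic) :
    ∃ W : Submodule K V, W.FG ∧ finrank K W ≤ 2 ∧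
      ∀ x, ‖Q x‖ ≤ 1 → ∃ w ∈ W, ‖Q (x - w)‖ < 1 := by
  by_contra! hW
  have exists_family : ∀ n ≤ 3, ∃ x : Fin n → V, IsResiduallyIndependent Q x := by
    intro n
    induction n with
    | zero => exact fun _ => ⟨Fin.elim0, fun i => i.elim0, fun _ _ _ i => i.elim0⟩
    | succ n ih =>
      intro hn
      obtain ⟨x, hx⟩ := ih (by omega)
      have hrank : finrank K (Submodule.span K (Set.range x)) ≤ 2 :=
        (finrank_range_le_card x).trans (by rw [Fintype.card_fin]; omega)
      obtain ⟨y, hy, hyx⟩ := hW _ (Submodule.fg_span (Set.finite_range x)) hrank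
      exact ⟨_, hx.cons hQ hy hyx⟩
  obtain ⟨x, hx⟩ := exists_family 3 le_rfl
  simpa using hx.card_le_two hQ

theorem exists_submodule_finrank_le_four (hQ : Q.Anisotropic) {π : K} (hπ0 : π ≠ 0)
    (hπ : ∀ a : K, ‖a‖ < 1 → ‖a‖ ≤ ‖π‖) :
    ∃ T : Submodule K V, T.FG ∧ finrank K T ≤ 4 ∧
      ∀ x, ‖Q x‖ ≤ 1 → ∃ z, ‖Q z‖ ≤ 1 ∧ x - π • z ∈ T := by
  have hQ' : (π⁻¹ • Q).Anisotropic := fun x hx =>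
    hQ x ((smul_eq_zero.mp hx).resolve_left (inv_ne_zero hπ0))
  obtain ⟨W, hWfg, hW, hQW⟩ := exists_submodule_finrank_le_two hQ
  obtain ⟨W', hWfg', hW', hQW'⟩ := exists_submodule_finrank_le_two hQ'
  have hnorm (x : V) : ‖(π⁻¹ • Q) x‖ = ‖π‖⁻¹ * ‖Q x‖ := by
    rw [smul_apply, norm_smul, norm_inv]
  have hπpos : 0 < ‖π‖ := norm_pos_iff.mpr hπ0
  refine ⟨W ⊔ W', hWfg.sup hWfg', ?_, fun x hx => ?_⟩
  · have := Module.Finite.iff_fg.mpr hWfg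
    have := Module.Finite.iff_fg.mpr hWfg'
    exact (Submodule.finrank_add_le_finrank_add_finrank W W').trans (by omega)
  · obtain ⟨w, hw, hxw⟩ := hQW x hx
    obtain ⟨w', hw', hxw'⟩ := hQW' (x - w) (by
      rw [hnorm, inv_mul_le_iff₀ hπpos, mul_one]
      exact hπ _ hxw)
    refine ⟨π⁻¹ • (x - w - w'), ?_, ?_⟩
    · have hle := hπ _ hxw'
      rw [smul_apply, smul_eq_mul] at hle
      rw [QuadraticMap.map_smul, smul_eq_mul, mul_assoc, norm_mul, norm_inv,
        inv_mul_le_iff₀ hπpos, mul_one]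
      exact hle
    · rw [smul_inv_smul₀ hπ0, show x - (x - w - w') = w + w' by abel]
      exact Submodule.add_mem_sup hw hw'

theorem polar_eq_zero_of_forall_mem (hQ : Q.Anisotropic) {π : K} (hπ1 : ‖π‖ < 1)
    {T : Submodule K V} (hT : ∀ x, ‖Q x‖ ≤ 1 → ∃ z, ‖Q z‖ ≤ 1 ∧ x - π • z ∈ T) {y : V}
    (hy : ∀ t ∈ T, polar Q t y = 0) (x : V) : polar Q x y = 0 := by
  have norm_polar_le (n : ℕ) :
      ∀ x, ‖Q x‖ ≤ 1 → ‖polar Q x y‖ ≤ ‖π‖ ^ n * max 1 ‖Q y‖ := by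
    induction n with
    | zero =>
      intro x hx
      rw [pow_zero, one_mul]
      exact (norm_polar_le_max hQ x y).trans (max_le_max hx le_rfl)
    | succ n ih =>
      intro x hx
      obtain ⟨z, hz, hxz⟩ := hT x hx
      rw [← sub_add_cancel x (π • z), polar_add_left, hy _ hxz, zero_add, polar_smul_left,
        norm_smul, pow_succ', mul_assoc]
      gcongr
      exact ih z hz
  have polar_eq_zero (x : V) (hx : ‖Q x‖ ≤ 1) : polar Q x y = 0 := by
    have hlim := (tendsto_pow_atTop_nhds_zero_of_lt_one (norm_nonneg π) hπ1).mul_const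
      (max 1 ‖Q y‖)
    rw [zero_mul] at hlim
    exact norm_le_zero_iff.mp (ge_of_tendsto' hlim fun n => norm_polar_le n x hx)
  rcases le_total ‖Q x‖ 1 with hx | hx
  · exact polar_eq_zero x hx
  · have hQx : Q x ≠ 0 := norm_pos_iff.mp (one_pos.trans_le hx)
    have hscaled := polar_eq_zero ((Q x)⁻¹ • x) (by
      rw [QuadraticMap.map_smul, smul_eq_mul, mul_assoc, inv_mul_cancel₀ hQx, mul_one, norm_inv]
      exact inv_le_one_of_one_le₀ hx)
    rw [polar_smul_left] at hscaled
    exact (smul_eq_zero.mp hscaled).resolve_left (inv_ne_zero hQx)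

theorem finrank_le_four_of_anisotropic (hQ : Q.Anisotropic) (hsep : Q.polarBilin.SeparatingRight) :
    finrank K V ≤ 4 := by
  obtain ⟨π, hπ0, hπ1, hπ⟩ := exists_norm_lt_one_forall_norm_le K
  obtain ⟨T, hTfg, hT, hQT⟩ := exists_submodule_finrank_le_four hQ hπ0 hπ
  have := Module.Finite.iff_fg.mpr hTfg
  let f : V →ₗ[K] Dual K T := (Q.polarBilin.domRestrict T).flip
  have hf : Function.Injective f := by
    refine (injective_iff_map_eq_zero f).mpr fun y hy => hsep y ?_
    exact polar_eq_zero_of_forall_mem hQ hπ1 hQT fun t ht => LinearMap.congr_fun hy ⟨t, ht⟩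
  calc finrank K V ≤ finrank K (Dual K T) := LinearMap.finrank_le_finrank_of_injective hf
    _ = finrank K T := Subspace.dual_finrank_eq
    _ ≤ 4 := hT

end LocalFieldForms

section SesquilinearForms

variable {E V : Type*} [Field E] [AddCommGroup V] [Module E V] {τ : E →+* E}
  {B : V →ₗ[E] V →ₛₗ[τ] E}

theorem mem_orthogonalBilin_span {S : Set V} {v : V} :
    v ∈ (Submodule.span E S).orthogonalBilin B ↔ ∀ s ∈ S, B s v = 0 := by
  change Submodule.span E S ≤ LinearMap.ker (B.flip v) ↔ _
  rw [Submodule.span_le]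
  rfl

theorem finrank_add_finrank_orthogonalBilin [FiniteDimensional E V] [RingHomSurjective τ]
    (hrefl : B.IsRefl) (hsep : B.SeparatingLeft) (N : Submodule E V) :
    finrank E N + finrank E (N.orthogonalBilin B) = finrank E V := by
  have hinj : Function.Injective B.flip := (injective_iff_map_eq_zero _).mpr fun v hv =>
    hsep v fun w => hrefl _ _ (LinearMap.congr_fun hv w)
  have hfinrank : finrank E N = finrank E (N.map B.flip) := by
    let f : N ≃+ N.map B.flip := .ofBijective (B.flip.submoduleMap N)
      ⟨LinearMap.submoduleMap_injective hinj N, LinearMap.submoduleMap_surjective B.flip N⟩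
    simpa [finrank] using congrArg Cardinal.toNat (lift_rank_eq_of_equiv_equiv τ f
      ⟨τ.injective, τ.surjective⟩ (map_smulₛₗ (B.flip.submoduleMap N)))
  have horth : N.orthogonalBilin B = (N.map B.flip).dualCoannihilator := by
    ext v
    simp only [Submodule.mem_orthogonalBilin_iff, Submodule.mem_dualCoannihilator,
      Submodule.mem_map, forall_exists_index, and_imp, forall_apply_eq_imp_iff₂,
      LinearMap.flip_apply]
    exact forall₂_congr fun _ _ => hrefl.eq_iff
  rw [hfinrank, horth, Subspace.finrank_add_finrank_dualCoannihilator_eq]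

theorem isInternal_of_orthogonal {ι : Type*} [DecidableEq ι] {W : ι → Submodule E V}
    (horth : ∀ i j, i ≠ j → ∀ v ∈ W i, ∀ w ∈ W j, B v w = 0)
    (hnd : ∀ i, ∀ v ∈ W i, (∀ w ∈ W i, B w v = 0) → v = 0) (htop : ⨆ i, W i = ⊤) :
    DirectSum.IsInternal W := by
  rw [DirectSum.isInternal_submodule_iff_iSupIndep_and_iSup_eq_top]
  refine ⟨fun i => Submodule.disjoint_def.mpr fun v hv hv' => hnd i v hv fun w hw => ?_, htop⟩
  have hle : ⨆ (j) (_ : j ≠ i), W j ≤ (W i).orthogonalBilin B :=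
    iSup₂_le fun j hj x hx y hy => horth i j hj.symm y hy x hx
  exact hle hv' w hw

/-- The component in `P` of a vector of `U ⊓ (L ⊔ P)` is isotropic, hence zero. So
`U ⊓ (L ⊔ P) = U ⊓ L`, which is orthogonal to `U ⊔ (L ⊔ P)`. -/
theorem finrank_add_finrank_sup_le [FiniteDimensional E V] [RingHomSurjective τ]
    (hrefl : B.IsRefl) (hsep : B.SeparatingLeft) {U L P : Submodule E V}
    (hU : U ≤ U.orthogonalBilin B) (hL : L ⊔ P ≤ L.orthogonalBilin B)
    (hP : ∀ v ∈ P, B v v = 0 → v = 0) :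
    finrank E U + finrank E (L ⊔ P : Submodule E V) ≤ finrank E V := by
  have hinf : U ⊓ (L ⊔ P) ≤ U ⊓ L := by
    rintro x ⟨hxU, hx⟩
    obtain ⟨l, hl, q, hq, rfl⟩ := Submodule.mem_sup.mp hx
    have hlq : B l q = 0 := hL (Submodule.mem_sup_right hq) l hl
    have hqq : B q q = 0 := by
      simpa [hL (Submodule.mem_sup_left hl) l hl, hlq, hrefl l q hlq] using hU hxU _ hxU
    rw [hP q hq hqq, add_zero] at hxU ⊢
    exact ⟨hxU, hl⟩
  have hsup : U ⊔ (L ⊔ P) ≤ (U ⊓ L).orthogonalBilin B :=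
    sup_le (hU.trans (Submodule.orthogonalBilin_le inf_le_left))
      (hL.trans (Submodule.orthogonalBilin_le inf_le_right))
  calc finrank E U + finrank E (L ⊔ P : Submodule E V)
      = finrank E (U ⊔ (L ⊔ P) : Submodule E V) + finrank E (U ⊓ (L ⊔ P) : Submodule E V) :=
        (Submodule.finrank_sup_add_finrank_inf_eq _ _).symm
    _ ≤ finrank E ((U ⊓ L).orthogonalBilin B) + finrank E (U ⊓ L : Submodule E V) :=
        add_le_add (Submodule.finrank_mono hsup) (Submodule.finrank_mono hinf)
    _ = finrank E V := by
        rw [add_comm, finrank_add_finrank_orthogonalBilin hrefl hsep]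

end SesquilinearForms

section HermitianForms

-- A Hermitian form that is linear in its first variable is a `B` with `B.flip.IsSymm`, because
-- `LinearMap.IsSymm` is stated for forms that are semilinear in the first variable.
variable {E V : Type*} [Field E] [AddCommGroup V] [Module E V] {τ : E →+* E}
  {B : V →ₗ[E] V →ₛₗ[τ] E}

theorem apply_eq_map_apply_swap (hB : B.flip.IsSymm) (v w : V) : B v w = τ (B w v) :=
  (hB.eq v w).symm

theorem isRefl_of_isSymm_flip (hB : B.flip.IsSymm) : B.IsRefl := fun v w h => hB.isRefl w v h

theorem exists_apply_eq_one_of_isotropic (hB : B.flip.IsSymm) {e : E} (he : e + τ e = 1) {x z : V}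
    (hx : B x x = 0) (hxz : B x z ≠ 0) :
    ∃ y ∈ Submodule.span E {x, z}, B x y = 1 ∧ B y y = 0 := by
  have hττ : τ (τ (B x z)) = B x z := by
    rw [← apply_eq_map_apply_swap hB z x, ← apply_eq_map_apply_swap hB x z]
  let y₀ := (τ (B x z))⁻¹ • z
  have hxy₀ : B x y₀ = 1 := by simp [y₀, hττ, hxz]
  have hy₀x : B y₀ x = 1 := by rw [apply_eq_map_apply_swap hB, hxy₀, map_one]
  have hfixed : τ (B y₀ y₀) = B y₀ y₀ := (apply_eq_map_apply_swap hB y₀ y₀).symm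
  refine ⟨y₀ - (B y₀ y₀ * e) • x, ?_, by simp [hxy₀, hx], ?_⟩
  · exact Submodule.mem_span_pair.mpr ⟨-(B y₀ y₀ * e), _, by rw [neg_smul, neg_add_eq_sub]⟩
  · simp only [map_sub, LinearMap.sub_apply, map_smul, LinearMap.smul_apply, map_smulₛₗ,
      smul_eq_mul, map_mul, hx, hxy₀, hy₀x, hfixed]
    linear_combination (-B y₀ y₀) * he

/-- A hyperbolic plane of a Hermitian space: the span of a pair of isotropic vectors with
product `1`. -/
def IsHyperbolicPlane (B : V →ₗ[E] V →ₛₗ[τ] E) (H : Submodule E V) : Prop :=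
  ∃ u w : V, B u u = 0 ∧ B w w = 0 ∧ B u w = 1 ∧ H = Submodule.span E {u, w}

theorem IsHyperbolicPlane.eq_zero_of_forall_apply_eq_zero (hB : B.flip.IsSymm) {H : Submodule E V}
    (hH : IsHyperbolicPlane B H) {v : V} (hv : v ∈ H) (h : ∀ x ∈ H, B x v = 0) : v = 0 := by
  obtain ⟨u, w, hu, hw, huw, rfl⟩ := hH
  have hwu : B w u = 1 := by rw [apply_eq_map_apply_swap hB, huw, map_one]
  obtain ⟨s, t, rfl⟩ := Submodule.mem_span_pair.mp hv
  have ht := h u (Submodule.subset_span (by simp))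
  have hs := h w (Submodule.subset_span (by simp))
  simp only [map_add, map_smulₛₗ, hu, hw, huw, hwu, smul_eq_mul, mul_zero, mul_one, add_zero,
    zero_add, map_eq_zero] at hs ht
  simp [hs, ht]

theorem IsHyperbolicPlane.finrank_eq_two (hB : B.flip.IsSymm) {H : Submodule E V}
    (hH : IsHyperbolicPlane B H) : finrank E H = 2 := by
  obtain ⟨u, w, hu, hw, huw, rfl⟩ := hH
  have hwu : B w u = 1 := by rw [apply_eq_map_apply_swap hB, huw, map_one]
  have hindep : LinearIndependent E ![u, w] := by
    refine LinearIndependent.pair_iff.mpr fun s t hst => ⟨?_, ?_⟩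
    · simpa [hw, huw] using congrArg (B · w) hst
    · simpa [hu, hwu] using congrArg (B · u) hst
  have hrange : Set.range ![u, w] = {u, w} := by simp [Set.pair_comm]
  rw [← hrange, finrank_span_eq_card hindep, Fintype.card_fin]

/-- Pairwise orthogonal hyperbolic pairs `(u i, w i)`. -/
structure IsHyperbolicFamily (B : V →ₗ[E] V →ₛₗ[τ] E) {ι : Type*} [DecidableEq ι] (u w : ι → V) :
    Prop where
  left : ∀ i j, B (u i) (u j) = 0
  right : ∀ i j, B (w i) (w j) = 0
  pairing : ∀ i j, B (u i) (w j) = if i = j then 1 else 0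

/-- The orthogonal complement of the span of a hyperbolic family. -/
def hyperbolicComplement (B : V →ₗ[E] V →ₛₗ[τ] E) {ι : Type*} (u w : ι → V) : Submodule E V :=
  (Submodule.span E (Set.range u ∪ Set.range w)).orthogonalBilin B

theorem mem_hyperbolicComplement {ι : Type*} {u w : ι → V} {v : V} :
    v ∈ hyperbolicComplement B u w ↔ (∀ i, B (u i) v = 0) ∧ ∀ i, B (w i) v = 0 := by
  rw [hyperbolicComplement, mem_orthogonalBilin_span]
  simp only [Set.mem_union, or_imp, forall_and, Set.forall_mem_range]

namespace IsHyperbolicFamily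

variable {ι : Type*} [DecidableEq ι] {u w : ι → V}

theorem linearIndependent (h : IsHyperbolicFamily B u w) : LinearIndependent E u := by
  refine linearIndependent_iff'.mpr fun s c hc i hi => ?_
  simpa [LinearMap.sum_apply, h.pairing, hi] using congrArg (B · (w i)) hc

theorem isHyperbolicPlane (h : IsHyperbolicFamily B u w) (i : ι) :
    IsHyperbolicPlane B (Submodule.span E {u i, w i}) :=
  ⟨u i, w i, h.left i i, h.right i i, by simp [h.pairing], rfl⟩

theorem pairing_swap (hB : B.flip.IsSymm) (h : IsHyperbolicFamily B u w) (i j : ι) :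
    B (w i) (u j) = if i = j then 1 else 0 := by
  rw [apply_eq_map_apply_swap hB, h.pairing, apply_ite τ, map_one, map_zero]
  simp only [eq_comm]

theorem sub_sum_mem_hyperbolicComplement [Fintype ι] (hB : B.flip.IsSymm)
    (h : IsHyperbolicFamily B u w) (v : V) :
    v - ∑ i, (B v (w i) • u i + B v (u i) • w i) ∈ hyperbolicComplement B u w := by
  rw [mem_hyperbolicComplement]
  constructor <;> intro j
  · simp [h.left, h.pairing, apply_eq_map_apply_swap hB (u j) v]
  · simp [h.right, h.pairing_swap hB, apply_eq_map_apply_swap hB (w j) v]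

theorem exists_mem_hyperbolicComplement_apply_ne_zero [Finite ι] (hB : B.flip.IsSymm)
    (hsep : B.SeparatingLeft) (h : IsHyperbolicFamily B u w) {x : V}
    (hx : x ∈ hyperbolicComplement B u w) (hx0 : x ≠ 0) :
    ∃ z ∈ hyperbolicComplement B u w, B x z ≠ 0 := by
  have := Fintype.ofFinite ι
  obtain ⟨z, hz⟩ : ∃ z, B x z ≠ 0 := by
    by_contra! hzero
    exact hx0 (hsep x hzero)
  obtain ⟨hux, hwx⟩ := mem_hyperbolicComplement.mp hx
  have hxu (i : ι) : B x (u i) = 0 := isRefl_of_isSymm_flip hB _ _ (hux i)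
  have hxw (i : ι) : B x (w i) = 0 := isRefl_of_isSymm_flip hB _ _ (hwx i)
  exact ⟨_, h.sub_sum_mem_hyperbolicComplement hB z, by simpa [hxu, hxw] using hz⟩

theorem cons (hB : B.flip.IsSymm) {n : ℕ} {u w : Fin n → V} (h : IsHyperbolicFamily B u w)
    {x y : V} (hx : x ∈ hyperbolicComplement B u w) (hy : y ∈ hyperbolicComplement B u w)
    (hxx : B x x = 0) (hyy : B y y = 0) (hxy : B x y = 1) :
    IsHyperbolicFamily B (Fin.cons x u : Fin (n + 1) → V) (Fin.cons y w) := by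
  obtain ⟨hux, hwx⟩ := mem_hyperbolicComplement.mp hx
  obtain ⟨huy, hwy⟩ := mem_hyperbolicComplement.mp hy
  have hrefl := isRefl_of_isSymm_flip hB
  constructor <;> intro i j <;> cases i using Fin.cases <;> cases j using Fin.cases <;>
    simp [hxx, hyy, hxy, hux, huy, hwy, h.left, h.right, h.pairing, hrefl _ _ (hux _),
      hrefl _ _ (hwx _), hrefl _ _ (hwy _), Fin.succ_ne_zero, (Fin.succ_ne_zero _).symm]

theorem exists_anisotropic [FiniteDimensional E V] (hB : B.flip.IsSymm) (hsep : B.SeparatingLeft)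
    {e : E} (he : e + τ e = 1) :
    ∃ (n : ℕ) (u w : Fin n → V), IsHyperbolicFamily B u w ∧
      ∀ v ∈ hyperbolicComplement B u w, B v v = 0 → v = 0 := by
  by_contra! hisotropic
  have exists_family (n : ℕ) : ∃ u w : Fin n → V, IsHyperbolicFamily B u w := by
    induction n with
    | zero => exact ⟨Fin.elim0, Fin.elim0, fun i => i.elim0, fun i => i.elim0, fun i => i.elim0⟩
    | succ n ih =>
      obtain ⟨u, w, h⟩ := ih
      obtain ⟨x, hx, hxx, hx0⟩ := hisotropic n u w h
      obtain ⟨z, hz, hxz⟩ := h.exists_mem_hyperbolicComplement_apply_ne_zero hB hsep hx hx0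
      obtain ⟨y, hy, hxy, hyy⟩ := exists_apply_eq_one_of_isotropic hB he hxx hxz
      have hyuw : y ∈ hyperbolicComplement B u w :=
        (Submodule.span_le.mpr (Set.pair_subset hx hz)) hy
      exact ⟨_, _, h.cons hB hx hyuw hxx hyy hxy⟩
  obtain ⟨u, w, h⟩ := exists_family (finrank E V + 1)
  simpa using h.linearIndependent.fintype_card_le_finrank

end IsHyperbolicFamily

/-- An orthogonal decomposition of a Hermitian space into hyperbolic planes `H i` and a subspace `P`
without nonzero isotropic vectors. The summands are indexed by `Option ι`, with `P` at `none`. -/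
structure IsWittDecomposition (B : V →ₗ[E] V →ₛₗ[τ] E) {ι : Type*} [DecidableEq ι]
    (H : ι → Submodule E V) (P : Submodule E V) : Prop where
  isInternal : DirectSum.IsInternal fun o : Option ι => o.elim P H
  orthogonal : ∀ o o' : Option ι, o ≠ o' → ∀ v ∈ o.elim P H, ∀ w ∈ o'.elim P H, B v w = 0
  isHyperbolicPlane : ∀ i, IsHyperbolicPlane B (H i)
  anisotropic : ∀ v ∈ P, B v v = 0 → v = 0

theorem IsHyperbolicFamily.isWittDecomposition {ι : Type*} [Finite ι] [DecidableEq ι]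
    {u w : ι → V} (hB : B.flip.IsSymm) (h : IsHyperbolicFamily B u w)
    (hanis : ∀ v ∈ hyperbolicComplement B u w, B v v = 0 → v = 0) :
    IsWittDecomposition B (fun i => Submodule.span E {u i, w i}) (hyperbolicComplement B u w) := by
  have := Fintype.ofFinite ι
  have hrefl := isRefl_of_isSymm_flip hB
  have span_le (i : ι) : Submodule.span E {u i, w i} ≤
      Submodule.span E (Set.range u ∪ Set.range w) :=
    Submodule.span_mono (Set.pair_subset (.inl ⟨i, rfl⟩) (.inr ⟨i, rfl⟩))
  have horth : ∀ o o' : Option ι, o ≠ o' →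
      ∀ v ∈ o.elim (hyperbolicComplement B u w) fun i => Submodule.span E {u i, w i},
      ∀ x ∈ o'.elim (hyperbolicComplement B u w) fun i => Submodule.span E {u i, w i},
        B v x = 0 := by
    rintro (_ | i) (_ | j) hne v hv x hx
    · exact absurd rfl hne
    · exact hrefl _ _ (hv x (span_le j hx))
    · exact hx v (span_le i hv)
    · have hij : i ≠ j := fun h => hne (congrArg some h)
      obtain ⟨a, b, rfl⟩ := Submodule.mem_span_pair.mp hv
      obtain ⟨c, d, rfl⟩ := Submodule.mem_span_pair.mp hx
      simp [h.left, h.right, h.pairing, h.pairing_swap hB, hij]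
  refine ⟨isInternal_of_orthogonal horth ?_ (eq_top_iff.mpr fun v _ => ?_), horth,
    h.isHyperbolicPlane, hanis⟩
  · rintro (_ | i) v hv hv'
    · exact hanis v hv (hv' v hv)
    · exact (h.isHyperbolicPlane i).eq_zero_of_forall_apply_eq_zero hB hv hv'
  · rw [← sub_add_cancel v (∑ i, (B v (w i) • u i + B v (u i) • w i))]
    refine add_mem (Submodule.mem_iSup_of_mem none (h.sub_sum_mem_hyperbolicComplement hB v))
      (sum_mem fun i _ => Submodule.mem_iSup_of_mem (some i) (Submodule.mem_span_pair.mpr ?_))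
    exact ⟨_, _, rfl⟩

theorem exists_isWittDecomposition [FiniteDimensional E V] (hB : B.flip.IsSymm)
    (hsep : B.SeparatingLeft) {e : E} (he : e + τ e = 1) :
    ∃ (n : ℕ) (H : Fin n → Submodule E V) (P : Submodule E V), IsWittDecomposition B H P := by
  obtain ⟨n, u, w, h, hanis⟩ := IsHyperbolicFamily.exists_anisotropic hB hsep he
  exact ⟨n, _, _, h.isWittDecomposition hB hanis⟩

namespace IsWittDecomposition

variable {ι : Type*} [Fintype ι] [DecidableEq ι] {H : ι → Submodule E V} {P : Submodule E V}

theorem finrank_eq [FiniteDimensional E V] (hB : B.flip.IsSymm) (D : IsWittDecomposition B H P) :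
    finrank E V = finrank E P + 2 * Fintype.card ι := by
  have hplane (i : ι) : finrank E (H i) = 2 := (D.isHyperbolicPlane i).finrank_eq_two hB
  rw [← (LinearEquiv.ofBijective (DirectSum.coeLinearMap _) D.isInternal).finrank_eq,
    finrank_directSum, Fintype.sum_option]
  exact congrArg _ ((Finset.sum_congr rfl fun i _ => hplane i).trans (by simp [mul_comm]))

theorem exists_finrank_eq_card_sup_le_orthogonalBilin (D : IsWittDecomposition B H P) :
    ∃ L : Submodule E V, finrank E L = Fintype.card ι ∧ L ⊔ P ≤ L.orthogonalBilin B := by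
  choose u w huu hww huw hH using D.isHyperbolicPlane
  have hu (i : ι) : u i ∈ H i := hH i ▸ Submodule.subset_span (by simp)
  have hw (i : ι) : w i ∈ H i := hH i ▸ Submodule.subset_span (by simp)
  have apply_eq_zero {i j : ι} (hij : i ≠ j) {x y : V} (hx : x ∈ H i) (hy : y ∈ H j) : B x y = 0 :=
    D.orthogonal (some i) (some j) (by simpa using hij) x hx y hy
  have h : IsHyperbolicFamily B u w := by
    constructor <;> intro i j <;> rcases eq_or_ne i j with rfl | hij
    exacts [huu i, apply_eq_zero hij (hu i) (hu j), hww i, apply_eq_zero hij (hw i) (hw j),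
      by simpa using huw i, by simpa [hij] using apply_eq_zero hij (hu i) (hw j)]
  refine ⟨_, finrank_span_eq_card h.linearIndependent, sup_le (Submodule.span_le.mpr ?_) ?_⟩
  · rintro _ ⟨j, rfl⟩
    exact mem_orthogonalBilin_span.mpr (Set.forall_mem_range.mpr fun i => h.left i j)
  · exact fun v hv => mem_orthogonalBilin_span.mpr
      (Set.forall_mem_range.mpr fun i => D.orthogonal (some i) none (by simp) _ (hu i) v hv)

theorem card_le_card [FiniteDimensional E V] [RingHomSurjective τ] (hB : B.flip.IsSymm)
    (hsep : B.SeparatingLeft) {ι' : Type*} [Fintype ι'] [DecidableEq ι']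
    {H' : ι' → Submodule E V} {P' : Submodule E V} (D : IsWittDecomposition B H P)
    (D' : IsWittDecomposition B H' P') : Fintype.card ι ≤ Fintype.card ι' := by
  obtain ⟨U, hUcard, hU⟩ := D.exists_finrank_eq_card_sup_le_orthogonalBilin
  obtain ⟨L, hLcard, hL⟩ := D'.exists_finrank_eq_card_sup_le_orthogonalBilin
  have hdisj : Disjoint L P' := Submodule.disjoint_def.mpr fun x hxL hxP =>
    D'.anisotropic x hxP (hL (Submodule.mem_sup_left hxL) x hxL)
  have hle := finrank_add_finrank_sup_le (isRefl_of_isSymm_flip hB) hsep (le_sup_left.trans hU) hL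
    D'.anisotropic
  have hsum := Submodule.finrank_sup_add_finrank_inf_eq L P'
  rw [hdisj.eq_bot, finrank_bot] at hsum
  have hV := D'.finrank_eq hB
  omega

end IsWittDecomposition

theorem isWittDecomposition_bot_iff {ι : Type*} [DecidableEq ι] {H : ι → Submodule E V}
    (hB : B.flip.IsSymm) : IsWittDecomposition B H ⊥ ↔ DirectSum.IsInternal H ∧
      (∀ i j, i ≠ j → ∀ v ∈ H i, ∀ w ∈ H j, B v w = 0) ∧ ∀ i, IsHyperbolicPlane B (H i) := by
  constructor
  · intro D
    refine ⟨?_, fun i j hij => D.orthogonal (some i) (some j) (by simpa using hij),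
      D.isHyperbolicPlane⟩
    have := D.isInternal
    rw [DirectSum.isInternal_submodule_iff_iSupIndep_and_iSup_eq_top] at this ⊢
    refine ⟨this.1.comp (Option.some_injective ι), by simpa [iSup_option] using this.2⟩
  · rintro ⟨hint, horth, hplane⟩
    have horth' : ∀ o o' : Option ι, o ≠ o' → ∀ v ∈ o.elim ⊥ H, ∀ w ∈ o'.elim ⊥ H, B v w = 0 := by
      rintro (_ | i) (_ | j) hne v hv w hw
      · exact absurd rfl hne
      · rw [(Submodule.mem_bot E).mp hv, map_zero, LinearMap.zero_apply]
      · rw [(Submodule.mem_bot E).mp hw, map_zero]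
      · exact horth i j (fun h => hne (congrArg some h)) v hv w hw
    refine ⟨isInternal_of_orthogonal horth' ?_ ?_, horth', hplane, fun v hv _ => by simpa using hv⟩
    · rintro (_ | i) v hv hv'
      · exact (Submodule.mem_bot E).mp hv
      · exact (hplane i).eq_zero_of_forall_apply_eq_zero hB hv hv'
    · simpa [iSup_option] using hint.submodule_iSup_eq_top

end HermitianForms

section QuadraticExtensions

variable {K E : Type*} [Field K] [Field E] [Algebra K E] {τ : E ≃ₐ[K] E}

theorem apply_apply_of_finrank_eq_two (hKE : finrank K E = 2) (τ : E ≃ₐ[K] E) (x : E) :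
    τ (τ x) = x := by
  have : FiniteDimensional K E := .of_finrank_pos (by omega)
  have hcard : Nat.card (E ≃ₐ[K] E) ≤ 2 := by
    simpa [Nat.card_eq_fintype_card, hKE] using AlgEquiv.card_le (F := K) (K := E)
  have hsq : τ ^ 2 = 1 := by
    have hpos : 0 < Nat.card (E ≃ₐ[K] E) := Nat.card_pos
    have hpow : τ ^ Nat.card (E ≃ₐ[K] E) = 1 := pow_card_eq_one'
    interval_cases Nat.card (E ≃ₐ[K] E)
    · rw [pow_one] at hpow
      rw [hpow, one_pow]
    · exact hpow
  simpa [pow_two] using AlgEquiv.congr_fun hsq x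

theorem exists_add_apply_eq_one (hKE : finrank K E = 2) (hτ : τ ≠ AlgEquiv.refl) :
    ∃ e : E, e + τ e = 1 := by
  obtain ⟨x, hx⟩ : ∃ x, x + τ x ≠ 0 := by
    by_contra! h
    refine hτ (AlgEquiv.ext fun x => ?_)
    have h1 : (1 : E) + 1 = 0 := by simpa using h 1
    calc τ x = x + τ x - x := by ring
      _ = x - (1 + 1) * x := by rw [h x]; ring
      _ = x := by rw [h1]; ring
  refine ⟨x / (x + τ x), ?_⟩
  rw [map_div₀, map_add, apply_apply_of_finrank_eq_two hKE, add_comm (τ x), ← add_div, div_self hx]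

theorem mem_range_algebraMap_of_apply_eq (hKE : finrank K E = 2) (hτ : τ ≠ AlgEquiv.refl) {x : E}
    (hx : τ x = x) : x ∈ Set.range (algebraMap K E) := by
  have := Subalgebra.isSimpleOrder_of_finrank_prime K E (hKE ▸ Nat.prime_two)
  rw [← Algebra.mem_bot]
  rcases eq_bot_or_eq_top (AlgHom.equalizer (τ : E →ₐ[K] E) (.id K E)) with h | h
  · exact h ▸ hx
  · refine absurd (AlgEquiv.ext fun y => ?_) hτ
    exact (AlgHom.mem_equalizer (τ : E →ₐ[K] E) (.id K E) y).mp (h ▸ Algebra.mem_top)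

end QuadraticExtensions

section HermitianFormsOverLocalFields

variable {K E V : Type*} [Field E] [AddCommGroup V] [Module E V]

theorem exists_quadraticForm_algebraMap_eq_apply_self [Field K] [Algebra K E] {τ : E ≃ₐ[K] E}
    {B : V →ₗ[E] V →ₛₗ[(τ : E →+* E)] E} [Module K V] [IsScalarTower K E V]
    (hself : ∀ v, B v v ∈ Set.range (algebraMap K E)) :
    ∃ Q : QuadraticForm K V, ∀ v, algebraMap K E (Q v) = B v v := by
  obtain ⟨l, hl⟩ := (Algebra.linearMap K E).exists_leftInverse_of_injective
    (LinearMap.ker_eq_bot.mpr (algebraMap K E).injective)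
  have hright (c : K) (v w : V) : B v (c • w) = c • B v w := by
    rw [← algebraMap_smul E c w, map_smulₛₗ, RingHom.coe_coe, AlgEquiv.commutes, algebraMap_smul]
  let b : V →ₗ[K] V →ₗ[K] K := LinearMap.mk₂ K (fun v w => l (B v w))
    (by simp) (by simp) (by simp) (by simp [hright])
  refine ⟨LinearMap.BilinMap.toQuadraticMap b, fun v => ?_⟩
  obtain ⟨a, ha⟩ := hself v
  have hla : l (algebraMap K E a) = a := LinearMap.congr_fun hl a
  change algebraMap K E (l (B v v)) = B v v
  rw [← ha, hla]

variable [NontriviallyNormedField K] [IsUltrametricDist K] [ProperSpace K] [Algebra K E]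
  {τ : E ≃ₐ[K] E} {B : V →ₗ[E] V →ₛₗ[(τ : E →+* E)] E}

theorem finrank_le_two_of_anisotropic (hKE : finrank K E = 2) (hτ : τ ≠ AlgEquiv.refl)
    (hB : B.flip.IsSymm) (hanis : ∀ v, B v v = 0 → v = 0) : finrank E V ≤ 2 := by
  let : Module K V := Module.compHom V (algebraMap K E)
  have : IsScalarTower K E V := IsScalarTower.of_algebraMap_smul fun _ _ => rfl
  obtain ⟨Q, hQ⟩ := exists_quadraticForm_algebraMap_eq_apply_self (K := K) (B := B) fun v =>
    mem_range_algebraMap_of_apply_eq hKE hτ (apply_eq_map_apply_swap hB v v).symm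
  obtain ⟨e, he⟩ := exists_add_apply_eq_one hKE hτ
  have hQanis : Q.Anisotropic := fun v hv => hanis v (by rw [← hQ, hv, map_zero])
  have algebraMap_polar (v w : V) : algebraMap K E (polar Q v w) = B v w + B w v := by
    simp only [polar, map_sub, hQ, map_add, LinearMap.add_apply]
    ring
  have hsep : Q.polarBilin.SeparatingRight := fun y hy => hanis y <| by
    have hpolar := algebraMap_polar (e • y) y
    rw [show polar Q (e • y) y = 0 from hy (e • y), map_zero, map_smul, LinearMap.smul_apply,
      map_smulₛₗ, smul_eq_mul, smul_eq_mul, ← add_mul, RingHom.coe_coe, he, one_mul] at hpolar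
    exact hpolar.symm
  have hfour := finrank_le_four_of_anisotropic hQanis hsep
  rw [← finrank_mul_finrank K E V, hKE] at hfour
  omega

theorem IsWittDecomposition.finrank_le_two {ι : Type*} [DecidableEq ι] {H : ι → Submodule E V}
    {P : Submodule E V} (hKE : finrank K E = 2) (hτ : τ ≠ AlgEquiv.refl) (hB : B.flip.IsSymm)
    (D : IsWittDecomposition B H P) : finrank E P ≤ 2 :=
  finrank_le_two_of_anisotropic (B := B.domRestrict₁₂ P P) hKE hτ
    ⟨fun v w => hB.eq (v : V) w⟩ fun v hv => Subtype.ext (D.anisotropic v v.2 hv)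

theorem xor_isWittDecomposition (hKE : finrank K E = 2) (hτ : τ ≠ AlgEquiv.refl)
    (hB : B.flip.IsSymm) (hsep : B.SeparatingLeft) {m : ℕ} (hm : 1 ≤ m)
    (hV : finrank E V = 2 * m) :
    Xor (∃ H : Fin m → Submodule E V, IsWittDecomposition B H ⊥)
      (∃ (H : Fin (m - 1) → Submodule E V) (P : Submodule E V),
        IsWittDecomposition B H P ∧ finrank E P = 2) := by
  have : FiniteDimensional E V := .of_finrank_pos (by omega)
  have : RingHomSurjective (τ : E →+* E) := ⟨τ.surjective⟩
  refine (xor_iff_or_and_not_and _ _).mpr ⟨?_, ?_⟩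
  · obtain ⟨e, he⟩ := exists_add_apply_eq_one hKE hτ
    obtain ⟨n, H, P, D⟩ := exists_isWittDecomposition hB hsep he
    have hP := D.finrank_le_two hKE hτ hB
    have hdim := D.finrank_eq hB
    rw [hV, Fintype.card_fin] at hdim
    obtain hP0 | hP2 : finrank E P = 0 ∨ finrank E P = 2 := by omega
    · obtain rfl : n = m := by omega
      exact .inl ⟨H, Submodule.finrank_eq_zero.mp hP0 ▸ D⟩
    · obtain rfl : n = m - 1 := by omega
      exact .inr ⟨H, P, D, hP2⟩
  · rintro ⟨⟨H, D⟩, H', P, D', -⟩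
    have hle := D.card_le_card hB hsep D'
    rw [Fintype.card_fin, Fintype.card_fin] at hle
    omega

end HermitianFormsOverLocalFields

theorem stmt_2_general {K : Type*} [NontriviallyNormedField K] [IsUltrametricDist K]
    [ProperSpace K] {E : Type*} [Field E] [Algebra K E] (hKE : Module.finrank K E = 2)
    (τ : E ≃ₐ[K] E) (hτ : τ ≠ AlgEquiv.refl)
    (m : ℕ) (hm : 1 ≤ m)
    {V : Type*} [AddCommGroup V] [Module E V] (hV : Module.finrank E V = 2 * m)
    (φ : V → V → E)
    (hadd : ∀ u v w : V, φ (u + v) w = φ u w + φ v w)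
    (hsmul : ∀ (a : E) (v w : V), φ (a • v) w = a * φ v w)
    (hherm : ∀ v w : V, φ v w = τ (φ w v))
    (hnd : ∀ v : V, (∀ w : V, φ v w = 0) → v = 0) :
    Xor
      (∃ W : Fin m → Submodule E V, DirectSum.IsInternal W ∧
        (∀ i j : Fin m, i ≠ j → ∀ v ∈ W i, ∀ w ∈ W j, φ v w = 0) ∧
        (∀ i : Fin m, ∃ u w : V, φ u u = 0 ∧ φ w w = 0 ∧ φ u w = 1 ∧
          W i = Submodule.span E {u, w}))
      (∃ (W : Fin (m - 1) → Submodule E V) (P : Submodule E V),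
        DirectSum.IsInternal (fun o : Option (Fin (m - 1)) => o.elim P W) ∧
        (∀ o o' : Option (Fin (m - 1)), o ≠ o' →
          ∀ v ∈ Option.elim o P W, ∀ w ∈ Option.elim o' P W, φ v w = 0) ∧
        (∀ i : Fin (m - 1), ∃ u w : V, φ u u = 0 ∧ φ w w = 0 ∧ φ u w = 1 ∧
          W i = Submodule.span E {u, w}) ∧
        Module.finrank E ↥P = 2 ∧
        (∀ v ∈ P, φ v v = 0 → v = 0)) := by
  have hadd' (u v w : V) : φ u (v + w) = φ u v + φ u w := by
    rw [hherm, hadd, map_add, ← hherm, ← hherm]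
  have hsmul' (a : E) (v w : V) : φ v (a • w) = τ a * φ v w := by
    rw [hherm, hsmul, map_mul, ← hherm]
  let B : V →ₗ[E] V →ₛₗ[(τ : E →+* E)] E :=
    LinearMap.mk₂'ₛₗ (RingHom.id E) (τ : E →+* E) φ hadd hsmul hadd' hsmul'
  have hB : B.flip.IsSymm := ⟨fun v w => (hherm v w).symm⟩
  have h := xor_isWittDecomposition hKE hτ hB hnd hm hV
  simp only [isWittDecomposition_bot_iff hB] at h
  convert! h using 5 with W P
  exact ⟨fun ⟨hint, horth, hplane, hP, hanis⟩ => ⟨⟨hint, horth, hplane, hanis⟩, hP⟩,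
    fun ⟨D, hP⟩ => ⟨D.isInternal, D.orthogonal, D.isHyperbolicPlane, hP, D.anisotropic⟩⟩

/-- Let `K` be a finite extension of `ℚ_p`, `E/K` quadratic with nontrivial
`K`-automorphism `τ`, and `(V, φ)` a nondegenerate Hermitian space of dimension `2m`, `m ≥ 1`.
Then exactly one of the following holds: (i) `V` is an orthogonal direct sum of `m` hyperbolic
planes; (ii) `V` is an orthogonal direct sum of `m - 1` hyperbolic planes and a 2-dimensional
subspace containing no nonzero isotropic vector. -/
theorem stmt_2 (p : ℕ) [Fact p.Prime]
    {K : Type*} [Field K] [Algebra ℚ_[p] K] [FiniteDimensional ℚ_[p] K]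
    {E : Type*} [Field E] [Algebra K E] (hKE : Module.finrank K E = 2)
    (τ : E ≃ₐ[K] E) (hτ : τ ≠ AlgEquiv.refl)
    (m : ℕ) (hm : 1 ≤ m)
    {V : Type*} [AddCommGroup V] [Module E V] (hV : Module.finrank E V = 2 * m)
    (φ : V → V → E)
    (hadd : ∀ u v w : V, φ (u + v) w = φ u w + φ v w)
    (hsmul : ∀ (a : E) (v w : V), φ (a • v) w = a * φ v w)
    (hherm : ∀ v w : V, φ v w = τ (φ w v))
    (hnd : ∀ v : V, (∀ w : V, φ v w = 0) → v = 0) :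
    Xor'
      (∃ W : Fin m → Submodule E V, DirectSum.IsInternal W ∧
        (∀ i j : Fin m, i ≠ j → ∀ v ∈ W i, ∀ w ∈ W j, φ v w = 0) ∧
        (∀ i : Fin m, ∃ u w : V, φ u u = 0 ∧ φ w w = 0 ∧ φ u w = 1 ∧
          W i = Submodule.span E {u, w}))
      (∃ (W : Fin (m - 1) → Submodule E V) (P : Submodule E V),
        DirectSum.IsInternal (fun o : Option (Fin (m - 1)) => o.elim P W) ∧
        (∀ o o' : Option (Fin (m - 1)), o ≠ o' →
          ∀ v ∈ Option.elim o P W, ∀ w ∈ Option.elim o' P W, φ v w = 0) ∧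
        (∀ i : Fin (m - 1), ∃ u w : V, φ u u = 0 ∧ φ w w = 0 ∧ φ u w = 1 ∧
          W i = Submodule.span E {u, w}) ∧
        Module.finrank E ↥P = 2 ∧
        (∀ v ∈ P, φ v v = 0 → v = 0)) := by
  let : NontriviallyNormedField K := spectralNorm.nontriviallyNormedField ℚ_[p] K
  let : NormedSpace ℚ_[p] K := spectralNorm.normedSpace ℚ_[p] K
  have : IsUltrametricDist K := .isUltrametricDist_of_forall_norm_add_le_max_norm
    (isNonarchimedean_spectralNorm (K := ℚ_[p]) (L := K))
  have : ProperSpace K := FiniteDimensional.proper ℚ_[p] K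
  exact stmt_2_general hKE τ hτ m hm hV φ hadd hsmul hherm hnd
end

section
/- Let p be a prime, K a finite extension of ℚ_p, E/K a quadratic field extension with nontrivial K-automorphism τ, and let (V,φ) and (V',φ') be nondegenerate Hermitian spaces over E of the same odd dimension n = 2m+1. Then there exists an E-linear isomorphism g : V → V' such that conjugation f ↦ g ∘ f ∘ g⁻¹ carries the unitary group U(V,φ) = {f ∈ GL_E(V) : φ(f v, f w) = φ(v,w) for all v,w} onto U(V',φ'). In particular U(V,φ) and U(V',φ') are isomorphic as groups. -/
/-!
Sending `x : E` to `x * τ x` gives, by Hilbert's Theorem 90, an exact sequence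
`1 → {1, d} → Kˣ / (Kˣ)² → Eˣ / (Eˣ)² → Kˣ / (Kˣ)² → Kˣ / N Eˣ → 1`, where `E = K(√d)`.
Squaring on principal units of small radius looks like doubling on a ball, so the number of square
classes of a local field is four times the index of `2O` in its ring of integers `O`. The index for
`E` is the square of the one for `K`, and the exact sequence leaves `[Kˣ : N Eˣ] = 2`.

Moreover `-1` is a sum of squares in `K`, so the norms are not closed under addition: some sum of
two norms lies in the other class, and hence every nondegenerate binary Hermitian form represents
all of `Kˣ`. Splitting off vectors of value `1`, an odd-dimensional form becomes
`⟨1, 1, …, 1, 1⟩ ⊕ ⟨d⟩`, and each `⟨1, 1⟩` is isometric to `⟨d, d⟩` because `d` is a sum of two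
norms. So the form is `d • ⟨1, …, 1⟩`: any two such forms are similar, and similar forms have
conjugate unitary groups.
-/

section PowerClasses

variable {A B : Type*} [CommGroup A] [CommGroup B]

/-- The number of classes of `A` modulo `n`-th powers (`0` if there are infinitely many). -/
@[to_additive]
noncomputable def powIndex (n : ℕ) (A : Type*) [CommGroup A] : ℕ :=
  (powMonoidHom n : A →* A).range.index

variable {n : ℕ}

-- `A / f(B)` is finite, so raising to the power `n` has trivial Herbrand quotient on it.
@[to_additive]
theorem powIndex_eq_mul_card_ker {f : B →* A} (hf : Function.Injective f)
    (hfin : f.range.index ≠ 0) (hB : Function.Injective fun b : B ↦ b ^ n) :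
    powIndex n A = powIndex n B * Nat.card (powMonoidHom n : A →* A).ker := by
  set s : A →* A := powMonoidHom n
  set t : B →* B := powMonoidHom n
  have hcomm : s.comp f = f.comp t := by ext b; simp [s, t]
  have hdisj : f.range ⊓ s.ker = ⊥ := by
    rw [eq_bot_iff]
    rintro _ ⟨⟨b, rfl⟩, hb⟩
    have hb' : b ^ n = 1 ^ n := hf (by simpa [s] using hb)
    rw [hB hb', map_one, Subgroup.mem_bot]
  have hker : f.range.relIndex (f.range ⊔ s.ker) = Nat.card s.ker := by
    rw [Subgroup.relIndex_sup_left, ← Subgroup.inf_relIndex_right, hdisj,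
      Subgroup.relIndex_bot_left]
  have hsup := Subgroup.relIndex_mul_index (le_sup_left : f.range ≤ f.range ⊔ s.ker)
  have hsup0 : (f.range ⊔ s.ker).index ≠ 0 := right_ne_zero_of_mul (hsup.trans_ne hfin)
  apply mul_left_cancel₀ hsup0
  calc (f.range ⊔ s.ker).index * s.range.index = (f.range.map s).index :=
        (Subgroup.index_map _ s).symm
    _ = t.range.index * f.range.index := by
        rw [← MonoidHom.range_comp, hcomm, MonoidHom.range_comp,
          Subgroup.index_map_of_injective _ hf]
    _ = (f.range ⊔ s.ker).index * (t.range.index * Nat.card s.ker) := by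
        rw [← hsup, hker]; ring

@[to_additive]
theorem powIndex_eq_of_injective {f : B →* A} (hf : Function.Injective f)
    (hfin : f.range.index ≠ 0) (hA : Function.Injective fun a : A ↦ a ^ n) :
    powIndex n A = powIndex n B := by
  have hB : Function.Injective fun b : B ↦ b ^ n := fun b c h ↦
    hf (hA (by simpa using congrArg f h))
  have hker : (powMonoidHom n : A →* A).ker = ⊥ := (MonoidHom.ker_eq_bot_iff _).mpr hA
  rw [powIndex_eq_mul_card_ker hf hfin hB, hker, Subgroup.card_bot, mul_one]

@[to_additive]
theorem powIndex_congr (e : A ≃* B) : powIndex n A = powIndex n B := by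
  rw [powIndex, powIndex, ← e.map_range_powMonoidHom, Subgroup.index_map_equiv]

@[to_additive nsmulIndex_prod]
theorem powIndex_prod : powIndex n (A × B) = powIndex n A * powIndex n B := by
  simp only [powIndex, ← Subgroup.index_prod]
  congr 1
  ext ⟨a, b⟩
  simp [Subgroup.mem_prod, MonoidHom.mem_range]

@[to_additive]
theorem powIndex_subgroup (H : Subgroup A) :
    powIndex n H = (H.map (powMonoidHom n)).relIndex H := by
  rw [powIndex, Subgroup.relIndex, Subgroup.subgroupOf_map_powMonoidHom_eq_range]

theorem powIndex_multiplicative_int : powIndex n (Multiplicative ℤ) = n := by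
  change (nsmulAddMonoidHom n : ℤ →+ ℤ).range.index = n
  rw [Int.range_nsmulAddMonoidHom, Int.index_zmultiples, Int.natAbs_natCast]

@[to_additive]
theorem subgroup_relIndex_ne_zero_of_isOpen_of_isCompact [TopologicalSpace A] [IsTopologicalGroup A]
    {L H : Subgroup A} (hL : IsOpen (L : Set A)) (hH : IsCompact (H : Set A)) :
    L.relIndex H ≠ 0 := by
  have := isCompact_iff_compactSpace.mp hH
  have := (L.subgroupOf H).quotient_finite_of_isOpen (hL.preimage continuous_subtype_val)
  exact Subgroup.index_ne_zero_of_finite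

@[to_additive]
theorem powIndex_eq_of_isOpen_of_isCompact [TopologicalSpace A] [IsTopologicalGroup A]
    (hA : Function.Injective fun a : A ↦ a ^ n) {H H' : Subgroup A}
    (hHo : IsOpen (H : Set A)) (hHc : IsCompact (H : Set A))
    (hHo' : IsOpen (H' : Set A)) (hHc' : IsCompact (H' : Set A)) :
    powIndex n H = powIndex n H' := by
  have key {L : Subgroup A} (hL : IsCompact (L : Set A)) (hle : H ⊓ H' ≤ L) :
      powIndex n L = powIndex n ↥(H ⊓ H') :=
    powIndex_eq_of_injective (Subgroup.inclusion_injective hle)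
      (by
        rw [Subgroup.inclusion_range]
        exact subgroup_relIndex_ne_zero_of_isOpen_of_isCompact (hHo.inter hHo') hL)
      fun x y h ↦ Subtype.ext (hA (congrArg Subtype.val h))
  rw [key hHc inf_le_left, key hHc' inf_le_right]

theorem index_ne_zero_of_isOpen_of_forall_exists_mul_mem {G : Type*} [Group G] [TopologicalSpace G]
    [IsTopologicalGroup G] {L : Subgroup G} (hL : IsOpen (L : Set G)) {C : Set G}
    (hC : IsCompact C) (h : ∀ g, ∃ l ∈ L, g * l ∈ C) : L.index ≠ 0 := by
  have hsurj : (QuotientGroup.mk : G → G ⧸ L) '' C = Set.univ := by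
    refine Set.eq_univ_of_forall fun q ↦ ?_
    obtain ⟨g, rfl⟩ := QuotientGroup.mk_surjective q
    obtain ⟨l, hl, hgl⟩ := h g
    exact ⟨g * l, hgl, QuotientGroup.mk_mul_of_mem g hl⟩
  have := QuotientGroup.discreteTopology hL
  have := Set.finite_univ_iff.mp
    (hsurj ▸ (hC.image continuous_quotient_mk').finite_of_discrete)
  exact Subgroup.index_ne_zero_of_finite

end PowerClasses

theorem index_mul_relIndex_mul_index {G H : Type*} [CommGroup G] [CommGroup H]
    {i : G →* H} {ν : H →* G} {s : Subgroup G} {t : Subgroup H}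
    (hst : s ≤ t.comap i) (hsν : s ≤ ν.range) (hν : s.comap ν = i.range ⊔ t) :
    t.index * s.relIndex (t.comap i) * ν.range.index = s.index ^ 2 := by
  have ht : (t.comap i).index * s.relIndex ν.range = t.index := by
    rw [Subgroup.index_comap, ← Subgroup.index_comap s, hν, ← Subgroup.relIndex_sup_right,
      Subgroup.relIndex_mul_index le_sup_right]
  calc t.index * s.relIndex (t.comap i) * ν.range.index
      = (s.relIndex (t.comap i) * (t.comap i).index) * (s.relIndex ν.range * ν.range.index) := by
        rw [← ht]; ring
    _ = s.index ^ 2 := by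
        rw [Subgroup.relIndex_mul_index hst, Subgroup.relIndex_mul_index hsν, sq]

section LocalField

open Metric IsUltrametricDist

theorem ne_zero_of_norm_sub_one_lt {F : Type*} [NormedField F] {x : F} (hx : ‖x - 1‖ < 1) :
    x ≠ 0 := by
  rintro rfl
  simp at hx

theorem norm_two_pos {F : Type*} [NormedField F] [NeZero (2 : F)] : 0 < ‖(2 : F)‖ :=
  norm_pos_iff.mpr two_ne_zero

variable {K : Type*} [NontriviallyNormedField K] [IsUltrametricDist K] {r s : ℝ}

theorem norm_eq_one_of_norm_sub_one_lt {x : K} (hx : ‖x - 1‖ < 1) : ‖x‖ = 1 := by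
  simpa [max_eq_right hx.le] using
    norm_add_eq_max_of_norm_ne_norm (x := x - 1) (y := 1) (by simpa using hx.ne)

theorem norm_two_le_one : ‖(2 : K)‖ ≤ 1 := mod_cast norm_natCast_le_one K 2

variable (K) in
/-- The closed ball of radius `r` around `0`. -/
def normBall (hr : 0 < r) : AddSubgroup K :=
  (closedBall_openAddSubgroup K hr).toAddSubgroup

@[simp]
theorem mem_normBall {hr : 0 < r} {x : K} : x ∈ normBall K hr ↔ ‖x‖ ≤ r :=
  mem_closedBall_zero_iff

theorem isOpen_normBall (hr : 0 < r) : IsOpen (normBall K hr : Set K) :=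
  (closedBall_openAddSubgroup K hr).isOpen

theorem isCompact_normBall [ProperSpace K] (hr : 0 < r) : IsCompact (normBall K hr : Set K) :=
  isCompact_closedBall 0 r

variable (K) in
/-- The units at distance at most `r < 1` from `1`, one of the higher unit groups of `K`. -/
def principalUnits (hr : 0 < r) (hr1 : r < 1) : Subgroup Kˣ where
  carrier := {x | ‖(x : K) - 1‖ ≤ r}
  one_mem' := by simpa using hr.le
  mul_mem' {x y} hx hy := by
    have hx1 : ‖(x : K)‖ = 1 := norm_eq_one_of_norm_sub_one_lt (hx.trans_lt hr1)
    have h : ((x * y : Kˣ) : K) - 1 = x * (y - 1) + (x - 1) := by rw [Units.val_mul]; ring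
    rw [Set.mem_ofPred_eq, h]
    refine (norm_add_le_max _ _).trans (max_le ?_ hx)
    rwa [norm_mul, hx1, one_mul]
  inv_mem' {x} hx := by
    have hx1 : ‖(x : K)‖ = 1 := norm_eq_one_of_norm_sub_one_lt (hx.trans_lt hr1)
    have h : ((x⁻¹ : Kˣ) : K) - 1 = (x : K)⁻¹ * (1 - x) := by
      rw [Units.val_inv_eq_inv_val, mul_sub, inv_mul_cancel₀ x.ne_zero, mul_one]
    rwa [Set.mem_ofPred_eq, h, norm_mul, norm_inv, hx1, inv_one, one_mul, norm_sub_rev]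

theorem mem_principalUnits {hr : 0 < r} {hr1 : r < 1} {x : Kˣ} :
    x ∈ principalUnits K hr hr1 ↔ ‖(x : K) - 1‖ ≤ r := Iff.rfl

theorem norm_eq_one_of_mem_principalUnits {hr : 0 < r} {hr1 : r < 1} {x : Kˣ}
    (hx : x ∈ principalUnits K hr hr1) : ‖(x : K)‖ = 1 :=
  norm_eq_one_of_norm_sub_one_lt (hx.trans_lt hr1)

theorem isOpen_principalUnits (hr : 0 < r) (hr1 : r < 1) :
    IsOpen (principalUnits K hr hr1 : Set Kˣ) := by
  have h : (principalUnits K hr hr1 : Set Kˣ) = Units.val ⁻¹' closedBall (1 : K) r := by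
    ext x
    simp [mem_principalUnits, dist_eq_norm]
  rw [h]
  exact (isOpen_closedBall _ hr.ne').preimage Units.continuous_val

theorem relIndex_principalUnits (hr : 0 < r) (hr1 : r < 1) (hs : 0 < s) (hs1 : s < 1) :
    (principalUnits K hs hs1).relIndex (principalUnits K hr hr1) =
      (normBall K hs).relIndex (normBall K hr) := by
  let e : principalUnits K hr hr1 ≃ normBall K hr :=
    { toFun x := ⟨((x : Kˣ) : K) - 1, mem_normBall.mpr x.2⟩
      invFun y := ⟨Units.mk0 (1 + y) (ne_zero_of_norm_sub_one_lt
        (by simpa using (mem_normBall.mp y.2).trans_lt hr1)),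
        by simpa [mem_principalUnits] using mem_normBall.mp y.2⟩
      left_inv x := by ext; simp
      right_inv y := by ext; simp }
  refine Nat.card_congr (Quotient.congr e fun x y ↦ ?_)
  have h : (((x⁻¹ * y : principalUnits K hr hr1) : Kˣ) : K) - 1 =
      ((x : Kˣ) : K)⁻¹ * ((-e x + e y : normBall K hr) : K) := by
    simp [e]
    field_simp
  rw [QuotientGroup.leftRel_apply, QuotientAddGroup.leftRel_apply, Subgroup.mem_subgroupOf,
    AddSubgroup.mem_addSubgroupOf, mem_principalUnits, mem_normBall, h, norm_mul, norm_inv,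
    norm_eq_one_of_mem_principalUnits x.2, inv_one, one_mul]

-- Solutions are fixed points of the contraction `t ↦ z - t ^ 2` of the ball of radius `‖z‖`.
theorem exists_sq_add_self_eq [CompleteSpace K] {z : K} (hz : ‖z‖ < 1) :
    ∃ t : K, ‖t‖ ≤ ‖z‖ ∧ t ^ 2 + t = z := by
  have hmaps : Set.MapsTo (fun t : K ↦ z - t ^ 2) (closedBall 0 ‖z‖) (closedBall 0 ‖z‖) := by
    intro t ht
    rw [mem_closedBall_zero_iff] at ht ⊢
    change ‖z - t ^ 2‖ ≤ ‖z‖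
    rw [sub_eq_add_neg]
    refine (norm_add_le_max _ _).trans (max_le le_rfl ?_)
    rw [norm_neg, norm_pow]
    nlinarith [norm_nonneg t, norm_nonneg z]
  have hcontr : ContractingWith ‖z‖₊ (hmaps.restrict _ _ _) := by
    refine ⟨by exact_mod_cast hz, LipschitzWith.of_dist_le_mul ?_⟩
    rintro ⟨x, hx⟩ ⟨y, hy⟩
    rw [mem_closedBall_zero_iff] at hx hy
    simp only [Subtype.dist_eq, Set.MapsTo.val_restrict_apply, dist_eq_norm, coe_nnnorm]
    have h : z - x ^ 2 - (z - y ^ 2) = -(x + y) * (x - y) := by ring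
    rw [h, norm_mul, norm_neg]
    gcongr
    exact (norm_add_le_max _ _).trans (max_le hx hy)
  obtain ⟨t, ht, hfix, -⟩ := hcontr.exists_fixedPoint' isClosed_closedBall.isComplete hmaps
    (x := 0) (by simp) (edist_ne_top _ _)
  have ht' : z - t ^ 2 = t := hfix
  exact ⟨t, mem_closedBall_zero_iff.mp ht, by linear_combination -ht'⟩

section NeTwo

variable [NeZero (2 : K)]

-- Substituting `w = 2 * t` turns `(1 + w) ^ 2 = 1 + u` into `t ^ 2 + t = u / 4`.
theorem exists_sq_eq_one_add [CompleteSpace K] (hr2 : r < ‖(2 : K)‖) {u : K}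
    (hu : ‖u‖ ≤ ‖(2 : K)‖ * r) : ∃ w : K, ‖w‖ ≤ r ∧ (1 + w) ^ 2 = 1 + u := by
  have h2 : 0 < ‖(2 : K)‖ := norm_two_pos
  have hz : ‖u / 4‖ ≤ r / ‖(2 : K)‖ := by
    rw [show (4 : K) = 2 * 2 by norm_num, norm_div, norm_mul, div_le_div_iff₀ (by positivity) h2]
    nlinarith
  obtain ⟨t, ht, hteq⟩ := exists_sq_add_self_eq (hz.trans_lt ((div_lt_one h2).mpr hr2))
  refine ⟨2 * t, ?_, ?_⟩
  · rw [norm_mul, mul_comm]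
    exact (le_div_iff₀ h2).mp (ht.trans hz)
  · have h4 : (4 : K) ≠ 0 := by simpa [show (4 : K) = 2 * 2 by norm_num] using two_ne_zero (α := K)
    field_simp at hteq
    linear_combination hteq

theorem map_sq_principalUnits [CompleteSpace K] {hr : 0 < r} {hr1 : r < 1} {hs : 0 < s}
    {hs1 : s < 1} (hr2 : r < ‖(2 : K)‖) (hsr : s = ‖(2 : K)‖ * r) :
    (principalUnits K hr hr1).map (powMonoidHom 2) = principalUnits K hs hs1 := by
  subst hsr
  refine le_antisymm ?_ fun x hx ↦ ?_
  · rintro _ ⟨y, hy, rfl⟩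
    have hy' : ‖(y : K) - 1 + 2‖ ≤ ‖(2 : K)‖ :=
      (norm_add_le_max _ _).trans (max_le (hy.trans hr2.le) le_rfl)
    rw [mem_principalUnits, powMonoidHom_apply, Units.val_pow_eq_pow_val,
      show (y : K) ^ 2 - 1 = (y - 1 + 2) * (y - 1) by ring, norm_mul]
    exact mul_le_mul hy' hy (norm_nonneg _) (norm_nonneg _)
  · obtain ⟨w, hw, hsq⟩ := exists_sq_eq_one_add hr2 hx
    have hne : 1 + w ≠ 0 := ne_zero_of_norm_sub_one_lt (by simpa using hw.trans_lt hr1)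
    refine ⟨Units.mk0 (1 + w) hne, by simpa [mem_principalUnits] using hw, ?_⟩
    ext
    simpa using hsq

theorem map_two_nsmul_normBall {hr : 0 < r} {hs : 0 < s} (hsr : s = ‖(2 : K)‖ * r) :
    (normBall K hr).map (nsmulAddMonoidHom 2) = normBall K hs := by
  subst hsr
  ext x
  have h2 : 0 < ‖(2 : K)‖ := norm_two_pos
  constructor
  · rintro ⟨y, hy, rfl⟩
    have hy' : ‖y‖ ≤ r := mem_normBall.mp hy
    simpa using mul_le_mul_of_nonneg_left hy' h2.le
  · intro hx
    refine ⟨x / 2, ?_, ?_⟩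
    · simpa [div_le_iff₀' h2] using hx
    · simp [mul_div_cancel₀ x (two_ne_zero (α := K))]

theorem powIndex_two_principalUnits [CompleteSpace K] {hr : 0 < r} {hr1 : r < 1}
    (hr2 : r < ‖(2 : K)‖) :
    powIndex 2 (principalUnits K hr hr1) = nsmulIndex 2 (normBall K hr) := by
  have hs : 0 < ‖(2 : K)‖ * r := mul_pos norm_two_pos hr
  have hs1 : ‖(2 : K)‖ * r < 1 := mul_lt_one_of_nonneg_of_lt_one_right norm_two_le_one hr.le hr1
  rw [powIndex_subgroup, nsmulIndex_addSubgroup,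
    map_sq_principalUnits (hs := hs) (hs1 := hs1) hr2 rfl,
    map_two_nsmul_normBall (hs := hs) rfl, relIndex_principalUnits]

theorem nsmulIndex_two_normBall_ne_zero [ProperSpace K] (hr : 0 < r) :
    nsmulIndex 2 (normBall K hr) ≠ 0 := by
  rw [nsmulIndex_addSubgroup, map_two_nsmul_normBall (hs := mul_pos norm_two_pos hr) rfl]
  exact addSubgroup_relIndex_ne_zero_of_isOpen_of_isCompact (isOpen_normBall _)
    (isCompact_normBall hr)

end NeTwo

theorem isCompact_setOf_units_norm_mem_Icc {F : Type*} [NormedField F] [ProperSpace F] {a : ℝ}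
    (ha : 0 < a) (b : ℝ) : IsCompact {x : Fˣ | ‖(x : F)‖ ∈ Set.Icc a b} := by
  have himage : Units.val '' {x : Fˣ | ‖(x : F)‖ ∈ Set.Icc a b} = {x | ‖x‖ ∈ Set.Icc a b} := by
    ext x
    refine ⟨?_, fun hx ↦ ⟨Units.mk0 x (norm_pos_iff.mp (ha.trans_le hx.1)), hx, rfl⟩⟩
    rintro ⟨y, hy, rfl⟩
    exact hy
  rw [Units.isEmbedding_val₀.isInducing.isCompact_iff, himage]
  exact (isCompact_closedBall (0 : F) b).of_isClosed_subset
    (isClosed_Icc.preimage continuous_norm) fun x hx ↦ mem_closedBall_zero_iff.mpr hx.2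

theorem exists_zpow_norm_mul_mem_Icc {F : Type*} [NormedField F] {ϖ : Fˣ} (hϖ : ‖(ϖ : F)‖ < 1)
    (x : Fˣ) : ∃ n : ℤ, ‖((x * ϖ ^ n : Fˣ) : F)‖ ∈ Set.Icc ‖(ϖ : F)‖ 1 := by
  have hϖ0 : 0 < ‖(ϖ : F)‖ := norm_pos_iff.mpr ϖ.ne_zero
  obtain ⟨n, hn1, hn2⟩ := exists_mem_Ioc_zpow (norm_pos_iff.mpr x.ne_zero)
    ((one_lt_inv₀ hϖ0).mpr hϖ)
  rw [inv_zpow, ← one_div] at hn1 hn2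
  refine ⟨n + 1, ?_, ?_⟩ <;>
    simp only [Units.val_mul, Units.val_zpow_eq_zpow_val, norm_mul, norm_zpow]
  · rw [zpow_add_one₀ hϖ0.ne', ← mul_assoc]
    exact le_mul_of_one_le_left hϖ0.le ((div_lt_iff₀ (by positivity)).mp hn1).le
  · exact (le_div_iff₀ (by positivity)).mp hn2

section Uniformizer

variable (ϖ : Kˣ) (hr : 0 < r) (hr1 : r < 1)

/-- The homomorphism `(k, u) ↦ ϖ ^ k * u` from `ℤ × U` to `Kˣ`, where `U` is the group of principal
units of radius `r`. -/
def zpowersMulPrincipalUnits : Multiplicative ℤ × principalUnits K hr hr1 →* Kˣ :=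
  (zpowersHom Kˣ ϖ).coprod (principalUnits K hr hr1).subtype

variable {ϖ}

theorem injective_zpowersMulPrincipalUnits (hϖ : ‖(ϖ : K)‖ < 1) :
    Function.Injective (zpowersMulPrincipalUnits ϖ hr hr1) := by
  have hϖ0 : 0 < ‖(ϖ : K)‖ := norm_pos_iff.mpr ϖ.ne_zero
  rw [injective_iff_map_eq_one]
  rintro ⟨k, u⟩ h
  have hku : ϖ ^ k.toAdd * (u : Kˣ) = 1 := h
  have hnorm : ‖(ϖ : K)‖ ^ k.toAdd = 1 := by
    simpa [norm_eq_one_of_mem_principalUnits u.2] using congrArg (fun x : Kˣ ↦ ‖(x : K)‖) hku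
  have hk : k.toAdd = 0 := (zpow_eq_one_iff_right₀ hϖ0.le hϖ.ne).mp hnorm
  rw [hk, zpow_zero, one_mul] at hku
  exact Prod.ext hk (Subtype.ext hku)

theorem index_range_zpowersMulPrincipalUnits_ne_zero [ProperSpace K] (hϖ : ‖(ϖ : K)‖ < 1) :
    (zpowersMulPrincipalUnits ϖ hr hr1).range.index ≠ 0 := by
  set L := (zpowersMulPrincipalUnits ϖ hr hr1).range
  have hopen : IsOpen (L : Set Kˣ) :=
    Subgroup.isOpen_mono (fun u hu ↦ ⟨(1, ⟨u, hu⟩), by simp [zpowersMulPrincipalUnits]⟩)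
      (isOpen_principalUnits hr hr1)
  refine index_ne_zero_of_isOpen_of_forall_exists_mul_mem hopen
    (isCompact_setOf_units_norm_mem_Icc (norm_pos_iff.mpr ϖ.ne_zero) 1) fun x ↦ ?_
  obtain ⟨n, hn⟩ := exists_zpow_norm_mul_mem_Icc hϖ x
  exact ⟨ϖ ^ n, ⟨(Multiplicative.ofAdd n, 1), by simp [zpowersMulPrincipalUnits]⟩, hn⟩

end Uniformizer

theorem card_rootsOfUnity_two {F : Type*} [Field F] [NeZero (2 : F)] :
    Nat.card (rootsOfUnity 2 F) = 2 := by
  have h : IsPrimitiveRoot (-1 : F) 2 :=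
    IsPrimitiveRoot.neg_one (ringChar F) fun h ↦ two_ne_zero (α := F) (by
      have := ringChar.Nat.cast_ringChar (R := F)
      rw [h] at this
      exact_mod_cast this)
  exact h.card_rootsOfUnity

theorem injective_sq_principalUnits {hr : 0 < r} {hr1 : r < 1} (hr2 : r < ‖(2 : K)‖) :
    Function.Injective fun u : principalUnits K hr hr1 ↦ u ^ 2 := by
  refine (injective_iff_map_eq_one (powMonoidHom 2 : principalUnits K hr hr1 →* _)).mpr
    fun u hu ↦ ?_
  have hsq : ((u : Kˣ) : K) ^ 2 = 1 := by
    simpa using congrArg (fun x : principalUnits K hr hr1 ↦ ((x : Kˣ) : K)) hu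
  rcases sq_eq_one_iff.mp hsq with h | h
  · ext; simpa using h
  · have hmem := mem_principalUnits.mp u.2
    rw [h, show (-1 - 1 : K) = -2 by ring, norm_neg] at hmem
    exact absurd hr2 hmem.not_gt

theorem powIndex_two_units [ProperSpace K] [NeZero (2 : K)] (hr : 0 < r) (hr2 : r < ‖(2 : K)‖) :
    powIndex 2 Kˣ = 4 * nsmulIndex 2 (normBall K hr) := by
  have hr1 : r < 1 := hr2.trans_le norm_two_le_one
  obtain ⟨ϖ, hϖ0, hϖ⟩ := NormedField.exists_norm_lt_one K
  lift ϖ to Kˣ using (norm_pos_iff.mp hϖ0).isUnit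
  have hsq := Function.Injective.prodMap (pow_left_injective (M := Multiplicative ℤ) two_ne_zero)
    (injective_sq_principalUnits (hr := hr) (hr1 := hr1) hr2)
  rw [powIndex_eq_mul_card_ker (injective_zpowersMulPrincipalUnits hr hr1 hϖ)
    (index_range_zpowersMulPrincipalUnits_ne_zero hr hr1 hϖ) hsq, powIndex_prod,
    powIndex_multiplicative_int, powIndex_two_principalUnits hr2, ← rootsOfUnity_eq_ker,
    card_rootsOfUnity_two]
  ring

theorem powIndex_two_units_ne_zero [ProperSpace K] [NeZero (2 : K)] : powIndex 2 Kˣ ≠ 0 := by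
  obtain ⟨r, hr, hr2⟩ := exists_between (norm_two_pos (F := K))
  rw [powIndex_two_units hr hr2]
  exact mul_ne_zero four_ne_zero (nsmulIndex_two_normBall_ne_zero hr)

theorem isSumSq_neg_one [ProperSpace K] [NeZero (2 : K)] : IsSumSq (-1 : K) := by
  obtain ⟨r, hr, hr2⟩ := exists_between (norm_two_pos (F := K))
  obtain ⟨n, hn⟩ : ∃ n : ℕ, ‖((n + 1 : ℕ) : K)‖ ≤ ‖(2 : K)‖ * r := by
    have hs : 0 < ‖(2 : K)‖ * r := mul_pos norm_two_pos hr
    let k := (normBall K hs).relIndex (normBall K one_pos)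
    have hk : k ≠ 0 := addSubgroup_relIndex_ne_zero_of_isOpen_of_isCompact
      (isOpen_normBall hs) (isCompact_normBall one_pos)
    have hmem : k • (1 : K) ∈ normBall K hs :=
      AddSubgroup.nsmul_relIndex_mem _ (mem_normBall.mpr norm_one.le)
    refine ⟨k - 1, ?_⟩
    rwa [Nat.sub_one_add_one hk, ← nsmul_one k, ← mem_normBall (hr := hs)]
  obtain ⟨w, hw, hsq⟩ := exists_sq_eq_one_add hr2 (u := -((n + 1 : ℕ) : K)) (by rwa [norm_neg])
  have hne : 1 + w ≠ 0 := ne_zero_of_norm_sub_one_lt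
    (by simpa using hw.trans_lt (hr2.trans_le norm_two_le_one))
  have h : (-1 : K) = n * ((1 + w)⁻¹ * (1 + w)⁻¹) := by
    field_simp
    rw [hsq]
    push_cast
    ring
  rw [h]
  exact (IsSumSq.natCast n).mul (IsSumSq.mul_self _)

theorem nsmulIndex_two_normBall_eq_sq {E : Type*} [NontriviallyNormedField E]
    [IsUltrametricDist E] [ProperSpace E] [ProperSpace K] [NormedAlgebra K E] [NeZero (2 : E)]
    (ψ : (K × K) ≃L[K] E) (hs : 0 < s) (hr : 0 < r) :
    nsmulIndex 2 (normBall E hs) = nsmulIndex 2 (normBall K hr) ^ 2 := by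
  let B : AddSubgroup (K × K) := (normBall K hr).prod (normBall K hr)
  have hinj : Function.Injective fun x : E ↦ 2 • x := fun x y h ↦ by
    simpa [two_ne_zero] using h
  calc nsmulIndex 2 (normBall E hs) = nsmulIndex 2 (B.map (ψ : K × K →+ E)) :=
        nsmulIndex_eq_of_isOpen_of_isCompact hinj (isOpen_normBall hs) (isCompact_normBall hs)
          (ψ.isOpenMap _ ((isOpen_normBall hr).prod (isOpen_normBall hr)))
          (((isCompact_normBall hr).prod (isCompact_normBall hr)).image ψ.continuous)
    _ = nsmulIndex 2 B := (nsmulIndex_congr (B.equivMapOfInjective _ ψ.injective)).symm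
    _ = nsmulIndex 2 (normBall K hr × normBall K hr) := nsmulIndex_congr (AddSubgroup.prodEquiv _ _)
    _ = nsmulIndex 2 (normBall K hr) ^ 2 := by rw [nsmulIndex_prod, sq]

theorem four_mul_powIndex_two_units {E : Type*} [NontriviallyNormedField E]
    [IsUltrametricDist E] [ProperSpace E] [ProperSpace K] [NormedAlgebra K E] [NeZero (2 : K)]
    (hKE : Module.finrank K E = 2) : 4 * powIndex 2 Eˣ = powIndex 2 Kˣ ^ 2 := by
  have : FiniteDimensional K E := Module.finite_of_finrank_eq_succ hKE
  have : NeZero (2 : E) := NeZero.of_faithfulSMul K E 2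
  let ψ : (K × K) ≃L[K] E := ContinuousLinearEquiv.ofFinrankEq (by simp [hKE])
  obtain ⟨r, hr, hr2⟩ := exists_between (norm_two_pos (F := K))
  obtain ⟨s, hs, hs2⟩ := exists_between (norm_two_pos (F := E))
  rw [powIndex_two_units hr hr2, powIndex_two_units hs hs2, nsmulIndex_two_normBall_eq_sq ψ hs hr]
  ring

end LocalField

namespace QuadraticExtension

variable {K E : Type*} [Field K] [Field E] [Algebra K E] [Algebra.IsQuadraticExtension K E]
  {τ : E ≃ₐ[K] E}

theorem card_algEquiv_eq_two (hτ : τ ≠ 1) : Nat.card (E ≃ₐ[K] E) = 2 := by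
  have hle : Nat.card (E ≃ₐ[K] E) ≤ 2 := by
    rw [Nat.card_eq_fintype_card, ← Algebra.IsQuadraticExtension.finrank_eq_two K E]
    exact AlgEquiv.card_le
  have : Nontrivial (E ≃ₐ[K] E) := ⟨τ, 1, hτ⟩
  exact hle.antisymm Finite.one_lt_card

theorem isGalois_of_ne_one (hτ : τ ≠ 1) : IsGalois K E :=
  IsGalois.of_card_aut_eq_finrank K E
    ((card_algEquiv_eq_two hτ).trans (Algebra.IsQuadraticExtension.finrank_eq_two K E).symm)

theorem apply_apply_eq_self (hτ : τ ≠ 1) (x : E) : τ (τ x) = x := by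
  have h : τ ^ 2 = 1 := card_algEquiv_eq_two hτ ▸ pow_card_eq_one'
  rw [← AlgEquiv.mul_apply, ← sq, h, AlgEquiv.one_apply]

theorem eq_one_or_eq (hτ : τ ≠ 1) (σ : E ≃ₐ[K] E) : σ = 1 ∨ σ = τ := by
  have h := (Nat.card_eq_two_iff' (1 : E ≃ₐ[K] E)).mp (card_algEquiv_eq_two hτ)
  exact or_iff_not_imp_left.mpr fun hσ ↦ h.unique hσ hτ

theorem algebraMap_norm_eq_mul (hτ : τ ≠ 1) (x : E) :
    algebraMap K E (Algebra.norm K x) = x * τ x := by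
  classical
  have := isGalois_of_ne_one hτ
  have huniv : (Finset.univ : Finset (E ≃ₐ[K] E)) = {1, τ} :=
    (Finset.eq_univ_of_forall fun σ ↦ by simpa using eq_one_or_eq hτ σ).symm
  rw [Algebra.norm_eq_prod_automorphisms, huniv, Finset.prod_pair hτ.symm, AlgEquiv.one_apply]

theorem mem_range_algebraMap_iff_apply_eq (hτ : τ ≠ 1) {x : E} :
    x ∈ Set.range (algebraMap K E) ↔ τ x = x := by
  have := isGalois_of_ne_one hτ
  rw [IsGalois.mem_range_algebraMap_iff_fixed]
  refine ⟨fun h ↦ h τ, fun h σ ↦ ?_⟩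
  rcases eq_one_or_eq hτ σ with rfl | rfl
  exacts [rfl, h]

theorem exists_ne_zero_apply_eq_neg (hτ : τ ≠ 1) : ∃ δ : E, δ ≠ 0 ∧ τ δ = -δ := by
  obtain ⟨x, hx⟩ : ∃ x, τ x ≠ x := DFunLike.ne_iff.mp hτ
  exact ⟨x - τ x, sub_ne_zero.mpr hx.symm, by rw [map_sub, apply_apply_eq_self hτ, neg_sub]⟩

-- Hilbert's Theorem 90; `groupCohomology.exists_div_of_norm_eq_one` needs fields in `Type`.
theorem exists_ne_zero_eq_mul_apply (hτ : τ ≠ 1) {x : E} (hx : x * τ x = 1) :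
    ∃ y, y ≠ 0 ∧ y = x * τ y := by
  by_cases h : 1 + x = 0
  · obtain ⟨δ, hδ0, hδ⟩ := exists_ne_zero_apply_eq_neg hτ
    exact ⟨δ, hδ0, by linear_combination δ * h - x * hδ⟩
  · exact ⟨1 + x, h, by rw [map_add, map_one]; linear_combination -hx⟩

theorem exists_eq_mul_sq_of_norm_eq_sq (hτ : τ ≠ 1) {x : E} {c : K} (hc : c ≠ 0)
    (h : Algebra.norm K x = c ^ 2) :
    ∃ (a : K) (y : E), a ≠ 0 ∧ y ≠ 0 ∧ x = algebraMap K E a * y ^ 2 := by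
  have hc' : algebraMap K E c ≠ 0 := (map_ne_zero _).mpr hc
  have hx : x / algebraMap K E c * τ (x / algebraMap K E c) = 1 := by
    rw [map_div₀, AlgEquiv.commutes, div_mul_div_comm, ← algebraMap_norm_eq_mul hτ, h, map_pow,
      ← sq, div_self (pow_ne_zero 2 hc')]
  obtain ⟨y, hy0, hy⟩ := exists_ne_zero_eq_mul_apply hτ hx
  refine ⟨c / Algebra.norm K y, y, div_ne_zero hc (Algebra.norm_ne_zero_iff.mpr hy0), hy0, ?_⟩
  have hτy : τ y ≠ 0 := (map_ne_zero τ).mpr hy0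
  rw [map_div₀, algebraMap_norm_eq_mul hτ]
  field_simp at hy ⊢
  exact hy.symm

theorem comap_norm_range_sq (hτ : τ ≠ 1) :
    (powMonoidHom 2 : Kˣ →* Kˣ).range.comap (Units.map (Algebra.norm K : E →* K)) =
      (Units.map (algebraMap K E : K →* E)).range ⊔ (powMonoidHom 2 : Eˣ →* Eˣ).range := by
  refine le_antisymm ?_ (sup_le ?_ ?_)
  · rintro x ⟨c, hc⟩
    obtain ⟨a, y, ha, hy, hxy⟩ :=
      exists_eq_mul_sq_of_norm_eq_sq hτ c.ne_zero (congrArg Units.val hc).symm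
    exact Subgroup.mem_sup.mpr
      ⟨_, ⟨Units.mk0 a ha, rfl⟩, _, ⟨Units.mk0 y hy, rfl⟩, Units.ext hxy.symm⟩
  · rintro _ ⟨a, rfl⟩
    exact ⟨a, Units.ext (by simp [Algebra.norm_algebraMap,
      Algebra.IsQuadraticExtension.finrank_eq_two K E])⟩
  · rintro _ ⟨y, rfl⟩
    exact ⟨Units.map (Algebra.norm K : E →* K) y, by simp⟩

theorem range_sq_le_range_norm :
    (powMonoidHom 2 : Kˣ →* Kˣ).range ≤ (Units.map (Algebra.norm K : E →* K)).range := by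
  rintro _ ⟨a, rfl⟩
  exact ⟨Units.map (algebraMap K E : K →* E) a, Units.ext (by simp [Algebra.norm_algebraMap,
    Algebra.IsQuadraticExtension.finrank_eq_two K E])⟩

theorem isSquare_mul_or_isSquare_of_isSquare_algebraMap (hτ : τ ≠ 1) {d : K} {δ : E}
    (hδ : τ δ = -δ) (hd : algebraMap K E d = δ ^ 2) {b : K} (hb : IsSquare (algebraMap K E b)) :
    IsSquare (b * d) ∨ IsSquare b := by
  obtain ⟨y, hy⟩ := hb
  have hfixed {x : E} := mem_range_algebraMap_iff_apply_eq hτ (x := x)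
  have hy' : τ y * τ y = y * y := by rw [← map_mul, ← hy, AlgEquiv.commutes]
  rcases mul_self_eq_mul_self_iff.mp hy' with hτy | hτy
  · obtain ⟨c, hc⟩ := hfixed.mpr hτy
    exact .inr ⟨c, (algebraMap K E).injective (by rw [hy, map_mul, hc])⟩
  · obtain ⟨c, hc⟩ := hfixed.mpr (show τ (y * δ) = y * δ by rw [map_mul, hτy, hδ, neg_mul_neg])
    exact .inl ⟨c, (algebraMap K E).injective (by rw [map_mul, map_mul, hc, hy, hd]; ring)⟩

theorem not_isSquare_of_algebraMap_eq_sq [NeZero (2 : K)] {d : K} {δ : E} (hδ0 : δ ≠ 0)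
    (hδ : τ δ = -δ) (hd : algebraMap K E d = δ ^ 2) : ¬ IsSquare d := by
  rintro ⟨c, rfl⟩
  have : NeZero (2 : E) := NeZero.of_faithfulSMul K E 2
  have hδc : δ * δ = algebraMap K E c * algebraMap K E c := by rw [← sq, ← hd, map_mul]
  have hδ' : τ δ = δ := by
    rcases mul_self_eq_mul_self_iff.mp hδc with h | h
    · rw [h, AlgEquiv.commutes]
    · rw [h, map_neg, AlgEquiv.commutes]
  have h2δ : 2 * δ = 0 := by linear_combination hδ - hδ'
  exact hδ0 ((mul_eq_zero.mp h2δ).resolve_left two_ne_zero)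

theorem mem_range_sq_iff_isSquare_val {F : Type*} [Field F] {x : Fˣ} :
    x ∈ (powMonoidHom 2 : Fˣ →* Fˣ).range ↔ IsSquare (x : F) := by
  refine ⟨fun ⟨y, hy⟩ ↦ ⟨y, by simp [← hy, sq]⟩, fun ⟨y, hy⟩ ↦ ?_⟩
  have hy0 : y ≠ 0 := left_ne_zero_of_mul (hy ▸ x.ne_zero)
  exact ⟨Units.mk0 y hy0, Units.ext (by simp [hy, sq])⟩

theorem relIndex_range_sq_comap_algebraMap [NeZero (2 : K)] (hτ : τ ≠ 1) :
    (powMonoidHom 2 : Kˣ →* Kˣ).range.relIndex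
      ((powMonoidHom 2 : Eˣ →* Eˣ).range.comap (Units.map (algebraMap K E : K →* E))) = 2 := by
  obtain ⟨δ, hδ0, hδ⟩ := exists_ne_zero_apply_eq_neg hτ
  obtain ⟨d, hd⟩ : δ ^ 2 ∈ Set.range (algebraMap K E) :=
    (mem_range_algebraMap_iff_apply_eq hτ).mpr (by rw [map_pow, hδ, neg_sq])
  have hd0 : d ≠ 0 := (map_ne_zero (algebraMap K E)).mp (hd ▸ pow_ne_zero 2 hδ0)
  simp only [Subgroup.relIndex_eq_two_iff_exists_notMem_and, Subgroup.mem_comap,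
    mem_range_sq_iff_isSquare_val]
  exact ⟨Units.mk0 d hd0, ⟨δ, hd.trans (sq δ)⟩, not_isSquare_of_algebraMap_eq_sq hδ0 hδ hd,
    fun b hb ↦ isSquare_mul_or_isSquare_of_isSquare_algebraMap hτ hδ hd hb⟩

theorem index_range_norm_eq_two [NeZero (2 : K)] (hτ : τ ≠ 1) (hK : powIndex 2 Kˣ ≠ 0)
    (hE : 4 * powIndex 2 Eˣ = powIndex 2 Kˣ ^ 2) :
    (Units.map (Algebra.norm K : E →* K)).range.index = 2 := by
  have hsquares : (powMonoidHom 2 : Kˣ →* Kˣ).range ≤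
      (powMonoidHom 2 : Eˣ →* Eˣ).range.comap (Units.map (algebraMap K E : K →* E)) := by
    rintro _ ⟨a, rfl⟩
    exact ⟨Units.map (algebraMap K E : K →* E) a, by simp⟩
  have h := index_mul_relIndex_mul_index hsquares range_sq_le_range_norm (comap_norm_range_sq hτ)
  rw [relIndex_range_sq_comap_algebraMap hτ] at h
  have hE0 : 2 * powIndex 2 Eˣ ≠ 0 := fun h0 ↦ hK ((pow_eq_zero_iff two_ne_zero).mp (by lia))
  refine Nat.eq_of_mul_eq_mul_left (Nat.pos_of_ne_zero hE0) ?_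
  calc 2 * powIndex 2 Eˣ * (Units.map (Algebra.norm K : E →* K)).range.index
      = powIndex 2 Kˣ ^ 2 := by rw [mul_comm 2]; exact h
    _ = 2 * powIndex 2 Eˣ * 2 := by rw [← hE]; ring

end QuadraticExtension

section Universality

variable {K : Type*} [Field K] [NeZero (2 : K)] {N : Subgroup Kˣ}

theorem isSumSq_of_isSumSq_neg_one (h : IsSumSq (-1 : K)) (x : K) : IsSumSq x := by
  have h2 : (2 : K) ≠ 0 := two_ne_zero
  rw [show x = (x + 1) / 2 * ((x + 1) / 2) + -1 * ((x - 1) / 2 * ((x - 1) / 2)) by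
    field_simp; ring]
  exact (IsSumSq.mul_self _).add (h.mul (IsSumSq.mul_self _))

theorem exists_add_notMem_of_index_eq_two (hN : N.index = 2) (h : IsSumSq (-1 : K)) :
    ∃ u ∈ N, ∃ v ∈ N, ∃ w ∉ N, (w : K) = u + v := by
  by_contra! hadd
  have hsum {x : K} (hx : IsSumSq x) : ∀ u : Kˣ, (u : K) = x → u ∈ N := by
    induction hx with
    | zero => exact fun u hu ↦ absurd hu u.ne_zero
    | @sq_add a s _ ih =>
      intro u hu
      by_cases ha : a = 0
      · exact ih u (by simp [hu, ha])
      have hsq : Units.mk0 a ha * Units.mk0 a ha ∈ N := N.mul_self_mem_of_index_two hN _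
      by_cases hs : s = 0
      · rwa [show u = Units.mk0 a ha * Units.mk0 a ha from Units.ext (by simp [hu, hs])]
      · by_contra hu'
        exact hadd _ hsq (Units.mk0 s hs) (ih _ rfl) u hu' (by simp [hu])
  have htop : N = ⊤ := N.eq_top_iff'.mpr fun u ↦ hsum (isSumSq_of_isSumSq_neg_one h u) u rfl
  simp [htop] at hN

theorem exists_mul_add_mul_eq_of_index_eq_two (hN : N.index = 2) (h : IsSumSq (-1 : K))
    (α β a : Kˣ) :
    ∃ x ∈ insert 0 (Units.val '' (N : Set Kˣ)), ∃ y ∈ insert 0 (Units.val '' (N : Set Kˣ)),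
      α * x + β * y = (a : K) := by
  have hval {u : Kˣ} (hu : u ∈ N) : (u : K) ∈ insert 0 (Units.val '' (N : Set Kˣ)) :=
    .inr ⟨u, hu, rfl⟩
  by_cases hα : α⁻¹ * a ∈ N
  · exact ⟨_, hval hα, 0, .inl rfl, by simp⟩
  by_cases hβ : β⁻¹ * a ∈ N
  · exact ⟨0, .inl rfl, _, hval hβ, by simp⟩
  obtain ⟨u, hu, v, hv, w, hw, huv⟩ := exists_add_notMem_of_index_eq_two hN h
  have hw' : w⁻¹ ∉ N := by rwa [inv_mem_iff]
  refine ⟨_, hval (mul_mem hu ((N.mul_mem_iff_of_index_two hN).mpr (iff_of_false hw' hα))),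
    _, hval (mul_mem hv ((N.mul_mem_iff_of_index_two hN).mpr (iff_of_false hw' hβ))), ?_⟩
  have hw0 : (u + v : K) ≠ 0 := huv ▸ w.ne_zero
  simp only [Units.val_mul, Units.val_inv_eq_inv_val, huv]
  field_simp

end Universality

section NormForms

/-- Every nonzero element of `K` is represented by every binary form `α * N x + β * N y` with
`α, β ≠ 0`, where `N` is the norm of `E / K`; equivalently, for quadratic `E / K`, every
nondegenerate binary Hermitian form over `E` is universal. -/
def BinaryNormFormsUniversal (K E : Type*) [Field K] [Field E] [Algebra K E] : Prop :=
  ∀ ⦃α β a : K⦄, α ≠ 0 → β ≠ 0 → a ≠ 0 →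
    ∃ x y : E, α * Algebra.norm K x + β * Algebra.norm K y = a

theorem binaryNormFormsUniversal_of_index_eq_two {K E : Type*} [Field K] [Field E] [Algebra K E]
    [NeZero (2 : K)] [FiniteDimensional K E]
    (hN : (Units.map (Algebra.norm K : E →* K)).range.index = 2) (h : IsSumSq (-1 : K)) :
    BinaryNormFormsUniversal K E := by
  intro α β a hα hβ ha
  have hnorm {x : K}
      (hx : x ∈ insert 0 (Units.val '' ((Units.map (Algebra.norm K : E →* K)).range : Set Kˣ))) :
      ∃ y : E, Algebra.norm K y = x := by
    rcases hx with rfl | ⟨_, ⟨y, rfl⟩, rfl⟩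
    exacts [⟨0, Algebra.norm_zero⟩, ⟨y, rfl⟩]
  obtain ⟨_, hx, _, hy, hxy⟩ := exists_mul_add_mul_eq_of_index_eq_two hN h
    (Units.mk0 α hα) (Units.mk0 β hβ) (Units.mk0 a ha)
  obtain ⟨x, rfl⟩ := hnorm hx
  obtain ⟨y, rfl⟩ := hnorm hy
  exact ⟨x, y, hxy⟩

theorem binaryNormFormsUniversal_of_localField {K E : Type*} [NontriviallyNormedField K]
    [IsUltrametricDist K] [ProperSpace K] [NeZero (2 : K)] [Field E] [Algebra K E]
    [Algebra.IsQuadraticExtension K E] {τ : E ≃ₐ[K] E} (hτ : τ ≠ 1) :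
    BinaryNormFormsUniversal K E := by
  let : NontriviallyNormedField E := spectralNorm.nontriviallyNormedField K E
  let : NormedAlgebra K E := spectralNorm.normedAlgebra K E
  have : IsUltrametricDist E := IsUltrametricDist.of_normedAlgebra K
  have : ProperSpace E := FiniteDimensional.proper K E
  have hE := four_mul_powIndex_two_units (Algebra.IsQuadraticExtension.finrank_eq_two K E)
  exact binaryNormFormsUniversal_of_index_eq_two
    (QuadraticExtension.index_range_norm_eq_two hτ powIndex_two_units_ne_zero hE) isSumSq_neg_one

end NormForms

namespace HermitianForm

open QuadraticExtension

section Semilinear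

variable {E V : Type*} [Field E] [AddCommGroup V] [Module E V] {σ : E →+* E}
  {B : V →ₛₗ[σ] V →ₗ[E] E}

theorem exists_apply_self_ne_zero [NeZero (2 : E)] [Nontrivial V] (hB : B.IsSymm)
    (hsep : B.SeparatingLeft) : ∃ v, B v v ≠ 0 := by
  by_contra! hzero
  obtain ⟨v, hv⟩ := exists_ne (0 : V)
  obtain ⟨w, hw⟩ : ∃ w, B v w ≠ 0 := not_forall.mp (mt (hsep v) hv)
  set u := (B v w)⁻¹ • w
  have hvu : B v u = 1 := by rw [map_smul, smul_eq_mul, inv_mul_cancel₀ hw]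
  have huv : B u v = 1 := by rw [← hB.eq, hvu, map_one]
  have h : (2 : E) = 0 := by
    have := hzero (v + u)
    simp only [map_add, LinearMap.add_apply, hzero, hvu, huv] at this
    linear_combination this
  exact two_ne_zero h

theorem separatingLeft_domRestrict₁₂_ker (hB : B.IsSymm) (hsep : B.SeparatingLeft) {v : V}
    (hv : B v v ≠ 0) :
    (B.domRestrict₁₂ (LinearMap.ker (B v)) (LinearMap.ker (B v))).SeparatingLeft := by
  rintro ⟨w, hw⟩ hperp
  refine Subtype.ext (hsep w fun y ↦ ?_)
  have hy : y ∈ Submodule.span E {v} ⊔ LinearMap.ker (B v) := by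
    rw [LinearMap.span_singleton_sup_ker_eq_top _ hv]
    exact Submodule.mem_top
  obtain ⟨_, hcv, z, hz, rfl⟩ := Submodule.mem_sup.mp hy
  obtain ⟨c, rfl⟩ := Submodule.mem_span_singleton.mp hcv
  have hwv : B w v = 0 := hB.eq_iff.mp hw
  have hwz : B w z = 0 := hperp ⟨z, hz⟩
  rw [map_add, map_smul, hwv, hwz, smul_zero, add_zero]

theorem finrank_ker_add_one [FiniteDimensional E V] {v : V} (hv : B v v ≠ 0) :
    Module.finrank E (LinearMap.ker (B v)) + 1 = Module.finrank E V :=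
  Module.Dual.finrank_ker_add_one_of_ne_zero fun h ↦ hv (by rw [h, LinearMap.zero_apply])

theorem apply_cons_eq_ite (hB : B.IsSymm) {n : ℕ} {b : Fin n → V} {v : V} {a : E}
    (hb : ∀ i j, B (b i) (b j) = if i = j then a else 0) (hv : B v v = a)
    (hvb : ∀ i, B v (b i) = 0) (i j : Fin (n + 1)) :
    B (Fin.cons (α := fun _ ↦ V) v b i) (Fin.cons (α := fun _ ↦ V) v b j) =
      if i = j then a else 0 := by
  cases i using Fin.cases with
  | zero =>
    cases j using Fin.cases with
    | zero => simpa using hv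
    | succ j => simpa [(Fin.succ_ne_zero j).symm] using hvb j
  | succ i =>
    cases j using Fin.cases with
    | zero => simpa using hB.eq_iff.mp (hvb i)
    | succ j => simpa using hb i j

theorem exists_basis_eq_of_apply_eq_ite {ι : Type*} [Fintype ι] [Nonempty ι] [DecidableEq ι]
    (hV : Fintype.card ι = Module.finrank E V) {b : ι → V} {a : E} (ha : a ≠ 0)
    (hb : ∀ i j, B (b i) (b j) = if i = j then a else 0) :
    ∃ e : Module.Basis ι E V, ⇑e = b := by
  have hli : LinearIndependent E b :=
    LinearMap.linearIndependent_of_isOrthoᵢ (B := B) (fun i j hij ↦ (hb i j).trans (if_neg hij))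
      fun i ↦ by rwa [hb, if_pos rfl]
  exact ⟨basisOfLinearIndependentOfCardEqFinrank hli hV, by simp⟩

theorem exists_linearEquiv_apply_eq_mul {V' ι : Type*} [AddCommGroup V'] [Module E V']
    {B' : V' →ₛₗ[σ] V' →ₗ[E] E} [Fintype ι] [Nonempty ι] [DecidableEq ι]
    (hV : Fintype.card ι = Module.finrank E V) (hV' : Fintype.card ι = Module.finrank E V')
    {b : ι → V} {b' : ι → V'} {a a' : E} (ha : a ≠ 0) (ha' : a' ≠ 0)
    (hb : ∀ i j, B (b i) (b j) = if i = j then a else 0)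
    (hb' : ∀ i j, B' (b' i) (b' j) = if i = j then a' else 0) :
    ∃ g : V ≃ₗ[E] V', ∀ v w, B' (g v) (g w) = a' / a * B v w := by
  obtain ⟨e, rfl⟩ := exists_basis_eq_of_apply_eq_ite hV ha hb
  obtain ⟨e', rfl⟩ := exists_basis_eq_of_apply_eq_ite hV' ha' hb'
  set g := e.equiv e' (Equiv.refl ι)
  have h : (B'.comp (g : V →ₗ[E] V')).compl₂ (g : V →ₗ[E] V') = (a' / a) • B :=
    LinearMap.ext_basis e e fun i j ↦ by simp [g, hb, hb', div_mul_cancel₀ a' ha]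
  exact ⟨g, fun v w ↦ LinearMap.congr_fun₂ h v w⟩

end Semilinear

section Similitude

variable {K E V : Type*} [Field K] [Field E] [Algebra K E] [Algebra.IsQuadraticExtension K E]
  {τ : E ≃ₐ[K] E} [AddCommGroup V] [Module E V] {B : V →ₛₗ[(τ : E →+* E)] V →ₗ[E] E}

theorem exists_apply_self_eq_algebraMap (hτ : τ ≠ 1) (hB : B.IsSymm) (v : V) :
    ∃ a : K, algebraMap K E a = B v v :=
  (mem_range_algebraMap_iff_apply_eq hτ).mpr (hB.eq v v)

theorem apply_self_add_smul (hτ : τ ≠ 1) (hB : B.IsSymm) {v w : V} (hvw : B v w = 0) {α β : K}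
    (hv : B v v = algebraMap K E α) (hw : B w w = algebraMap K E β) (x y : E) :
    B (x • v + y • w) (x • v + y • w) =
      algebraMap K E (α * Algebra.norm K x + β * Algebra.norm K y) := by
  have hwv : B w v = 0 := hB.eq_iff.mp hvw
  simp only [map_add, map_smul, LinearMap.map_smulₛₗ, LinearMap.add_apply, LinearMap.smul_apply,
    smul_eq_mul, hvw, hwv, hv, hw, map_mul, algebraMap_norm_eq_mul hτ, RingHom.coe_coe]
  ring

theorem exists_apply_self_eq_of_one_lt_finrank [NeZero (2 : E)] (hτ : τ ≠ 1)
    (hU : BinaryNormFormsUniversal K E) (hB : B.IsSymm) (hsep : B.SeparatingLeft)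
    (hV : 1 < Module.finrank E V) {a : K} (ha : a ≠ 0) : ∃ v, B v v = algebraMap K E a := by
  have : FiniteDimensional E V := Module.finite_of_finrank_pos (by lia)
  have : Nontrivial V := Module.nontrivial_of_finrank_pos (R := E) (by lia)
  obtain ⟨v, hv⟩ := exists_apply_self_ne_zero hB hsep
  have hker := finrank_ker_add_one hv
  have : Nontrivial (LinearMap.ker (B v)) := Module.nontrivial_of_finrank_pos (R := E) (by lia)
  obtain ⟨⟨w, hvw⟩, hw⟩ :=
    exists_apply_self_ne_zero (hB.domRestrict _) (separatingLeft_domRestrict₁₂_ker hB hsep hv)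
  obtain ⟨α, hα⟩ := exists_apply_self_eq_algebraMap hτ hB v
  obtain ⟨β, hβ⟩ := exists_apply_self_eq_algebraMap hτ hB w
  have hα0 : α ≠ 0 := fun h ↦ hv (by rw [← hα, h, map_zero])
  have hβ0 : β ≠ 0 := fun h ↦ hw (hβ.symm.trans (by rw [h, map_zero]))
  obtain ⟨x, y, hxy⟩ := hU hα0 hβ0 ha
  exact ⟨x • v + y • w, by rw [apply_self_add_smul hτ hB hvw hα.symm hβ.symm, hxy]⟩

theorem exists_orthogonal_pair_of_norm_add_norm (hτ : τ ≠ 1) (hB : B.IsSymm) {v w : V}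
    (hv : B v v = 1) (hw : B w w = 1) (hvw : B v w = 0) (x y : E) :
    ∃ s ∈ Submodule.span E {v, w}, ∃ t ∈ Submodule.span E {v, w}, B s t = 0 ∧
      B s s = algebraMap K E (Algebra.norm K x + Algebra.norm K y) ∧
      B t t = algebraMap K E (Algebra.norm K x + Algebra.norm K y) := by
  have hwv : B w v = 0 := hB.eq_iff.mp hvw
  have hττ := apply_apply_eq_self hτ
  refine ⟨x • v + y • w, Submodule.mem_span_pair.mpr ⟨_, _, rfl⟩,
    -τ y • v + τ x • w, Submodule.mem_span_pair.mpr ⟨_, _, rfl⟩, ?_, ?_, ?_⟩ <;>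
  · simp only [map_add, map_smul, LinearMap.map_smulₛₗ, LinearMap.add_apply,
      LinearMap.smul_apply, smul_eq_mul, hvw, hwv, hv, hw, algebraMap_norm_eq_mul hτ,
      RingHom.coe_coe, map_neg, hττ]
    ring

theorem exists_apply_self_eq_one_and_separatingLeft_ker [NeZero (2 : E)] (hτ : τ ≠ 1)
    (hU : BinaryNormFormsUniversal K E) (hB : B.IsSymm) (hsep : B.SeparatingLeft) {n : ℕ}
    (hn : n ≠ 0) (hV : Module.finrank E V = n + 1) :
    ∃ v, B v v = 1 ∧ Module.finrank E (LinearMap.ker (B v)) = n ∧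
      (B.domRestrict₁₂ (LinearMap.ker (B v)) (LinearMap.ker (B v))).SeparatingLeft := by
  have : FiniteDimensional E V := Module.finite_of_finrank_pos (by lia)
  obtain ⟨v, hv⟩ := exists_apply_self_eq_of_one_lt_finrank hτ hU hB hsep (by lia) one_ne_zero
  rw [map_one] at hv
  have hv0 : B v v ≠ 0 := hv ▸ one_ne_zero
  exact ⟨v, hv, by have := finrank_ker_add_one hv0; lia,
    separatingLeft_domRestrict₁₂_ker hB hsep hv0⟩

theorem exists_apply_eq_ite_of_finrank_odd [NeZero (2 : E)] (hτ : τ ≠ 1)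
    (hU : BinaryNormFormsUniversal K E) {m : ℕ} (hB : B.IsSymm) (hsep : B.SeparatingLeft)
    (hV : Module.finrank E V = 2 * m + 1) :
    ∃ d : K, d ≠ 0 ∧ ∃ b : Fin (2 * m + 1) → V,
      ∀ i j, B (b i) (b j) = if i = j then algebraMap K E d else 0 := by
  induction m generalizing V with
  | zero =>
    have : Nontrivial V := Module.nontrivial_of_finrank_pos (R := E) (by lia)
    obtain ⟨v, hv⟩ := exists_apply_self_ne_zero hB hsep
    obtain ⟨d, hd⟩ := exists_apply_self_eq_algebraMap hτ hB v
    exact ⟨d, fun h ↦ hv (by rw [← hd, h, map_zero]), fun _ ↦ v,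
      fun i j ↦ by rw [if_pos (Fin.ext (by lia)), hd]⟩
  | succ m ih =>
    obtain ⟨v, hv, hVv, hsepv⟩ :=
      exists_apply_self_eq_one_and_separatingLeft_ker hτ hU hB hsep (by lia) hV
    have hBv := hB.domRestrict (LinearMap.ker (B v))
    obtain ⟨w, hw, hVw, hsepw⟩ :=
      exists_apply_self_eq_one_and_separatingLeft_ker hτ hU hBv hsepv (by lia) hVv
    obtain ⟨d, hd, b, hb⟩ := ih (hBv.domRestrict _) hsepw hVw
    obtain ⟨x, y, hxy⟩ := hU one_ne_zero one_ne_zero hd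
    obtain ⟨s, hs, t, ht, hst, hss, htt⟩ :=
      exists_orthogonal_pair_of_norm_add_norm hτ hB hv hw w.2 x y
    have hvwb (i) : Submodule.span E {v, w.1} ≤ LinearMap.ker (B (b i).1.1) := by
      rw [Submodule.span_le, Set.pair_subset_iff]
      exact ⟨hB.eq_iff.mp (b i).1.2, hBv.eq_iff.mp (b i).2⟩
    rw [one_mul, one_mul] at hxy
    rw [hxy] at hss htt
    have htb := apply_cons_eq_ite hB hb htt fun i ↦ hB.eq_iff.mp (hvwb i ht)
    refine ⟨d, hd, _, apply_cons_eq_ite hB htb hss fun i ↦ ?_⟩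
    cases i using Fin.cases with
    | zero => exact hst
    | succ i => exact hB.eq_iff.mp (hvwb i hs)

theorem exists_similitude_of_finrank_odd [NeZero (2 : E)] (hτ : τ ≠ 1)
    (hU : BinaryNormFormsUniversal K E) {V' : Type*} [AddCommGroup V'] [Module E V']
    {B' : V' →ₛₗ[(τ : E →+* E)] V' →ₗ[E] E} (hB : B.IsSymm) (hsep : B.SeparatingLeft)
    (hB' : B'.IsSymm) (hsep' : B'.SeparatingLeft) {m : ℕ}
    (hV : Module.finrank E V = 2 * m + 1) (hV' : Module.finrank E V' = 2 * m + 1) :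
    ∃ g : V ≃ₗ[E] V', ∃ c : E, c ≠ 0 ∧ ∀ v w, B' (g v) (g w) = c * B v w := by
  obtain ⟨d, hd, b, hb⟩ := exists_apply_eq_ite_of_finrank_odd hτ hU hB hsep hV
  obtain ⟨d', hd', b', hb'⟩ := exists_apply_eq_ite_of_finrank_odd hτ hU hB' hsep' hV'
  have hdE : algebraMap K E d ≠ 0 := by simpa using hd
  have hdE' : algebraMap K E d' ≠ 0 := by simpa using hd'
  obtain ⟨g, hg⟩ := exists_linearEquiv_apply_eq_mul (by simp [hV]) (by simp [hV']) hdE hdE' hb hb'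
  exact ⟨g, _, div_ne_zero hdE' hdE, hg⟩

end Similitude

theorem exists_sesquilinear_eq_flip {E V : Type*} [CommSemiring E] [AddCommMonoid V] [Module E V]
    {σ : E →+* E} {φ : V → V → E}
    (hadd : ∀ u v w : V, φ (u + v) w = φ u w + φ v w)
    (hsmul : ∀ (a : E) (v w : V), φ (a • v) w = a * φ v w)
    (hherm : ∀ v w : V, φ v w = σ (φ w v))
    (hnd : ∀ v : V, (∀ w : V, φ v w = 0) → v = 0) :
    ∃ B : V →ₛₗ[σ] V →ₗ[E] E, B.IsSymm ∧ B.SeparatingLeft ∧ ∀ v w, B v w = φ w v := by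
  let B : V →ₛₗ[σ] V →ₗ[E] E := LinearMap.mk₂'ₛₗ σ (RingHom.id E) (fun v w ↦ φ w v)
    (fun u v w ↦ by rw [hherm, hadd, map_add, ← hherm, ← hherm])
    (fun a v w ↦ by rw [hherm, hsmul, map_mul, ← hherm, smul_eq_mul])
    (fun u v w ↦ hadd v w u) (fun a v w ↦ hsmul a w v)
  refine ⟨B, ⟨fun v w ↦ (hherm v w).symm⟩, fun v hv ↦ hnd v fun w ↦ ?_, fun v w ↦ rfl⟩
  rw [hherm, show φ w v = 0 from hv w, map_zero]

theorem isometry_iff_isometry_conj_of_similitude {E V V' : Type*} [Field E]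
    [AddCommMonoid V] [Module E V] [AddCommMonoid V'] [Module E V'] {φ : V → V → E}
    {φ' : V' → V' → E} {g : V ≃ₗ[E] V'} {c : E} (hc : c ≠ 0)
    (hg : ∀ v w, φ' (g v) (g w) = c * φ v w) (f : V ≃ₗ[E] V) :
    (∀ v w, φ (f v) (f w) = φ v w) ↔
      ∀ v w, φ' ((g.symm.trans (f.trans g)) v) ((g.symm.trans (f.trans g)) w) = φ' v w := by
  rw [g.surjective.forall₂]
  simp only [LinearEquiv.trans_apply, LinearEquiv.symm_apply_apply, hg, mul_right_inj' hc]

end HermitianForm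

theorem stmt_4_general {K : Type*} [NontriviallyNormedField K] [IsUltrametricDist K]
    [ProperSpace K] [NeZero (2 : K)] {E : Type*} [Field E] [Algebra K E]
    (hKE : Module.finrank K E = 2) (τ : E ≃ₐ[K] E) (hτ : τ ≠ AlgEquiv.refl) (m : ℕ)
    {V : Type*} [AddCommGroup V] [Module E V] (hV : Module.finrank E V = 2 * m + 1)
    {V' : Type*} [AddCommGroup V'] [Module E V'] (hV' : Module.finrank E V' = 2 * m + 1)
    (φ : V → V → E) (φ' : V' → V' → E)
    (hadd : ∀ u v w : V, φ (u + v) w = φ u w + φ v w)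
    (hsmul : ∀ (a : E) (v w : V), φ (a • v) w = a * φ v w)
    (hherm : ∀ v w : V, φ v w = τ (φ w v))
    (hnd : ∀ v : V, (∀ w : V, φ v w = 0) → v = 0)
    (hadd' : ∀ u v w : V', φ' (u + v) w = φ' u w + φ' v w)
    (hsmul' : ∀ (a : E) (v w : V'), φ' (a • v) w = a * φ' v w)
    (hherm' : ∀ v w : V', φ' v w = τ (φ' w v))
    (hnd' : ∀ v : V', (∀ w : V', φ' v w = 0) → v = 0) :
    ∃ g : V ≃ₗ[E] V', ∀ f : V ≃ₗ[E] V,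
      (∀ v w : V, φ (f v) (f w) = φ v w) ↔
        (∀ v w : V', φ' ((g.symm.trans (f.trans g)) v) ((g.symm.trans (f.trans g)) w)
          = φ' v w) := by
  have : Algebra.IsQuadraticExtension K E := ⟨hKE⟩
  have : NeZero (2 : E) := NeZero.of_faithfulSMul K E 2
  have hU : BinaryNormFormsUniversal K E := binaryNormFormsUniversal_of_localField hτ
  obtain ⟨B, hB, hsep, hBφ⟩ :=
    HermitianForm.exists_sesquilinear_eq_flip (σ := τ) hadd hsmul hherm hnd
  obtain ⟨B', hB', hsep', hBφ'⟩ :=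
    HermitianForm.exists_sesquilinear_eq_flip (σ := τ) hadd' hsmul' hherm' hnd'
  obtain ⟨g, c, hc, hg⟩ :=
    HermitianForm.exists_similitude_of_finrank_odd hτ hU hB hsep hB' hsep' hV hV'
  refine ⟨g, HermitianForm.isometry_iff_isometry_conj_of_similitude hc fun v w ↦ ?_⟩
  rw [← hBφ, ← hBφ', hg]

/-- Let `K` be a finite extension of `ℚ_p`, `E/K` quadratic with nontrivial
`K`-automorphism `τ`, and let `(V, φ)`, `(V', φ')` be nondegenerate Hermitian spaces over `E`
of the same odd dimension `2m + 1`.  Then there is an `E`-linear isomorphism `g : V → V'`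
such that conjugation `f ↦ g ∘ f ∘ g⁻¹` carries `U(V, φ)` onto `U(V', φ')`.  -/
theorem stmt_4 (p : ℕ) [Fact p.Prime]
    {K : Type*} [Field K] [Algebra ℚ_[p] K] [FiniteDimensional ℚ_[p] K]
    {E : Type*} [Field E] [Algebra K E] (hKE : Module.finrank K E = 2)
    (τ : E ≃ₐ[K] E) (hτ : τ ≠ AlgEquiv.refl)
    (m : ℕ)
    {V : Type*} [AddCommGroup V] [Module E V] (hV : Module.finrank E V = 2 * m + 1)
    {V' : Type*} [AddCommGroup V'] [Module E V'] (hV' : Module.finrank E V' = 2 * m + 1)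
    (φ : V → V → E) (φ' : V' → V' → E)
    (hadd : ∀ u v w : V, φ (u + v) w = φ u w + φ v w)
    (hsmul : ∀ (a : E) (v w : V), φ (a • v) w = a * φ v w)
    (hherm : ∀ v w : V, φ v w = τ (φ w v))
    (hnd : ∀ v : V, (∀ w : V, φ v w = 0) → v = 0)
    (hadd' : ∀ u v w : V', φ' (u + v) w = φ' u w + φ' v w)
    (hsmul' : ∀ (a : E) (v w : V'), φ' (a • v) w = a * φ' v w)
    (hherm' : ∀ v w : V', φ' v w = τ (φ' w v))
    (hnd' : ∀ v : V', (∀ w : V', φ' v w = 0) → v = 0) :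
    ∃ g : V ≃ₗ[E] V', ∀ f : V ≃ₗ[E] V,
      (∀ v w : V, φ (f v) (f w) = φ v w) ↔
        (∀ v w : V', φ' ((g.symm.trans (f.trans g)) v) ((g.symm.trans (f.trans g)) w)
          = φ' v w) := by
  let : NontriviallyNormedField K := spectralNorm.nontriviallyNormedField ℚ_[p] K
  let : NormedAlgebra ℚ_[p] K := spectralNorm.normedAlgebra ℚ_[p] K
  have : IsUltrametricDist K := IsUltrametricDist.of_normedAlgebra ℚ_[p]
  have : ProperSpace K := FiniteDimensional.proper ℚ_[p] K
  have : NeZero (2 : K) := NeZero.of_faithfulSMul ℚ_[p] K 2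
  exact stmt_4_general hKE τ hτ m hV hV' φ φ' hadd hsmul hherm hnd hadd' hsmul' hherm' hnd'
end

section
/- Let p be an odd prime, K a finite extension of ℚ_p with residue field of cardinality q, and E/K a totally ramified quadratic extension. Fix r ≥ 1, set s = 2r, let K_s be the unramified extension of K of degree s (in a fixed algebraic closure) and E_s = E·K_s, so that Gal(E_s/K) ≅ ℤ/sℤ × ℤ/2ℤ, with σ the element inducing the q-power Frobenius on the residue field and fixing E, and τ the nontrivial element fixing K_s. Put η = τσ^r and let L be the fixed field of η, which contains the unramified extension K_r of K of degree r with L/K_r ramified quadratic. Choose a uniformizer π_L of L with Tr_{L/K_r}(π_L) = 0, let κ ∈ L^×, and define the Hermitian form φ_κ on the s-dimensional E-vector space E_s by φ_κ(x,y) = Tr_{E_s/E}((κ/π_L) · x · η(y)). Then there exists an E-subspace X ⊆ E_s with dim_E X = r and φ_κ(x,y) = 0 for all x,y ∈ X if and only if κ ∈ Nm_{E_s/L}(E_s^×). -/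
open IsLocalRing

/-!
Let `δ` be the determinant of the matrix `(σ ^ k bᵢ)` of conjugates of an `E`-basis `b` of `E_s`.
As `σ` permutes the `2r` rows cyclically, `σ δ = -δ`, and `δ · η δ` is the Gram determinant of
`Tr (x · η y)`. An isotropic subspace of dimension `r` for this form produces a vanishing `r × r`
block in the Gram matrix, so that `δ · η δ = ± x · η x` with `x ∈ E`; then `y = δ / x` satisfies
`σ y = -y` and `y · τ y = 1`. Hence `y` is integral with residue class `±1`, because `τ` acts
trivially on the residue field. Now `σ y = -y` gives `1 = -1` there, which is absurd. Therefore
`Tr (x · η y)` has no isotropic subspace of dimension `r`.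

By Hensel's lemma and the surjectivity of the norm of finite fields every unit of `L` is a norm, so
that `κ` or `κ / π_L` is a norm. Multiplying `κ / π_L` by a norm does not affect the existence of
isotropic subspaces, which reduces the second case to `Tr (x · η y)` and the first one to
`Tr (π_L⁻¹ · x · η y)`. As `σ ^ r` negates `π_L`, the fixed field of `σ ^ r` is isotropic for the
latter form.
-/

section Development

open Module Matrix

section Henselian

theorem isPrecomplete_of_finite {R M : Type*} [CommRing R] (I : Ideal R) [IsAdicComplete I R]
    [AddCommGroup M] [Module R M] [Module.Finite R M] : IsPrecomplete I M := by
  refine AdicCompletion.of_surjective_iff.1 fun y => ?_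
  obtain ⟨t, rfl⟩ := AdicCompletion.ofTensorProduct_surjective_of_finite I M y
  induction t with
  | zero => exact ⟨0, by simp⟩
  | tmul a m =>
    obtain ⟨c, rfl⟩ := AdicCompletion.of_surjective I R a
    refine ⟨c • m, ?_⟩
    rw [map_smul, AdicCompletion.ofTensorProduct_tmul]
    rfl
  | add s t hs ht =>
    obtain ⟨x, hx⟩ := hs
    obtain ⟨y, hy⟩ := ht
    exact ⟨x + y, by rw [map_add, map_add, hx, hy]⟩

theorem henselianLocalRing_of_henselianRing {O : Type*} [CommRing O] [IsLocalRing O] (I : Ideal O)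
    [HenselianRing O I] [HenselianLocalRing (O ⧸ I)] : HenselianLocalRing O where
  is_henselian f hf a₀ ha₀ hf' := by
    have hmk := Ideal.Quotient.mk_surjective (I := I)
    have := hmk.isLocalHom
    have eval_mk (g : Polynomial O) (a : O) :
        (g.map (Ideal.Quotient.mk I)).eval (Ideal.Quotient.mk I a) =
          Ideal.Quotient.mk I (g.eval a) := by
      rw [Polynomial.eval_map, Polynomial.eval₂_at_apply]
    obtain ⟨b, hb, hba⟩ := HenselianLocalRing.is_henselian (f.map (Ideal.Quotient.mk I))
      (hf.map _) (Ideal.Quotient.mk I a₀) (by simpa [eval_mk] using ha₀)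
      (by simpa [Polynomial.derivative_map, eval_mk] using hf')
    obtain ⟨a₁, rfl⟩ := hmk b
    have ha₁₀ : a₁ - a₀ ∈ maximalIdeal O := by simpa [← map_sub] using hba
    have hf'₁ : IsUnit (f.derivative.eval a₁) := by
      rw [← residue_ne_zero_iff_isUnit] at hf' ⊢
      have : residue O a₁ = residue O a₀ := by
        rwa [← sub_eq_zero, ← map_sub, residue_eq_zero_iff]
      rwa [← Polynomial.eval₂_at_apply, this, Polynomial.eval₂_at_apply]
    obtain ⟨a, ha, haa₁⟩ := HenselianRing.is_henselian f hf a₁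
      (by rwa [Polynomial.IsRoot, eval_mk, Ideal.Quotient.eq_zero_iff_mem] at hb) (hf'₁.map _)
    have hI : I ≤ maximalIdeal O :=
      HenselianRing.jac.trans (jacobson_eq_maximalIdeal _ bot_ne_top).le
    exact ⟨a, ha, by simpa using add_mem (hI haa₁) ha₁₀⟩

theorem henselianLocalRing_of_isAdicComplete {A : Type*} [CommRing A] [IsLocalRing A]
    [IsAdicComplete (maximalIdeal A) A] : HenselianLocalRing A where
  is_henselian f hf a ha hf' := HenselianRing.is_henselian f hf a ha (hf'.map _)

theorem henselianLocalRing_of_finite (R : Type*) {O : Type*} [CommRing R] [IsLocalRing R]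
    [IsNoetherianRing R] [IsAdicComplete (maximalIdeal R) R] [CommRing O] [IsLocalRing O]
    [Algebra R O] [Module.Finite R O] [IsLocalHom (algebraMap R O)] : HenselianLocalRing O := by
  set I := (maximalIdeal R).map (algebraMap R O)
  have : IsAdicComplete I O :=
    (IsAdicComplete.map_algebraMap_iff ..).2 { isPrecomplete_of_finite (maximalIdeal R) with }
  have : Nontrivial (O ⧸ I) := Ideal.Quotient.nontrivial_iff.2 (map_maximalIdeal_lt_top _).ne
  have : IsLocalRing (O ⧸ I) := .of_surjective' _ Ideal.Quotient.mk_surjective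
  let := Ideal.Quotient.field (maximalIdeal R)
  have : IsArtinianRing (O ⧸ I) := .of_finite (R ⧸ maximalIdeal R) _
  have := henselianLocalRing_of_isAdicComplete (A := O ⧸ I)
  exact henselianLocalRing_of_henselianRing I

open Polynomial in
theorem isSquare_of_sub_one_mem_maximalIdeal {O : Type*} [CommRing O] [HenselianLocalRing O]
    (h2 : IsUnit (2 : O)) {u : O} (hu : u - 1 ∈ maximalIdeal O) : IsSquare u := by
  obtain ⟨w, hw, -⟩ := HenselianLocalRing.is_henselian (X ^ 2 - C u)
    (monic_X_pow_sub_C _ two_ne_zero) 1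
    (by simpa using neg_mem hu) (by simpa [one_add_one_eq_two] using h2)
  exact ⟨w, by simpa [sub_eq_zero, sq, eq_comm] using hw⟩

end Henselian

section Determinant

theorem det_fromBlocks_zero₁₁ {m R : Type*} [Fintype m] [DecidableEq m] [CommRing R]
    (B C D : Matrix m m R) :
    (fromBlocks 0 B C D).det = (-1) ^ Fintype.card m * (B.det * C.det) := by
  have : fromBlocks 0 B C D = fromBlocks B 0 D C * fromBlocks 1 1 1 0 * fromBlocks 1 0 (-1) 1 := by
    simp [fromBlocks_multiply]
  rw [this, det_mul, det_mul, det_fromBlocks_zero₁₂, det_fromBlocks_one₁₁, det_fromBlocks_zero₁₂]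
  simp [det_neg, mul_comm]

theorem det_eq_mul_map_of_toBlocks₁₁_eq_zero {m R : Type*} [Fintype m] [DecidableEq m] [CommRing R]
    (f : R →+* R) {M : Matrix (m ⊕ m) (m ⊕ m) R} (hM : (M.map f)ᵀ = M) (h₀ : M.toBlocks₁₁ = 0) :
    M.det = (-1) ^ Fintype.card m * (M.toBlocks₁₂.det * f M.toBlocks₁₂.det) := by
  have h₂₁ : M.toBlocks₂₁ = (M.toBlocks₁₂.map f)ᵀ := by
    ext i j
    exact congrFun₂ hM.symm _ _
  rw [← M.fromBlocks_toBlocks, h₀, det_fromBlocks_zero₁₁, h₂₁, det_transpose]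
  simp only [toBlocks_fromBlocks₁₂, RingHom.map_det, RingHom.mapMatrix_apply]

theorem exists_basis_sum_mem {E V : Type*} [Field E] [AddCommGroup V] [Module E V]
    {m n : ℕ} {X : Submodule E V} (hX : finrank E X = m) (hV : finrank E V = m + n)
    [FiniteDimensional E V] :
    ∃ b : Basis (Fin m ⊕ Fin n) E V, ∀ i, b (Sum.inl i) ∈ X := by
  obtain ⟨Y, hXY⟩ := X.exists_isCompl
  have hY : finrank E Y = n := by
    have := Submodule.finrank_add_eq_of_isCompl hXY
    omega
  refine ⟨((finBasisOfFinrankEq E X hX).prod (finBasisOfFinrankEq E Y hY)).map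
    (Submodule.prodEquivOfIsCompl X Y hXY), fun i => ?_⟩
  simp

end Determinant

section Trace

theorem bijective_pow_of_orderOf_eq_card {G : Type*} [Group G] [Finite G] {g : G} {n : ℕ}
    (hg : orderOf g = n) (hG : Nat.card G = n) : Function.Bijective fun i : Fin n => g ^ (i : ℕ) :=
  (Nat.bijective_iff_injective_and_card _).2
    ⟨fun i j h => Fin.ext (pow_injOn_Iio_orderOf (hg ▸ i.2) (hg ▸ j.2) h),
      (Nat.card_fin n).trans hG.symm⟩

theorem exists_restrictScalarsHom_eq {K F V : Type*} [Field K] [Field F] [Field V]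
    [Algebra K F] [Algebra K V] [Algebra F V] [IsScalarTower K F V] (g : V ≃ₐ[K] V)
    (hg : ∀ x, g (algebraMap F V x) = algebraMap F V x) :
    ∃ g' : V ≃ₐ[F] V, AlgEquiv.restrictScalarsHom K g' = g :=
  ⟨{ g with commutes' := hg }, rfl⟩

theorem orderOf_restrictScalarsHom {K F V : Type*} [Field K] [Field F] [Field V]
    [Algebra K F] [Algebra K V] [Algebra F V] [IsScalarTower K F V] (g : V ≃ₐ[F] V) :
    orderOf (AlgEquiv.restrictScalarsHom K g) = orderOf g :=
  orderOf_injective _ (AlgEquiv.restrictScalars_injective K) g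

variable {K E V : Type*} [Field K] [Field E] [Field V] [Algebra K E] [Algebra K V] [Algebra E V]
  [IsScalarTower K E V] [FiniteDimensional E V] [IsGalois E V]

theorem algebraMap_trace_eq_sum_pow {n : ℕ} {σ : V ≃ₐ[K] V}
    (hσE : ∀ x, σ (algebraMap E V x) = algebraMap E V x)
    (hσ : orderOf σ = n) (hEV : finrank E V = n) (x : V) :
    algebraMap E V (Algebra.trace E V x) = ∑ i : Fin n, (σ ^ (i : ℕ)) x := by
  obtain ⟨σ, rfl⟩ := exists_restrictScalarsHom_eq σ hσE
  rw [orderOf_restrictScalarsHom] at hσ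
  simp only [trace_eq_sum_automorphisms, ← map_pow]
  exact ((bijective_pow_of_orderOf_eq_card hσ
    ((IsGalois.card_aut_eq_finrank E V).trans hEV)).sum_comp fun g => g x).symm

theorem algebraMap_norm_eq_mul {η : V ≃ₐ[K] V}
    (hηE : ∀ x, η (algebraMap E V x) = algebraMap E V x) (hη : orderOf η = 2)
    (hEV : finrank E V = 2) (x : V) :
    algebraMap E V (Algebra.norm E x) = x * η x := by
  obtain ⟨η, rfl⟩ := exists_restrictScalarsHom_eq η hηE
  rw [orderOf_restrictScalarsHom] at hη
  rw [Algebra.norm_eq_prod_automorphisms, ← (bijective_pow_of_orderOf_eq_card hη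
    ((IsGalois.card_aut_eq_finrank E V).trans hEV)).prod_comp fun g => g x]
  simp [Fin.prod_univ_two]

end Trace

section Isotropic

/-- The form `(x, y) ↦ Tr_{V/E} (c * x * η y)` on `V` admits a totally isotropic `E`-subspace of
dimension `r`. For an involution `η` and `dim_E V = 2 * r` this says that the form is split. -/
def HasIsotropicSubspace (E : Type*) {V : Type*} [Field E] [Field V] [Algebra E V] (η : V → V)
    (c : V) (r : ℕ) : Prop :=
  ∃ X : Submodule E V, finrank E X = r ∧ ∀ x ∈ X, ∀ y ∈ X, Algebra.trace E V (c * x * η y) = 0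

theorem HasIsotropicSubspace.of_mul {E V F : Type*} [Field E] [Field V] [Algebra E V]
    [FunLike F V V] [RingHomClass F V V] {η : F} {c z : V} {r : ℕ} (hz : z ≠ 0)
    (h : HasIsotropicSubspace E η (c * (z * η z)) r) :
    HasIsotropicSubspace E η c r := by
  obtain ⟨X, hX, hiso⟩ := h
  have hinj : Function.Injective (LinearMap.mulLeft E z) := mul_right_injective₀ hz
  refine ⟨X.map (LinearMap.mulLeft E z),
    (Submodule.equivMapOfInjective _ hinj X).finrank_eq.symm.trans hX, ?_⟩
  rintro _ ⟨x, hx, rfl⟩ _ ⟨y, hy, rfl⟩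
  rw [← hiso x hx y hy, LinearMap.mulLeft_apply, LinearMap.mulLeft_apply, map_mul η]
  ring_nf

theorem hasIsotropicSubspace_mul_iff {E V F : Type*} [Field E] [Field V] [Algebra E V]
    [FunLike F V V] [RingHomClass F V V] {η : F} {c z : V} {r : ℕ} (hz : z ≠ 0) :
    HasIsotropicSubspace E η (c * (z * η z)) r ↔ HasIsotropicSubspace E η c r := by
  refine ⟨.of_mul hz, fun h => .of_mul (inv_ne_zero hz) ?_⟩
  have : η z ≠ 0 := (map_ne_zero η).2 hz
  rwa [map_inv₀, show c * (z * η z) * (z⁻¹ * (η z)⁻¹) = c by field_simp]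

variable {E V : Type*} [Field E] [Field V] [Algebra E V]

theorem trace_eq_zero_of_map_eq_neg (h2 : (2 : E) ≠ 0) (ρ : V ≃ₐ[E] V) {x : V}
    (hx : ρ x = -x) :
    Algebra.trace E V x = 0 := by
  have h := Algebra.trace_eq_of_algEquiv ρ x
  rw [hx, map_neg] at h
  exact (mul_eq_zero.1 (by linear_combination -h : 2 * Algebra.trace E V x = 0)).resolve_left h2

variable [FiniteDimensional E V]

theorem finrank_fixedField_zpowers {r : ℕ} {ρ : V ≃ₐ[E] V} (hρ : orderOf ρ = 2)
    (hEV : finrank E V = 2 * r) :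
    finrank E (IntermediateField.fixedField (Subgroup.zpowers ρ)) = r := by
  have h := finrank_mul_finrank E (IntermediateField.fixedField (Subgroup.zpowers ρ)) V
  rw [IntermediateField.finrank_fixedField_eq_card, Nat.card_zpowers, hρ, hEV] at h
  omega

theorem hasIsotropicSubspace_of_map_eq_neg (h2 : (2 : E) ≠ 0) {r : ℕ} {ρ : V ≃ₐ[E] V}
    (hρ : orderOf ρ = 2) (hEV : finrank E V = 2 * r) {η : V → V} (hη : Function.Commute η ρ)
    {c : V} (hc : ρ c = -c) : HasIsotropicSubspace E η c r := by
  let F := IntermediateField.fixedField (Subgroup.zpowers ρ)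
  have hF (x : V) (hx : x ∈ F) : ρ x = x :=
    (IntermediateField.mem_fixedField_iff _ x).1 hx _ (Subgroup.mem_zpowers _)
  refine ⟨Subalgebra.toSubmodule F.toSubalgebra, finrank_fixedField_zpowers hρ hEV,
    fun x hx y hy => trace_eq_zero_of_map_eq_neg h2 ρ ?_⟩
  rw [map_mul, map_mul, hc, hF x hx, ← hη.eq, hF y hy, neg_mul, neg_mul]

end Isotropic

section GramDeterminant

variable {K V : Type*} [Field K] [Field V] [Algebra K V] {σ : V ≃ₐ[K] V} {n : ℕ}

/-- The matrix whose rows are the conjugates `σ ^ k` of a family `v`, for `k < n`. Its determinant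
for a basis `v` is a square root of the discriminant. -/
def conjugateMatrix (σ : V ≃ₐ[K] V) (n : ℕ) {ι : Type*} (v : ι → V) : Matrix (Fin n) ι V :=
  of fun k i => (σ ^ (k : ℕ)) (v i)

theorem conjugateMatrix_map {η : V ≃ₐ[K] V} (h : Commute σ η) {ι : Type*} (v : ι → V) :
    (conjugateMatrix σ n v).map η = conjugateMatrix σ n (η ∘ v) := by
  ext k i
  exact (DFunLike.congr_fun (h.pow_left k).eq (v i)).symm

theorem conjugateMatrix_submatrix_finRotate (hσ : σ ^ n = 1) {ι : Type*} (v : ι → V) :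
    (conjugateMatrix σ n v).submatrix (finRotate n) id = (conjugateMatrix σ n v).map σ := by
  ext k i
  have : NeZero n := k.neZero
  have h : σ ^ (finRotate n k : ℕ) = σ * σ ^ (k : ℕ) := by
    rw [finRotate_apply, Fin.val_add, Fin.val_one', Nat.add_mod_mod, ← pow_eq_pow_mod _ hσ,
      pow_succ']
  exact DFunLike.congr_fun h (v i)

theorem map_det_conjugateMatrix (hσ : σ ^ n = 1) (v : Fin n → V) :
    σ (conjugateMatrix σ n v).det = (-1) ^ (n - 1) * (conjugateMatrix σ n v).det := by
  rw [AlgEquiv.map_det, AlgEquiv.mapMatrix_apply, ← conjugateMatrix_submatrix_finRotate hσ,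
    det_permute, sign_finRotate]
  simp

/-- The Gram matrix of a family `v` for the form `(x, y) ↦ Tr_{V/E} (x * η y)`. -/
noncomputable def gramMatrix (E : Type*) {V : Type*} [Field E] [Field V] [Algebra E V] (η : V → V)
    {ι : Type*} (v : ι → V) : Matrix ι ι E :=
  of fun i j => Algebra.trace E V (v i * η (v j))

variable {E : Type*} [Field E] [Algebra K E] [Algebra E V] [IsScalarTower K E V]
  [FiniteDimensional E V] [IsGalois E V]

theorem map_algebraMap_trace (hσE : ∀ x, σ (algebraMap E V x) = algebraMap E V x)
    (hσ : orderOf σ = finrank E V) {η : V ≃ₐ[K] V} (h : Commute σ η) (x : V) :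
    η (algebraMap E V (Algebra.trace E V x)) = algebraMap E V (Algebra.trace E V (η x)) := by
  simp only [algebraMap_trace_eq_sum_pow hσE hσ rfl, map_sum]
  exact Finset.sum_congr rfl fun i _ => (DFunLike.congr_fun (h.pow_left i).eq x).symm

theorem transpose_map_gramMatrix (hσE : ∀ x, σ (algebraMap E V x) = algebraMap E V x)
    (hσ : orderOf σ = finrank E V) {η : V ≃ₐ[K] V} (h : Commute σ η) (hη : η * η = 1) {ι : Type*}
    (v : ι → V) :
    (((gramMatrix E η v).map (algebraMap E V)).map η)ᵀ =
      (gramMatrix E η v).map (algebraMap E V) := by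
  ext i j
  have hηη : η (η (v i)) = v i := DFunLike.congr_fun hη (v i)
  simp [gramMatrix, map_algebraMap_trace hσE hσ h, hηη, mul_comm]

theorem map_gramMatrix (hσE : ∀ x, σ (algebraMap E V x) = algebraMap E V x)
    (hσ : orderOf σ = n) (hEV : finrank E V = n) {η : V ≃ₐ[K] V} (h : Commute σ η)
    {ι : Type*} (v : ι → V) :
    (gramMatrix E η v).map (algebraMap E V) =
      (conjugateMatrix σ n v)ᵀ * (conjugateMatrix σ n v).map η := by
  rw [conjugateMatrix_map h]
  ext i j
  simp only [mul_apply, transpose_apply, conjugateMatrix, gramMatrix, of_apply, map_apply,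
    algebraMap_trace_eq_sum_pow hσE hσ hEV, map_mul, Function.comp_apply]

theorem det_conjugateMatrix_ne_zero (hσE : ∀ x, σ (algebraMap E V x) = algebraMap E V x)
    (hσ : orderOf σ = n) (hEV : finrank E V = n) (b : Basis (Fin n) E V) :
    (conjugateMatrix σ n b).det ≠ 0 := by
  intro h
  have hdet := congrArg det (map_gramMatrix hσE hσ hEV (Commute.one_right σ) b)
  rw [det_mul, det_transpose, h, zero_mul] at hdet
  refine Algebra.discr_not_zero_of_basis E b ((algebraMap E V).injective ?_)
  rw [map_zero, ← hdet, Algebra.discr_def, RingHom.map_det]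
  rfl

theorem exists_det_gramMatrix_eq (hσE : ∀ x, σ (algebraMap E V x) = algebraMap E V x)
    (hσ : orderOf σ = n) (hEV : finrank E V = n) {η : V ≃ₐ[K] V} (h : Commute σ η) {ι : Type*}
    [Fintype ι] [DecidableEq ι] (b : Basis ι E V) :
    ∃ δ : V, δ ≠ 0 ∧ σ δ = (-1) ^ (n - 1) * δ ∧
      algebraMap E V (gramMatrix E η b).det = δ * η δ := by
  let e : ι ≃ Fin n := b.indexEquiv (finBasisOfFinrankEq E V hEV)
  refine ⟨(conjugateMatrix σ n (b.reindex e)).det, det_conjugateMatrix_ne_zero hσE hσ hEV _,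
    map_det_conjugateMatrix (hσ ▸ pow_orderOf_eq_one σ) _, ?_⟩
  have hreindex : gramMatrix E η b = (gramMatrix E η (b.reindex e)).submatrix e e := by
    ext i j
    simp [gramMatrix]
  rw [hreindex, det_submatrix_equiv_self, RingHom.map_det, RingHom.mapMatrix_apply,
    map_gramMatrix hσE hσ hEV h, det_mul, det_transpose, AlgEquiv.map_det,
    AlgEquiv.mapMatrix_apply]

theorem exists_map_eq_neg_of_hasIsotropicSubspace {r : ℕ} (hr : 1 ≤ r)
    (hσE : ∀ x, σ (algebraMap E V x) = algebraMap E V x) (hσ : orderOf σ = 2 * r)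
    (hEV : finrank E V = 2 * r) {η : V ≃ₐ[K] V} (h : Commute σ η) (hη : η * η = 1)
    (hiso : HasIsotropicSubspace E η 1 r) :
    ∃ y : V, σ y = -y ∧ y * η y = (-1) ^ r := by
  obtain ⟨X, hX, hX0⟩ := hiso
  obtain ⟨b, hb⟩ := exists_basis_sum_mem hX (hEV.trans (two_mul r))
  obtain ⟨δ, hδ0, hσδ, hδ⟩ := exists_det_gramMatrix_eq hσE hσ hEV h b
  set M := (gramMatrix E η b).map (algebraMap E V) with hM
  have hM₁₁ : M.toBlocks₁₁ = 0 := by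
    ext i j
    simpa [M, gramMatrix, toBlocks₁₁] using hX0 _ (hb i) _ (hb j)
  set x := M.toBlocks₁₂.det
  have hσx : σ x = x := by
    rw [AlgEquiv.map_det]
    congr 1
    ext i j
    exact hσE _
  have hdet := det_eq_mul_map_of_toBlocks₁₁_eq_zero (η : V →+* V) (M := M)
    (transpose_map_gramMatrix hσE (hσ.trans hEV.symm) h hη b) hM₁₁
  have hδx : δ * η δ = (-1) ^ r * (x * η x) := by
    rwa [hM, ← RingHom.mapMatrix_apply, ← RingHom.map_det, hδ, Fintype.card_fin] at hdet
  have hx0 : x ≠ 0 := by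
    intro hx
    simp [hx, hδ0] at hδx
  have hηx0 : η x ≠ 0 := (map_ne_zero η).2 hx0
  refine ⟨δ / x, ?_, ?_⟩
  · have hodd : Odd (2 * r - 1) := ⟨r - 1, by omega⟩
    rw [map_div₀, hσδ, hσx, hodd.neg_one_pow, neg_one_mul, neg_div]
  · rw [map_div₀, div_mul_div_comm, hδx, mul_div_cancel_right₀ _ (mul_ne_zero hx0 hηx0)]

end GramDeterminant

section Quadratic

variable {K L V : Type*} [Field K] [Field L] [Field V] [Algebra K L] [Algebra K V] [Algebra L V]
  [IsScalarTower K L V]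

theorem eq_of_fixes_of_finrank_eq_two [FiniteDimensional L V] [IsGalois L V]
    (hLV : finrank L V = 2) {g h : V ≃ₐ[K] V} (hg1 : g ≠ 1) (hh1 : h ≠ 1)
    (hg : ∀ x, g (algebraMap L V x) = algebraMap L V x)
    (hh : ∀ x, h (algebraMap L V x) = algebraMap L V x) : g = h := by
  obtain ⟨g, rfl⟩ := exists_restrictScalarsHom_eq g hg
  obtain ⟨h, rfl⟩ := exists_restrictScalarsHom_eq h hh
  have hcard := (Nat.card_eq_two_iff' (1 : V ≃ₐ[L] V)).1
    ((IsGalois.card_aut_eq_finrank L V).trans hLV)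
  rw [hcard.unique (ne_of_apply_ne _ hg1) (ne_of_apply_ne _ hh1)]

theorem map_eq_neg_of_trace_eq_zero [Algebra.IsSeparable K V] (hKL : finrank K L = 2)
    {ρ : V ≃ₐ[K] V} (hρ : ∃ x, ρ (algebraMap L V x) ≠ algebraMap L V x) {x : L}
    (hx : Algebra.trace K L x = 0) : ρ (algebraMap L V x) = -algebraMap L V x := by
  have : Algebra.IsQuadraticExtension K L := ⟨hKL⟩
  have : Algebra.IsSeparable K L := Algebra.isSeparable_tower_bot_of_isSeparable K L V
  have : FiniteDimensional K L := .of_finrank_pos (by omega)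
  have hord : orderOf (ρ.restrictNormal L) = 2 := by
    have hcard : Nat.card (L ≃ₐ[K] L) = 2 := (IsGalois.card_aut_eq_finrank K L).trans hKL
    refine ((Nat.dvd_prime Nat.prime_two).1 (hcard ▸ orderOf_dvd_natCard _)).resolve_left
      fun h => ?_
    obtain ⟨z, hz⟩ := hρ
    rw [← AlgEquiv.restrictNormal_commutes, orderOf_eq_one_iff.1 h] at hz
    exact hz rfl
  have htrace := algebraMap_trace_eq_sum_pow (E := K) (V := L) (AlgEquiv.commutes _)
    hord hKL x
  rw [hx, map_zero, Fin.sum_univ_two] at htrace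
  rw [← AlgEquiv.restrictNormal_commutes, ← map_neg]
  congr 1
  simpa [eq_neg_iff_add_eq_zero, add_comm] using htrace.symm

theorem map_eq_neg_of_mul_fixes {F : Type*} [Field F] [Algebra K F] [Algebra F L] [Algebra F V]
    [IsScalarTower K F V] [IsScalarTower F L V] [Algebra.IsSeparable F V]
    [FiniteDimensional L V] [IsGalois L V] (hFL : finrank F L = 2) (hLV : finrank L V = 2)
    {τ ρ : V ≃ₐ[K] V} (hτ1 : τ ≠ 1) (hρ1 : ρ ≠ 1) (hτρ : τ * ρ ≠ 1)
    (hτF : ∀ x, τ (algebraMap F V x) = algebraMap F V x)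
    (hL : ∀ x, (τ * ρ) (algebraMap L V x) = algebraMap L V x) {x : L}
    (hx : Algebra.trace F L x = 0) : ρ (algebraMap L V x) = -algebraMap L V x := by
  have hρF (y : F) : ρ (algebraMap F V y) = algebraMap F V y := by
    refine τ.injective ?_
    rw [hτF, ← AlgEquiv.mul_apply, IsScalarTower.algebraMap_apply F L V, hL]
  have hρL : ∃ y, ρ (algebraMap L V y) ≠ algebraMap L V y := by
    by_contra! hρL
    exact hτ1 (mul_eq_right.1 (eq_of_fixes_of_finrank_eq_two hLV hτρ hρ1 hL hρL))
  obtain ⟨ρ, rfl⟩ := exists_restrictScalarsHom_eq ρ hρF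
  exact map_eq_neg_of_trace_eq_zero hFL hρL hx

end Quadratic

section Group

variable {G : Type*} [Group G] {a b : G}

theorem not_mem_zpowers_of_closure_pair_eq_top
    (hab : Subgroup.closure {a, b} = ⊤) (ha : orderOf a ≠ Nat.card G) :
    b ∉ Subgroup.zpowers a := by
  intro hb
  have : Subgroup.zpowers a = ⊤ := by
    rw [eq_top_iff, ← hab, Subgroup.closure_le, Set.pair_subset_iff]
    exact ⟨Subgroup.mem_zpowers a, hb⟩
  rw [← Nat.card_zpowers, this, Subgroup.card_top] at ha
  exact ha rfl

theorem orderOf_mul_pow_eq_two {r : ℕ} (h : Commute a b)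
    (ha : orderOf a = 2 * r) (hb : orderOf b = 2) (hba : b ∉ Subgroup.zpowers a) :
    orderOf (b * a ^ r) = 2 := by
  refine orderOf_eq_prime ?_ fun h1 => hba ?_
  · rw [(h.pow_left r).symm.mul_pow, ← hb, pow_orderOf_eq_one, hb, ← pow_mul, mul_comm r, ← ha,
      pow_orderOf_eq_one, one_mul]
  · rw [eq_inv_of_mul_eq_one_left h1]
    exact inv_mem (Subgroup.npow_mem_zpowers a r)

end Group

section ResidueAction

theorem pow_smul_eq_pow {G M : Type*} [Monoid G] [Monoid M] [MulDistribMulAction G M] {g : G}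
    {q : ℕ} (hg : ∀ x : M, g • x = x ^ q) (i : ℕ) (x : M) : g ^ i • x = x ^ q ^ i := by
  induction i with
  | zero => simp
  | succ i ih => rw [pow_succ', mul_smul, ih, hg, ← pow_mul, ← pow_succ]

variable {B G : Type*} [CommRing B] [IsLocalRing B] [Group G] [MulSemiringAction G B]

theorem smul_residueField_eq_self {D : Type*} [CommRing D] [IsLocalRing D] [Algebra D B]
    [IsLocalHom (algebraMap D B)] [Finite (ResidueField B)]
    (hcard : Nat.card (ResidueField D) = Nat.card (ResidueField B)) {g : G}
    (hg : ∀ d, g • algebraMap D B d = algebraMap D B d) (x : ResidueField B) : g • x = x := by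
  have hsurj : Function.Surjective (algebraMap (ResidueField D) (ResidueField B)) :=
    ((Nat.bijective_iff_injective_and_card _).2
      ⟨(algebraMap (ResidueField D) (ResidueField B)).injective, hcard⟩).2
  obtain ⟨c, rfl⟩ := hsurj x
  obtain ⟨d, rfl⟩ := residue_surjective c
  rw [ResidueField.algebraMap_residue, ← ResidueField.residue_smul, hg]

theorem smul_residueField_eq_pow {g : G} {q : ℕ}
    (hg : ∀ b : B, g • b - b ^ q ∈ maximalIdeal B) (x : ResidueField B) : g • x = x ^ q := by
  obtain ⟨b, rfl⟩ := residue_surjective x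
  rw [← ResidueField.residue_smul, ← map_pow, ← sub_eq_zero, ← map_sub, residue_eq_zero_iff]
  exact hg b

theorem two_eq_zero_of_smul_eq_neg {G B V : Type*} [CommRing B] [IsDomain B] [ValuationRing B]
    [Field V] [Algebra B V] [IsFractionRing B V] [Group G] [MulSemiringAction G B]
    [MulSemiringAction G V] [SMulDistribClass G B V] {σ τ : G}
    (hτ : ∀ x : ResidueField B, τ • x = x) {y : V} (hσy : σ • y = -y) (hτy : y * τ • y = 1) :
    (2 : ResidueField B) = 0 := by
  wlog hy : IsLocalization.IsInteger B y generalizing y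
  · refine this (y := y⁻¹) ?_ ?_ ((ValuationRing.isInteger_or_isInteger B y).resolve_left hy)
    · rw [smul_inv'', hσy, inv_neg]
    · rw [smul_inv'', ← mul_inv, hτy, inv_one]
  obtain ⟨b, rfl⟩ := hy
  have hinj := IsFractionRing.injective B V
  have hσb : σ • b = -b := hinj (by rw [algebraMap.smul', hσy, map_neg])
  have hτb : b * τ • b = 1 := hinj (by rw [map_mul, algebraMap.smul', hτy, map_one])
  have hx : residue B b * residue B b = 1 := by
    simpa only [map_mul, map_one, ResidueField.residue_smul, hτ] using congrArg (residue B) hτb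
  have hσx : residue B b = -residue B b := by
    have hfix : σ • residue B b = residue B b := by
      rcases mul_self_eq_one_iff.1 hx with h | h <;> rw [h] <;> simp only [smul_neg, smul_one]
    rw [← map_neg, ← hσb, ResidueField.residue_smul, hfix]
  linear_combination residue B b * hσx - 2 * hx

end ResidueAction

section Norm

theorem finrank_eq_of_natCard_eq_pow {k F : Type*} [Field k] [Field F] [Algebra k F] [Finite F]
    {n : ℕ} (h : Nat.card F = Nat.card k ^ n) : finrank k F = n := by
  have : Finite k := .of_injective _ (algebraMap k F).injective
  exact Nat.pow_right_injective Finite.one_lt_card (natCard_eq_pow_finrank.symm.trans h)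

theorem exists_eq_mul_sq_of_residue_eq {O : Type*} [CommRing O] [HenselianLocalRing O]
    (h2 : IsUnit (2 : O)) {u : Oˣ} {n : O} (h : residue O n = residue O u) :
    ∃ v : Oˣ, (u : O) = n * v ^ 2 := by
  have hn : IsUnit n := by
    rw [← residue_ne_zero_iff_isUnit, h, residue_ne_zero_iff_isUnit]
    exact u.isUnit
  obtain ⟨n, rfl⟩ := hn
  obtain ⟨v, hv⟩ := isSquare_of_sub_one_mem_maximalIdeal h2 (u := (n⁻¹ * u : Oˣ)) (by
    rw [← residue_eq_zero_iff, map_sub, Units.val_mul, map_mul, ← h, ← map_mul]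
    simp)
  have hvu : IsUnit v := isUnit_of_mul_isUnit_left (hv ▸ Units.isUnit _)
  obtain ⟨v, rfl⟩ := hvu
  refine ⟨v, ?_⟩
  rw [sq, ← hv, ← Units.val_mul, mul_inv_cancel_left]

variable {C L V : Type*} [CommRing C] [Field L] [Algebra C L] [Field V] [Algebra L V]

theorem exists_norm_residue_eq {B G : Type*} [CommRing B] [IsLocalRing C] [IsLocalRing B]
    [IsIntegrallyClosed C] [Algebra C B] [IsLocalHom (algebraMap C B)]
    [Algebra.IsIntegral C B] [IsFractionRing C L] [Algebra C V] [Algebra B V]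
    [IsScalarTower C L V] [IsScalarTower C B V] [FaithfulSMul B V] [Finite (ResidueField B)]
    [Group G] [MulSemiringAction G B] [MulSemiringAction G V] [SMulDistribClass G B V]
    (hk : finrank (ResidueField C) (ResidueField B) = 2) {η : G}
    (hη : ∀ x : V, algebraMap L V (Algebra.norm L x) = x * η • x)
    (hηres : ∀ x : ResidueField B, η • x = x ^ Nat.card (ResidueField C)) (x : ResidueField C) :
    ∃ (b : B) (n : C), Algebra.norm L (algebraMap B V b) = algebraMap C L n ∧ residue C n = x := by
  have : Finite (ResidueField C) :=
    .of_injective _ (algebraMap (ResidueField C) (ResidueField B)).injective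
  obtain ⟨ζ, rfl⟩ := FiniteField.norm_surjective (ResidueField C) (ResidueField B) x
  obtain ⟨b, rfl⟩ := residue_surjective ζ
  obtain ⟨n, hn : algebraMap C L n = Algebra.norm L (algebraMap B V b)⟩ :=
    IsIntegrallyClosed.isIntegral_iff.1 <| Algebra.isIntegral_norm L <|
      (Algebra.IsIntegral.isIntegral (R := C) b).map (IsScalarTower.toAlgHom C B V)
  have hnB : algebraMap C B n = b * η • b := by
    apply FaithfulSMul.algebraMap_injective B V
    rw [← IsScalarTower.algebraMap_apply, IsScalarTower.algebraMap_apply C L V, hn, map_mul,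
      algebraMap.smul', hη]
  refine ⟨b, n, hn.symm, (algebraMap (ResidueField C) (ResidueField B)).injective ?_⟩
  rw [FiniteField.algebraMap_norm_eq_pow_sum, hk, ResidueField.algebraMap_residue, hnB, map_mul,
    ResidueField.residue_smul, hηres]
  simp [Finset.sum_range_succ, pow_add]

theorem exists_norm_eq_algebraMap_unit {B G : Type*} [CommRing B] [HenselianLocalRing C]
    [IsLocalRing B] [IsIntegrallyClosed C] [Algebra C B] [IsLocalHom (algebraMap C B)]
    [Algebra.IsIntegral C B] [IsFractionRing C L] [Algebra C V] [Algebra B V]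
    [IsScalarTower C L V] [IsScalarTower C B V] [FaithfulSMul B V] [Finite (ResidueField B)]
    [Group G] [MulSemiringAction G B] [MulSemiringAction G V] [SMulDistribClass G B V]
    (h2 : IsUnit (2 : C)) (hLV : finrank L V = 2)
    (hk : finrank (ResidueField C) (ResidueField B) = 2) {η : G}
    (hη : ∀ x : V, algebraMap L V (Algebra.norm L x) = x * η • x)
    (hηres : ∀ x : ResidueField B, η • x = x ^ Nat.card (ResidueField C)) (u : Cˣ) :
    ∃ z : V, Algebra.norm L z = algebraMap C L u := by
  obtain ⟨b, n, hbn, hn⟩ := exists_norm_residue_eq hk hη hηres (residue C u)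
  obtain ⟨v, hv⟩ := exists_eq_mul_sq_of_residue_eq h2 hn
  refine ⟨algebraMap B V b * algebraMap L V (algebraMap C L v), ?_⟩
  rw [map_mul, Algebra.norm_algebraMap, hLV, hbn, hv, map_mul, map_pow]

theorem exists_norm_eq_or_exists_norm_eq_div [IsDomain C] [IsDiscreteValuationRing C]
    [IsFractionRing C L] (hLV : finrank L V = 2)
    (hunit : ∀ u : Cˣ, ∃ z : V, Algebra.norm L z = algebraMap C L u) {π : C}
    (hπ : Irreducible π) {κ : L} (hκ : κ ≠ 0) :
    ∃ z : V, Algebra.norm L z = κ ∨ Algebra.norm L z = κ / algebraMap C L π := by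
  obtain ⟨n, u, hu⟩ := IsDiscreteValuationRing.exists_units_eq_smul_zpow_of_irreducible hπ hκ
  obtain ⟨z, hz⟩ := hunit u
  have hπ0 : algebraMap C L π ≠ 0 :=
    (IsFractionRing.to_map_eq_zero_iff).not.2 hπ.ne_zero
  have hnorm (m : ℤ) : Algebra.norm L (z * algebraMap L V (algebraMap C L π ^ m)) =
      algebraMap C L u * algebraMap C L π ^ (m + m) := by
    rw [map_mul, Algebra.norm_algebraMap, hLV, hz, zpow_add₀ hπ0, sq]
  rw [Units.smul_def, Algebra.smul_def] at hu
  obtain ⟨m, rfl | rfl⟩ := Int.even_or_odd' n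
  · exact ⟨_, .inl (by rw [hnorm, hu, two_mul])⟩
  · refine ⟨_, .inr ((hnorm m).trans ?_)⟩
    rw [hu, zpow_add_one₀ hπ0, two_mul, ← mul_assoc, mul_div_cancel_right₀ _ hπ0]

end Norm

section Criterion

variable {K E V : Type*} [Field K] [Field E] [Field V] [Algebra K E] [Algebra K V] [Algebra E V]
  [IsScalarTower K E V] [FiniteDimensional E V] {σ τ : V ≃ₐ[K] V} {r : ℕ}

theorem not_hasIsotropicSubspace_one [IsGalois E V] {B : Type*} [CommRing B]
    [IsDomain B] [ValuationRing B] [Algebra B V] [IsFractionRing B V]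
    [MulSemiringAction (V ≃ₐ[K] V) B] [SMulDistribClass (V ≃ₐ[K] V) B V]
    (h2 : (2 : ResidueField B) ≠ 0) (hr : 1 ≤ r)
    (hσE : ∀ x, σ (algebraMap E V x) = algebraMap E V x) (hσ : orderOf σ = 2 * r)
    (hEV : finrank E V = 2 * r) (hστ : Commute σ τ) (hη : orderOf (τ * σ ^ r) = 2)
    (hτ : ∀ x : ResidueField B, τ • x = x) :
    ¬ HasIsotropicSubspace E ⇑(τ * σ ^ r) 1 r := by
  intro hiso
  obtain ⟨y, hσy, hy⟩ := exists_map_eq_neg_of_hasIsotropicSubspace hr hσE hσ hEV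
    (hστ.mul_right (Commute.self_pow σ r)) (by rw [← sq, ← hη, pow_orderOf_eq_one]) hiso
  have hpow (i : ℕ) : (σ ^ i) y = (-1) ^ i * y := by
    induction i with
    | zero => simp
    | succ i ih => rw [pow_succ', AlgEquiv.mul_apply, ih, map_mul, hσy]; simp [pow_succ]
  refine h2 (two_eq_zero_of_smul_eq_neg (σ := σ) hτ hσy ?_)
  rw [AlgEquiv.mul_apply, hpow, map_mul, map_pow, map_neg, map_one, mul_left_comm] at hy
  exact mul_left_cancel₀ (pow_ne_zero r (neg_ne_zero.2 one_ne_zero)) (hy.trans (mul_one _).symm)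

theorem hasIsotropicSubspace_div_iff_exists_norm_eq {L : Type*} [Field L] [Algebra K L]
    [Algebra L V] [IsScalarTower K L V] [FiniteDimensional L V] [IsGalois L V] (h2 : (2 : E) ≠ 0)
    (hr : 1 ≤ r) (hσE : ∀ x, σ (algebraMap E V x) = algebraMap E V x) (hσ : orderOf σ = 2 * r)
    (hEV : finrank E V = 2 * r) {η : V ≃ₐ[K] V} (hση : Commute σ η) (hη : orderOf η = 2)
    (hηL : ∀ x, η (algebraMap L V x) = algebraMap L V x) (hLV : finrank L V = 2)
    (hone : ¬ HasIsotropicSubspace E η 1 r) {π κ : L} (hπ0 : π ≠ 0)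
    (hπ : (σ ^ r) (algebraMap L V π) = -algebraMap L V π) (hκ : κ ≠ 0)
    (hnorm : ∃ z : V, Algebra.norm L z = κ ∨ Algebra.norm L z = κ / π) :
    HasIsotropicSubspace E η (algebraMap L V (κ / π)) r ↔
      ∃ z : V, z ≠ 0 ∧ Algebra.norm L z = κ := by
  have hN := algebraMap_norm_eq_mul hηL hη hLV
  have ne_zero {z : V} {c : L} (hc : c ≠ 0) (hz : Algebra.norm L z = c) : z ≠ 0 := by
    rintro rfl
    exact hc (hz.symm.trans Algebra.norm_zero)
  constructor
  · intro hiso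
    obtain ⟨z, hz | hz⟩ := hnorm
    · exact ⟨z, ne_zero hκ hz, hz⟩
    · refine absurd ?_ hone
      rw [← hz, hN] at hiso
      exact .of_mul (ne_zero (div_ne_zero hκ hπ0) hz) (by rwa [one_mul])
  · rintro ⟨z, hz, rfl⟩
    obtain ⟨σ, rfl⟩ := exists_restrictScalarsHom_eq σ hσE
    rw [orderOf_restrictScalarsHom] at hσ
    rw [← map_pow] at hπ
    rw [map_div₀, hN, div_eq_mul_inv, mul_comm, hasIsotropicSubspace_mul_iff hz]
    refine hasIsotropicSubspace_of_map_eq_neg h2 (ρ := σ ^ r) ?_ hEV (fun x => ?_) ?_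
    · rw [orderOf_pow_of_dvd (by omega) (hσ ▸ dvd_mul_left r 2), hσ,
        Nat.mul_div_cancel _ (by omega)]
    · have hcomm := hση.pow_left r
      rw [← map_pow] at hcomm
      exact (DFunLike.congr_fun hcomm.eq x).symm
    · rw [map_inv₀, ← inv_neg, ← hπ]
      rfl

end Criterion

section IntegralClosure

theorem isDiscreteValuationRing_of_isIntegral {R O : Type*} [CommRing R] [CommRing O]
    [IsDedekindDomain O] [IsLocalRing O] [Algebra R O] [FaithfulSMul R O] [Algebra.IsIntegral R O]
    (hR : ¬ IsField R) : IsDiscreteValuationRing O :=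
  ((IsDiscreteValuationRing.TFAE O fun h => hR <| isField_of_isIntegral_of_isField
    (FaithfulSMul.algebraMap_injective R O) h).out 2 0).1 ‹_›

section Integers

variable (R Q F : Type*) [CommRing R] [Field Q] [Field F] [Algebra R Q] [IsFractionRing R Q]
  [Algebra Q F] [Algebra R F] [IsScalarTower R Q F]

include Q

theorem faithfulSMul_integralClosure : FaithfulSMul R (integralClosure R F) :=
  have := FaithfulSMul.trans R Q F
  .tower_bot R (integralClosure R F) F

variable [IsDomain R] [IsDiscreteValuationRing R] [FiniteDimensional Q F]
  [Algebra.IsSeparable Q F] [IsLocalRing (integralClosure R F)]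

theorem isDiscreteValuationRing_integralClosure :
    IsDiscreteValuationRing (integralClosure R F) :=
  have := integralClosure.isDedekindDomain R Q F
  have := faithfulSMul_integralClosure R Q F
  isDiscreteValuationRing_of_isIntegral (IsDiscreteValuationRing.not_isField R)

theorem henselianLocalRing_integralClosure [IsAdicComplete (maximalIdeal R) R] :
    HenselianLocalRing (integralClosure R F) :=
  have := IsIntegralClosure.finite R Q F (integralClosure R F)
  have := faithfulSMul_integralClosure R Q F
  henselianLocalRing_of_finite R

theorem finite_residueField_integralClosure [Finite (ResidueField R)] :
    Finite (ResidueField (integralClosure R F)) :=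
  have := IsIntegralClosure.finite R Q F (integralClosure R F)
  have := faithfulSMul_integralClosure R Q F
  Module.finite_of_finite (ResidueField R)

end Integers

section Inclusion

variable {R F V : Type*} [CommRing R] [Field F] [Field V] [Algebra R F] [Algebra R V]
  [Algebra F V] [IsScalarTower R F V]

/-- The inclusion between the integral closures of `R` in two fields `F ⊆ V`. -/
abbrev integralClosureAlgebra : Algebra (integralClosure R F) (integralClosure R V) :=
  (IsScalarTower.toAlgHom R F V).mapIntegralClosure.toRingHom.toAlgebra

attribute [local instance] integralClosureAlgebra

theorem isScalarTower_integralClosure :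
    IsScalarTower (integralClosure R F) (integralClosure R V) V :=
  .of_algebraMap_eq fun _ => rfl

theorem isIntegral_integralClosure :
    Algebra.IsIntegral (integralClosure R F) (integralClosure R V) :=
  have : IsScalarTower R (integralClosure R F) (integralClosure R V) :=
    .of_algebraMap_eq fun x => Subtype.ext (IsScalarTower.algebraMap_apply R F V x)
  Algebra.IsIntegral.tower_top R

theorem isLocalHom_algebraMap_integralClosure :
    IsLocalHom (algebraMap (integralClosure R F) (integralClosure R V)) :=
  have := isIntegral_integralClosure (R := R) (F := F) (V := V)
  have : FaithfulSMul (integralClosure R F) (integralClosure R V) :=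
    (faithfulSMul_iff_algebraMap_injective _ _).2 fun _ _ h =>
      Subtype.ext ((algebraMap F V).injective (congrArg Subtype.val h))
  Algebra.IsIntegral.isLocalHom _ _

variable {K : Type*} [Field K] [Algebra R K] [Algebra K V] [IsScalarTower R K V]

theorem smul_residueField_integralClosure_eq_self [IsLocalRing (integralClosure R F)]
    [IsLocalRing (integralClosure R V)] [Finite (ResidueField (integralClosure R V))]
    (hcard : Nat.card (ResidueField (integralClosure R F)) =
      Nat.card (ResidueField (integralClosure R V)))
    {τ : V ≃ₐ[K] V} (hτ : ∀ x, τ (algebraMap F V x) = algebraMap F V x)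
    (x : ResidueField (integralClosure R V)) : τ • x = x :=
  have := isLocalHom_algebraMap_integralClosure (R := R) (F := F) (V := V)
  smul_residueField_eq_self hcard (fun d => Subtype.ext (hτ d)) x

theorem exists_norm_eq_or_exists_norm_eq_div_integralClosure (Q : Type*) [IsDomain R]
    [IsDiscreteValuationRing R] [IsAdicComplete (maximalIdeal R) R] [Finite (ResidueField R)]
    [Field Q] [Algebra R Q] [IsFractionRing R Q] {L : Type*} [Field L] [Algebra R L] [Algebra L V]
    [IsScalarTower R L V] [Algebra Q L] [IsScalarTower R Q L] [FiniteDimensional Q L]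
    [Algebra.IsSeparable Q L] [Algebra Q V] [IsScalarTower R Q V] [FiniteDimensional Q V]
    [Algebra.IsSeparable Q V] [IsLocalRing (integralClosure R L)]
    [IsLocalRing (integralClosure R V)] [Algebra K L] [IsScalarTower K L V]
    [FiniteDimensional L V] [IsGalois L V] (h2 : IsUnit (2 : R))
    (hLV : finrank L V = 2) (hcard : Nat.card (ResidueField (integralClosure R V)) =
      Nat.card (ResidueField (integralClosure R L)) ^ 2) {η : V ≃ₐ[K] V} (hη : orderOf η = 2)
    (hηL : ∀ x, η (algebraMap L V x) = algebraMap L V x)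
    (hηres : ∀ x : ResidueField (integralClosure R V),
      η • x = x ^ Nat.card (ResidueField (integralClosure R L)))
    {π : integralClosure R L} (hπ : Irreducible π) {κ : L} (hκ : κ ≠ 0) :
    ∃ z : V, Algebra.norm L z = κ ∨ Algebra.norm L z = κ / π := by
  have := finite_residueField_integralClosure R Q V
  have := isDiscreteValuationRing_integralClosure R Q L
  have := henselianLocalRing_integralClosure R Q L
  have := integralClosure.isFractionRing_of_finite_extension (A := R) Q L
  have := isScalarTower_integralClosure (R := R) (F := L) (V := V)
  have := isIntegral_integralClosure (R := R) (F := L) (V := V)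
  have := isLocalHom_algebraMap_integralClosure (R := R) (F := L) (V := V)
  have h2' : IsUnit (2 : integralClosure R L) :=
    map_ofNat (algebraMap R (integralClosure R L)) 2 ▸ h2.map _
  exact exists_norm_eq_or_exists_norm_eq_div hLV (exists_norm_eq_algebraMap_unit h2' hLV
    (finrank_eq_of_natCard_eq_pow hcard) (algebraMap_norm_eq_mul hηL hη hLV) hηres) hπ hκ

end Inclusion

end IntegralClosure

section Hermitian

theorem two_ne_zero_of_isUnit_two (R F : Type*) [CommRing R] [Field F] [Algebra R F]
    (h2 : IsUnit (2 : R)) : (2 : F) ≠ 0 :=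
  map_ofNat (algebraMap R F) 2 ▸ (h2.map (algebraMap R F)).ne_zero

theorem hasIsotropicSubspace_div_iff_exists_norm_eq_of_residue {R : Type*} (Q : Type*)
    [CommRing R] [IsDomain R] [IsDiscreteValuationRing R] [IsAdicComplete (maximalIdeal R) R]
    [Finite (ResidueField R)] [Field Q] [Algebra R Q] [IsFractionRing R Q] (h2 : IsUnit (2 : R))
    {K E L V : Type*} [Field K] [Field E] [Field L] [Field V] [Algebra R K] [Algebra R L]
    [Algebra R V] [Algebra Q L] [Algebra Q V] [Algebra K E] [Algebra K L] [Algebra K V]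
    [Algebra E V] [Algebra L V] [IsScalarTower R K V] [IsScalarTower R L V] [IsScalarTower R Q L]
    [IsScalarTower R Q V] [IsScalarTower K E V] [IsScalarTower K L V] [FiniteDimensional Q L]
    [Algebra.IsSeparable Q L] [FiniteDimensional Q V] [Algebra.IsSeparable Q V]
    [FiniteDimensional E V] [IsGalois E V] [FiniteDimensional L V] [IsGalois L V]
    [IsLocalRing (integralClosure R L)] [IsLocalRing (integralClosure R V)]
    {q r : ℕ} (hr : 1 ≤ r) {σ τ : V ≃ₐ[K] V}
    (hσE : ∀ x, σ (algebraMap E V x) = algebraMap E V x) (hσ : orderOf σ = 2 * r)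
    (hEV : finrank E V = 2 * r) (hστ : Commute σ τ) (hη : orderOf (τ * σ ^ r) = 2)
    (hηL : ∀ x, (τ * σ ^ r) (algebraMap L V x) = algebraMap L V x) (hLV : finrank L V = 2)
    (hqL : Nat.card (ResidueField (integralClosure R L)) = q ^ r)
    (hqV : Nat.card (ResidueField (integralClosure R V)) = q ^ (2 * r))
    (hσres : ∀ x : ResidueField (integralClosure R V), σ • x = x ^ q)
    (hτres : ∀ x : ResidueField (integralClosure R V), τ • x = x)
    {π : integralClosure R L} (hirr : Irreducible π)
    (hπ : (σ ^ r) (algebraMap L V π) = -algebraMap L V π) {κ : L} (hκ : κ ≠ 0) :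
    HasIsotropicSubspace E ⇑(τ * σ ^ r) (algebraMap L V (κ / π)) r ↔
      ∃ z : V, z ≠ 0 ∧ Algebra.norm L z = κ := by
  have := isDiscreteValuationRing_integralClosure R Q V
  have := integralClosure.isFractionRing_of_finite_extension (A := R) Q V
  have hone : ¬ HasIsotropicSubspace E ⇑(τ * σ ^ r) 1 r :=
    not_hasIsotropicSubspace_one (two_ne_zero_of_isUnit_two R
      (ResidueField (integralClosure R V)) h2) hr hσE hσ hEV hστ hη hτres
  have hηres (x : ResidueField (integralClosure R V)) : (τ * σ ^ r) • x = x ^ q ^ r := by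
    rw [mul_smul, hτres, pow_smul_eq_pow hσres]
  have h2E : (2 : E) ≠ 0 :=
    two_ne_zero_of_isUnit_two K E (.mk0 _ (two_ne_zero_of_isUnit_two R K h2))
  have hπ0 : (π : L) ≠ 0 := by simpa using hirr.ne_zero
  exact hasIsotropicSubspace_div_iff_exists_norm_eq h2E hr hσE hσ hEV
    (hστ.mul_right (Commute.self_pow σ r)) hη hηL hLV hone hπ0 hπ hκ
    (exists_norm_eq_or_exists_norm_eq_div_integralClosure Q h2 hLV
      (by rw [hqV, hqL, ← pow_mul, mul_comm]) hη hηL (by rwa [hqL]) hirr hκ)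

theorem exists_isScalarTower_finiteDimensional_isSeparable (R Q K F : Type*) [CommRing R]
    [Field Q] [Field K] [Field F] [Algebra R Q] [Algebra Q K] [Algebra R K] [Algebra K F]
    [Algebra R F] [IsScalarTower R Q K] [IsScalarTower R K F] [FiniteDimensional Q K]
    [Algebra.IsSeparable Q K] [FiniteDimensional K F] [Algebra.IsSeparable K F] :
    ∃ _ : Algebra Q F, IsScalarTower R Q F ∧ FiniteDimensional Q F ∧ Algebra.IsSeparable Q F := by
  let : Algebra Q F := ((algebraMap K F).comp (algebraMap Q K)).toAlgebra
  have : IsScalarTower Q K F := .of_algebraMap_eq' rfl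
  refine ⟨inferInstance, .of_algebraMap_eq fun x => ?_, .trans Q K F, .trans Q K F⟩
  rw [IsScalarTower.algebraMap_apply R K F, IsScalarTower.algebraMap_apply R Q K,
    IsScalarTower.algebraMap_apply Q K F]

theorem stmt_10_general {R Q : Type*} [CommRing R] [IsDomain R] [IsDiscreteValuationRing R]
    [IsAdicComplete (maximalIdeal R) R] [Finite (ResidueField R)] (h2 : IsUnit (2 : R))
    [Field Q] [Algebra R Q] [IsFractionRing R Q]
    {q r : ℕ} (hr : 1 ≤ r)
    {K E Kr Ks L Es : Type*}
    [Field K] [Field E] [Field Kr] [Field Ks] [Field L] [Field Es]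
    [Algebra Q K] [FiniteDimensional Q K] [Algebra.IsSeparable Q K]
    [Algebra R K] [Algebra R Ks] [Algebra R L] [Algebra R Es] [IsScalarTower R Q K]
    [Algebra K E] [Algebra K Kr] [Algebra K Ks] [Algebra K L] [Algebra K Es]
    [Algebra Kr Ks] [Algebra Kr L] [Algebra Kr Es]
    [Algebra E Es] [Algebra Ks Es] [Algebra L Es]
    [IsScalarTower K Kr Es] [IsScalarTower K E Es] [IsScalarTower K Ks Es] [IsScalarTower K L Es]
    [IsScalarTower Kr Ks Es] [IsScalarTower Kr L Es]
    [IsScalarTower R K Ks] [IsScalarTower R K L] [IsScalarTower R K Es]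
    [IsLocalRing (integralClosure R Ks)] [IsLocalRing (integralClosure R L)]
    [IsLocalRing (integralClosure R Es)]
    (hKrL : finrank Kr L = 2) (hLEs : finrank L Es = 2) (hEEs : finrank E Es = 2 * r)
    (hKEs : finrank K Es = 2 * (2 * r))
    (hqKs : Nat.card (ResidueField (integralClosure R Ks)) = q ^ (2 * r))
    (hqL : Nat.card (ResidueField (integralClosure R L)) = q ^ r)
    (hqEs : Nat.card (ResidueField (integralClosure R Es)) = q ^ (2 * r))
    [IsGalois K Es] {σ τ : Es ≃ₐ[K] Es}
    (hσord : orderOf σ = 2 * r) (hτord : orderOf τ = 2) (hcomm : σ * τ = τ * σ)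
    (hgen : Subgroup.closure ({σ, τ} : Set (Es ≃ₐ[K] Es)) = ⊤)
    (hσE : ∀ x : E, σ (algebraMap E Es x) = algebraMap E Es x)
    (hτKs : ∀ x : Ks, τ (algebraMap Ks Es x) = algebraMap Ks Es x)
    (hσint : ∀ x ∈ integralClosure R Es, σ x ∈ integralClosure R Es)
    (hσfrob : ∀ x : integralClosure R Es,
      ((⟨σ (x : Es), hσint (x : Es) x.2⟩ : integralClosure R Es) - x ^ q) ∈
        maximalIdeal (integralClosure R Es))
    (hL : ∀ x : Es, (τ * σ ^ r) x = x ↔ x ∈ Set.range (algebraMap L Es))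
    {πL : L} (hπLmem : πL ∈ integralClosure R L)
    (hπL : maximalIdeal (integralClosure R L) =
      Ideal.span {(⟨πL, hπLmem⟩ : integralClosure R L)})
    (hπLtr : Algebra.trace Kr L πL = 0) {κ : L} (hκ : κ ≠ 0) :
    (∃ X : Submodule E Es, finrank E X = r ∧
        ∀ x ∈ X, ∀ y ∈ X,
          Algebra.trace E Es (algebraMap L Es (κ / πL) * x * (τ * σ ^ r) y) = 0) ↔
      ∃ z : Es, z ≠ 0 ∧ Algebra.norm L z = κ := by
  have : FiniteDimensional K Es := .of_finrank_pos (by omega)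
  have : FiniteDimensional K L := .of_injective
    (IsScalarTower.toAlgHom K L Es).toLinearMap (algebraMap L Es).injective
  have : FiniteDimensional E Es := .of_finrank_pos (by omega)
  have : FiniteDimensional L Es := .of_finrank_pos (by omega)
  have : IsGalois E Es := .tower_top_of_isGalois K E Es
  have : IsGalois L Es := .tower_top_of_isGalois K L Es
  have : IsGalois Kr Es := .tower_top_of_isGalois K Kr Es
  have : Algebra.IsSeparable K L := Algebra.isSeparable_tower_bot_of_isSeparable K L Es
  have : IsScalarTower R L Es := .to₁₃₄ R K L Es
  have : IsScalarTower R Ks Es := .to₁₃₄ R K Ks Es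
  obtain ⟨_, _, _, _⟩ := exists_isScalarTower_finiteDimensional_isSeparable R Q K L
  obtain ⟨_, _, _, _⟩ := exists_isScalarTower_finiteDimensional_isSeparable R Q K Es
  have := finite_residueField_integralClosure R Q Es
  have := isDiscreteValuationRing_integralClosure R Q L
  have hτσ : τ ∉ Subgroup.zpowers σ := not_mem_zpowers_of_closure_pair_eq_top hgen (by
    rw [IsGalois.card_aut_eq_finrank, hσord, hKEs]; omega)
  have hη : orderOf (τ * σ ^ r) = 2 := orderOf_mul_pow_eq_two hcomm hσord hτord hτσ
  have hηL (x : L) : (τ * σ ^ r) (algebraMap L Es x) = algebraMap L Es x := (hL _).2 ⟨x, rfl⟩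
  have hπ : (σ ^ r) (algebraMap L Es πL) = -algebraMap L Es πL :=
    map_eq_neg_of_mul_fixes hKrL hLEs (mt orderOf_eq_one_iff.2 (by omega))
      (pow_ne_one_of_lt_orderOf (by omega) (by omega)) (mt orderOf_eq_one_iff.2 (by omega))
      (fun x => by rw [IsScalarTower.algebraMap_apply Kr Ks Es, hτKs]) hηL hπLtr
  exact hasIsotropicSubspace_div_iff_exists_norm_eq_of_residue Q h2 hr hσE hσord hEEs hcomm hη hηL
    hLEs hqL hqEs (smul_residueField_eq_pow hσfrob)
    (smul_residueField_integralClosure_eq_self (hqKs.trans hqEs.symm) hτKs)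
    ((IsDiscreteValuationRing.irreducible_iff_uniformizer _).2 hπL) hπ hκ

end Hermitian

section PadicInt

variable {p : ℕ} [Fact p.Prime]

theorem isUnit_two_padicInt (hp : p ≠ 2) : IsUnit (2 : ℤ_[p]) := by
  have hcop : p.Coprime 2 := (Nat.coprime_primes Fact.out Nat.prime_two).2 hp
  rw [PadicInt.isUnit_iff]
  exact_mod_cast PadicInt.norm_natCast_eq_one_iff.2 hcop

variable (p) in
theorem finite_residueField_padicInt : Finite (ResidueField ℤ_[p]) :=
  .of_equiv _ PadicInt.residueField.symm.toEquiv

end PadicInt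

end Development

/-- Let `p` be an odd prime, `K/ℚ_p` finite with residue cardinality `q`,
`E/K` totally ramified quadratic, `K_s/K` unramified of degree `s = 2r`, `E_s = E·K_s`, with
`Gal(E_s/K) ≅ ℤ/s × ℤ/2` generated by the Frobenius lift `σ` (fixing `E`, inducing `x ↦ x^q`
on the residue field) and `τ` (nontrivial, fixing `K_s`).  Let `L` be the fixed field of
`η = τσ^r` (a ramified quadratic extension of the unramified subfield `K_r`), `π_L` a
uniformizer of `L` with `Tr_{L/K_r}(π_L) = 0`, and `κ ∈ L^×`.  Then the Hermitian form
`φ_κ(x, y) = Tr_{E_s/E}((κ/π_L)·x·η(y))` on the `s`-dimensional `E`-vector space `E_s` admits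
a totally isotropic `E`-subspace of dimension `r` if and only if `κ ∈ Nm_{E_s/L}(E_s^×)`. -/
theorem stmt_10 (p : ℕ) [Fact p.Prime] (hp : p ≠ 2)
    (q r s : ℕ) (hr : 1 ≤ r) (hs : s = 2 * r)
    (K E Kr Ks L Es : Type*)
    [Field K] [Field E] [Field Kr] [Field Ks] [Field L] [Field Es]
    -- p-adic structure on all the fields, with `K/ℚ_p` finite
    [Algebra ℚ_[p] K] [FiniteDimensional ℚ_[p] K]
    [Algebra ℤ_[p] K] [Algebra ℤ_[p] E] [Algebra ℤ_[p] Kr] [Algebra ℤ_[p] Ks]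
    [Algebra ℤ_[p] L] [Algebra ℤ_[p] Es]
    [IsScalarTower ℤ_[p] ℚ_[p] K]
    -- the lattice of fields K ⊆ E, Kr, Ks, L ⊆ Es
    [Algebra K E] [Algebra K Kr] [Algebra K Ks] [Algebra K L] [Algebra K Es]
    [Algebra Kr Ks] [Algebra Kr L] [Algebra Kr Es]
    [Algebra E Es] [Algebra Ks Es] [Algebra L Es]
    [IsScalarTower K Kr Ks] [IsScalarTower K Kr L] [IsScalarTower K Kr Es]
    [IsScalarTower K E Es] [IsScalarTower K Ks Es] [IsScalarTower K L Es]
    [IsScalarTower Kr Ks Es] [IsScalarTower Kr L Es]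
    [IsScalarTower ℤ_[p] K E] [IsScalarTower ℤ_[p] K Kr] [IsScalarTower ℤ_[p] K Ks]
    [IsScalarTower ℤ_[p] K L] [IsScalarTower ℤ_[p] K Es]
    -- the rings of integers are local rings
    [IsLocalRing (integralClosure ℤ_[p] K)] [IsLocalRing (integralClosure ℤ_[p] E)]
    [IsLocalRing (integralClosure ℤ_[p] Kr)] [IsLocalRing (integralClosure ℤ_[p] Ks)]
    [IsLocalRing (integralClosure ℤ_[p] L)] [IsLocalRing (integralClosure ℤ_[p] Es)]
    -- degrees of the extensions
    (hKE : Module.finrank K E = 2) (hKKr : Module.finrank K Kr = r)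
    (hKKs : Module.finrank K Ks = s) (hKrL : Module.finrank Kr L = 2)
    (hLEs : Module.finrank L Es = 2) (hEEs : Module.finrank E Es = s)
    (hKEs : Module.finrank K Es = 2 * s)
    -- residue cardinalities: `E/K` totally ramified, `Kr, Ks` unramified over `K`,
    -- `L/Kr` ramified quadratic
    (hqK : Nat.card (ResidueField (integralClosure ℤ_[p] K)) = q)
    (hqE : Nat.card (ResidueField (integralClosure ℤ_[p] E)) = q)
    (hqKr : Nat.card (ResidueField (integralClosure ℤ_[p] Kr)) = q ^ r)
    (hqKs : Nat.card (ResidueField (integralClosure ℤ_[p] Ks)) = q ^ s)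
    (hqL : Nat.card (ResidueField (integralClosure ℤ_[p] L)) = q ^ r)
    (hqEs : Nat.card (ResidueField (integralClosure ℤ_[p] Es)) = q ^ s)
    -- `Es` is the compositum `E · Ks`
    (hcomp : (IsScalarTower.toAlgHom K E Es).range ⊔ (IsScalarTower.toAlgHom K Ks Es).range
      = ⊤)
    -- Galois structure: `Gal(Es/K) = ⟨σ⟩ × ⟨τ⟩ ≅ ℤ/s × ℤ/2`
    [IsGalois K Es]
    (σ τ : Es ≃ₐ[K] Es)
    (hσord : orderOf σ = s) (hτord : orderOf τ = 2) (hcomm : σ * τ = τ * σ)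
    (hgen : Subgroup.closure ({σ, τ} : Set (Es ≃ₐ[K] Es)) = ⊤)
    (hσE : ∀ x : E, σ (algebraMap E Es x) = algebraMap E Es x)
    (hτKs : ∀ x : Ks, τ (algebraMap Ks Es x) = algebraMap Ks Es x)
    -- `σ` induces the `q`-power Frobenius on the residue field
    (hσint : ∀ x ∈ integralClosure ℤ_[p] Es, σ x ∈ integralClosure ℤ_[p] Es)
    (hσfrob : ∀ x : integralClosure ℤ_[p] Es,
      ((⟨σ (x : Es), hσint (x : Es) x.2⟩ : integralClosure ℤ_[p] Es) - x ^ q) ∈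
        maximalIdeal (integralClosure ℤ_[p] Es))
    -- `L` is the fixed field of `η = τ σ^r`
    (hL : ∀ x : Es, (τ * σ ^ r) x = x ↔ x ∈ Set.range (algebraMap L Es))
    -- a uniformizer `π_L` of `L` with `Tr_{L/Kr}(π_L) = 0`
    (πL : L) (hπLmem : πL ∈ integralClosure ℤ_[p] L)
    (hπL : maximalIdeal (integralClosure ℤ_[p] L) =
      Ideal.span {(⟨πL, hπLmem⟩ : integralClosure ℤ_[p] L)})
    (hπLtr : Algebra.trace Kr L πL = 0)
    (κ : L) (hκ : κ ≠ 0) :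
    (∃ X : Submodule E Es, Module.finrank E ↥X = r ∧
        ∀ x ∈ X, ∀ y ∈ X,
          Algebra.trace E Es (algebraMap L Es (κ / πL) * x * (τ * σ ^ r) y) = 0) ↔
      ∃ z : Es, z ≠ 0 ∧ Algebra.norm L z = κ := by
  subst hs
  have := finite_residueField_padicInt p
  exact stmt_10_general (Q := ℚ_[p]) (isUnit_two_padicInt hp) hr hKrL hLEs hEEs hKEs hqKs hqL hqEs
    hσord hτord hcomm hgen hσE hτKs hσint hσfrob hL hπLmem hπL hπLtr hκ
end

section
/- Let p be a prime, E a finite extension of ℚ_p with residue field of cardinality q, and M/E an unramified extension of degree 2r (r ≥ 1), so the residue field of M has cardinality q^{2r}. Then the O_E-submodule of O_M generated by the set μ = {α ∈ M : α^{q^r+1} = 1} of roots of unity of order dividing q^r + 1 is all of O_M. -/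
open IsLocalRing

/-!
Let `A` and `B` be the rings of integers of `E` and `M`. Since `B` is free of rank `2 * r` over `A`,
the rings `B / 𝔪_A B` and `B / 𝔪_B` have the same cardinality, so `𝔪_A B = 𝔪_B`, and by Nakayama's
lemma it is enough to generate the residue field of `B`. As `B` is finite over a complete local
ring it is Henselian, so the `(q ^ r + 1)`-th roots of unity of the residue field, of which there
are `q ^ r + 1`, all lift to `B`. Their span in the residue field is closed under multiplication,
hence a subfield with more than `q ^ r` elements; in a field with `q ^ (2 * r)` elements only the
whole field is that large.
-/

section RootsOfUnity

theorem toSubmodule_adjoin_setOf_pow_eq_one (R A : Type*) [CommSemiring R] [CommSemiring A]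
    [Algebra R A] (N : ℕ) :
    Subalgebra.toSubmodule (Algebra.adjoin R {x : A | x ^ N = 1}) =
      Submodule.span R {x : A | x ^ N = 1} := by
  have hmker : {x : A | x ^ N = 1} = MonoidHom.mker (powMonoidHom N : A →* A) := rfl
  rw [Algebra.adjoin_eq_span, hmker, Submonoid.closure_eq]

variable {F K : Type*} [Field F] [Field K] [Finite K] {N : ℕ}

theorem exists_isPrimitiveRoot_of_dvd_natCard_sub_one (hN : N ∣ Nat.card K - 1) :
    ∃ ζ : K, IsPrimitiveRoot ζ N := by
  obtain ⟨g, hg⟩ := IsCyclic.exists_ofOrder_eq_natCard (α := Kˣ)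
  obtain ⟨m, hm⟩ := hN
  rw [← Nat.card_units, mul_comm] at hm
  have hprim : IsPrimitiveRoot g (Nat.card Kˣ) := hg ▸ IsPrimitiveRoot.orderOf g
  exact ⟨(g ^ m : Kˣ), IsPrimitiveRoot.coe_units_iff.2 (hprim.pow Nat.card_pos hm)⟩

theorem natCast_ne_zero_of_dvd_natCard_sub_one (hN : N ∣ Nat.card K - 1) : (N : K) ≠ 0 := by
  obtain ⟨m, hm⟩ := hN
  have hcard : Nat.card K = N * m + 1 := by
    have := Finite.card_pos (α := K)
    omega
  have := Fintype.ofFinite K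
  have hzero := FiniteField.cast_card_eq_zero K
  rw [← Nat.card_eq_fintype_card, hcard] at hzero
  intro hN0
  simp [hN0] at hzero

theorem lt_natCard_of_isPrimitiveRoot {ζ : K} (hζ : IsPrimitiveRoot ζ N) : N < Nat.card K := by
  rcases eq_or_ne N 0 with rfl | hN
  · exact Nat.card_pos
  · have := NeZero.mk hN
    rw [← hζ.card_rootsOfUnity]
    exact (Subgroup.card_le_card_group _).trans_lt
      (Nat.card_units K ▸ Nat.sub_lt Nat.card_pos one_pos)

theorem eq_top_of_natCard_lt_natCard_sq [Algebra F K] {L : IntermediateField F K}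
    (hL : Nat.card K < Nat.card L ^ 2) : L = ⊤ := by
  rw [Module.natCard_eq_pow_finrank (K := L), Nat.pow_lt_pow_iff_right Finite.one_lt_card] at hL
  have hpos : 0 < Module.finrank L K := Module.finrank_pos
  exact IntermediateField.finrank_eq_one_iff_eq_top.1 (by omega)

theorem span_setOf_pow_eq_one_eq_top [Algebra F K] (hN : N ∣ Nat.card K - 1)
    (hK : Nat.card K < (N + 1) ^ 2) : Submodule.span F {x : K | x ^ N = 1} = ⊤ := by
  obtain ⟨ζ, hζ⟩ := exists_isPrimitiveRoot_of_dvd_natCard_sub_one hN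
  let L := IntermediateField.adjoin F {x : K | x ^ N = 1}
  have hζL : ζ ∈ L := IntermediateField.subset_adjoin F _ hζ.pow_eq_one
  have hcard : N < Nat.card L :=
    lt_natCard_of_isPrimitiveRoot (ζ := (⟨ζ, hζL⟩ : L))
      (IsPrimitiveRoot.coe_submonoidClass_iff.1 hζ)
  have hL : L = ⊤ := eq_top_of_natCard_lt_natCard_sq (hK.trans_le (Nat.pow_le_pow_left hcard 2))
  rw [← toSubmodule_adjoin_setOf_pow_eq_one, ← IntermediateField.adjoin_toSubalgebra]
  exact (congrArg (Subalgebra.toSubmodule ·.toSubalgebra) hL).trans Algebra.top_toSubmodule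

end RootsOfUnity

theorem isPrecomplete_of_moduleFinite {R M : Type*} [CommRing R] (I : Ideal R) [IsPrecomplete I R]
    [AddCommGroup M] [Module R M] [Module.Finite R M] : IsPrecomplete I M := by
  rw [← AdicCompletion.of_surjective_iff]
  intro y
  obtain ⟨t, rfl⟩ := AdicCompletion.ofTensorProduct_surjective_of_finite I M y
  induction t with
  | zero => exact ⟨0, by simp⟩
  | add a b ha hb =>
    obtain ⟨x, hx⟩ := ha
    obtain ⟨y, hy⟩ := hb
    exact ⟨x + y, by simp [hx, hy]⟩
  | tmul a m =>
    obtain ⟨c, rfl⟩ := AdicCompletion.of_surjective I R a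
    exact ⟨c • m, by rw [AdicCompletion.ofTensorProduct_tmul, map_smul]; rfl⟩

theorem isAdicComplete_of_le_of_pow_le {R M : Type*} [CommRing R] {I J : Ideal R} [AddCommGroup M]
    [Module R M] [IsAdicComplete I M] (hIJ : I ≤ J) {k : ℕ} (hJI : J ^ k ≤ I) :
    IsAdicComplete J M := by
  have hpow (n : ℕ) : J ^ ((k + 1) * n) ≤ I ^ n :=
    (pow_mul J _ n).trans_le (Ideal.pow_right_mono ((Ideal.pow_le_pow_right k.le_succ).trans hJI) n)
  refine { haus' := fun x hx ↦ IsHausdorff.haus ‹IsAdicComplete I M›.toIsHausdorff x fun n ↦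
    (hx ((k + 1) * n)).mono (Submodule.smul_mono_left (hpow n)), prec' := fun f hf ↦ ?_ }
  obtain ⟨L, hL⟩ := IsPrecomplete.prec ‹IsAdicComplete I M›.toIsPrecomplete
    (f := fun n ↦ f ((k + 1) * n)) fun {m n} hmn ↦
      (hf (Nat.mul_le_mul_left _ hmn)).mono (Submodule.smul_mono_left (hpow m))
  exact ⟨L, fun n ↦ (hf (Nat.le_mul_of_pos_left n k.succ_pos)).trans
    ((hL n).mono (Submodule.smul_mono_left (Ideal.pow_right_mono hIJ n)))⟩

theorem exists_pow_eq_one_and_residue_eq {R : Type*} [CommRing R] [HenselianLocalRing R] {N : ℕ}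
    (hN : (N : ResidueField R) ≠ 0) {y : ResidueField R} (hy : y ^ N = 1) :
    ∃ z : R, z ^ N = 1 ∧ residue R z = y := by
  have hN0 : N ≠ 0 := by rintro rfl; simp at hN
  have hy0 : y ≠ 0 := by rintro rfl; simp [hN0] at hy
  obtain ⟨z, hz, hzy⟩ := ((HenselianLocalRing.TFAE R).out 0 1 rfl rfl).1 ‹_›
    (Polynomial.X ^ N - 1) (Polynomial.monic_X_pow_sub_C 1 hN0) y (by simp [hy])
    (by simp [Polynomial.derivative_X_pow, hN, hy0])
  exact ⟨z, by simpa [sub_eq_zero] using hz, hzy⟩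

section Local

variable {A B : Type*} [CommRing A] [IsLocalRing A] [CommRing B] [Algebra A B]

theorem isLocalHom_algebraMap_of_isIntegral [IsLocalRing B] [Algebra.IsIntegral A B] :
    IsLocalHom (algebraMap A B) :=
  ((local_hom_TFAE _).out 0 4).2
    (eq_maximalIdeal (Ideal.isMaximal_comap_of_isIntegral_of_isMaximal (maximalIdeal B)))

theorem map_maximalIdeal_le_of_isIntegral [IsLocalRing B] [Algebra.IsIntegral A B] :
    (maximalIdeal A).map (algebraMap A B) ≤ maximalIdeal B :=
  ((local_hom_TFAE _).out 0 2).1 isLocalHom_algebraMap_of_isIntegral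

theorem henselianLocalRing_of_moduleFinite [IsNoetherianRing A] [IsAdicComplete (maximalIdeal A) A]
    [IsLocalRing B] [Module.Finite A B] : HenselianLocalRing B := by
  let I := (maximalIdeal A).map (algebraMap A B)
  have hI : I ≤ maximalIdeal B := map_maximalIdeal_le_of_isIntegral
  let : Field (A ⧸ maximalIdeal A) := Ideal.Quotient.field _
  have : Module.Finite (A ⧸ maximalIdeal A) (B ⧸ I) := .of_restrictScalars_finite A _ _
  have : IsArtinianRing (B ⧸ I) := .of_finite (A ⧸ maximalIdeal A) _
  obtain ⟨k, hk⟩ := exists_maximalIdeal_pow_le_of_isArtinianRing_quotient I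
  have : IsPrecomplete (maximalIdeal A) B := isPrecomplete_of_moduleFinite _
  have : IsAdicComplete I B := (IsAdicComplete.map_algebraMap_iff _ _).2 { }
  have := isAdicComplete_of_le_of_pow_le (M := B) hI hk
  exact { is_henselian := fun f hf b hb hb' ↦ HenselianRing.is_henselian f hf b hb (hb'.map _) }

variable [IsLocalRing B] [Module.Finite A B]

theorem map_maximalIdeal_eq_of_natCard_residueField [Module.Free A B] [Finite (ResidueField A)]
    (h : Nat.card (ResidueField B) = Nat.card (ResidueField A) ^ Module.finrank A B) :
    (maximalIdeal A).map (algebraMap A B) = maximalIdeal B := by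
  have hle : (maximalIdeal A).map (algebraMap A B) ≤ maximalIdeal B :=
    map_maximalIdeal_le_of_isIntegral
  let : Field (A ⧸ maximalIdeal A) := Ideal.Quotient.field _
  have : Finite (A ⧸ maximalIdeal A) := ‹Finite (ResidueField A)›
  have : Module.Finite (A ⧸ maximalIdeal A) (B ⧸ (maximalIdeal A).map (algebraMap A B)) :=
    .of_restrictScalars_finite A _ _
  have : Finite (B ⧸ (maximalIdeal A).map (algebraMap A B)) :=
    Module.finite_of_finite (A ⧸ maximalIdeal A)
  have hcard : Nat.card (B ⧸ (maximalIdeal A).map (algebraMap A B)) =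
      Nat.card (B ⧸ maximalIdeal B) := by
    rw [Module.natCard_eq_pow_finrank (K := A ⧸ maximalIdeal A), finrank_quotient_map]
    exact h.symm
  have hinj := ((Ideal.Quotient.factor_surjective hle).bijective_of_nat_card_le hcard.le).injective
  refine hle.antisymm fun x hx ↦ ?_
  rw [← Ideal.Quotient.eq_zero_iff_mem] at hx ⊢
  exact hinj (by simpa using hx)

theorem span_eq_top_of_span_residue_image_eq_top [IsLocalHom (algebraMap A B)]
    (hmap : (maximalIdeal A).map (algebraMap A B) = maximalIdeal B) {s : Set B}
    (hs : Submodule.span (ResidueField A) (residue B '' s) = ⊤) : Submodule.span A s = ⊤ := by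
  let f : B →ₗ[A] ResidueField B := (IsScalarTower.toAlgHom A B (ResidueField B)).toLinearMap
  have hker : LinearMap.ker f = maximalIdeal A • ⊤ := by
    rw [Ideal.smul_top_eq_map, hmap]
    ext b
    exact residue_eq_zero_iff b
  have hspan : (Submodule.span A s).map f = ⊤ := by
    rw [Submodule.map_span, ← Submodule.restrictScalars_span A (ResidueField A) residue_surjective]
    exact congrArg (Submodule.restrictScalars A) hs
  rw [LinearMap.map_eq_top_iff (LinearMap.range_eq_top.2 residue_surjective), hker] at hspan
  exact top_le_iff.1 (Submodule.le_of_le_smul_of_le_jacobson_bot Module.Finite.fg_top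
    (maximalIdeal_le_jacobson ⊥) hspan.ge)

end Local

theorem span_setOf_pow_eq_one_eq_top_of_map_maximalIdeal_eq {A B : Type*} [CommRing A]
    [IsLocalRing A] [CommRing B] [Algebra A B] [HenselianLocalRing B] [Module.Finite A B]
    [Finite (ResidueField B)]
    (hmap : (maximalIdeal A).map (algebraMap A B) = maximalIdeal B) {N : ℕ}
    (hN : N ∣ Nat.card (ResidueField B) - 1) (hB : Nat.card (ResidueField B) < (N + 1) ^ 2) :
    Submodule.span A {x : B | x ^ N = 1} = ⊤ := by
  have : IsLocalHom (algebraMap A B) := isLocalHom_algebraMap_of_isIntegral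
  have himage : residue B '' {x : B | x ^ N = 1} = {y : ResidueField B | y ^ N = 1} := by
    refine Set.Subset.antisymm ?_ fun y hy ↦
      exists_pow_eq_one_and_residue_eq (natCast_ne_zero_of_dvd_natCard_sub_one hN) hy
    rintro _ ⟨z, hz : z ^ N = 1, rfl⟩
    exact (map_pow _ _ _).symm.trans (hz ▸ map_one _)
  refine span_eq_top_of_span_residue_image_eq_top hmap ?_
  rw [himage, span_setOf_pow_eq_one_eq_top hN hB]

theorem span_setOf_pow_eq_one_eq_top_of_finrank_eq {A B : Type*} [CommRing A] [IsLocalRing A]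
    [CommRing B] [Algebra A B] [HenselianLocalRing B] [Module.Finite A B] [Module.Free A B]
    [Finite (ResidueField A)] {r : ℕ} (hAB : Module.finrank A B = 2 * r)
    (hB : Nat.card (ResidueField B) = Nat.card (ResidueField A) ^ (2 * r)) :
    Submodule.span A {x : B | x ^ (Nat.card (ResidueField A) ^ r + 1) = 1} = ⊤ := by
  have hpos : 0 < Nat.card (ResidueField B) := hB ▸ pow_pos Nat.card_pos _
  have : Finite (ResidueField B) := Nat.finite_of_card_ne_zero hpos.ne'
  rw [mul_comm, pow_mul] at hB
  refine span_setOf_pow_eq_one_eq_top_of_map_maximalIdeal_eq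
    (map_maximalIdeal_eq_of_natCard_residueField ?_) ?_ ?_
  · rw [hB, hAB, mul_comm, pow_mul]
  · rw [hB, ← one_pow 2, Nat.sq_sub_sq]
    exact dvd_mul_right _ _
  · rw [hB]
    gcongr
    omega

theorem algebraMap_image_setOf_pow_eq_one (R : Type*) {B M : Type*} [CommRing R] [CommRing B]
    [CommRing M] [Algebra R M] [Algebra B M] [IsIntegralClosure B R M] {N : ℕ} (hN : 0 < N) :
    algebraMap B M '' {x | x ^ N = 1} = {x : M | x ^ N = 1} := by
  refine Set.Subset.antisymm ?_ fun x (hx : x ^ N = 1) ↦ ?_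
  · rintro _ ⟨y, hy : y ^ N = 1, rfl⟩
    exact (map_pow _ _ _).symm.trans (hy ▸ map_one _)
  · have hint : IsIntegral R x := .of_pow hN (hx ▸ isIntegral_one)
    obtain ⟨y, rfl⟩ := IsIntegralClosure.isIntegral_iff (A := B).1 hint
    rw [← map_pow, map_eq_one_iff _ (IsIntegralClosure.algebraMap_injective B R M)] at hx
    exact ⟨y, hx, rfl⟩

theorem span_setOf_pow_eq_one_eq_range_of_finrank_eq {A E M : Type*} (B : Type*) [CommRing A]
    [IsDomain A] [IsPrincipalIdealRing A] [IsLocalRing A] [Finite (ResidueField A)]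
    [Field E] [Algebra A E] [IsFractionRing A E]
    [Field M] [Algebra E M] [FiniteDimensional E M] [Algebra.IsSeparable E M]
    [Algebra A M] [IsScalarTower A E M]
    [CommRing B] [HenselianLocalRing B] [Algebra A B] [Algebra B M] [IsScalarTower A B M]
    [IsIntegralClosure B A M]
    {r : ℕ} (hEM : Module.finrank E M = 2 * r)
    (hB : Nat.card (ResidueField B) = Nat.card (ResidueField A) ^ (2 * r)) :
    Submodule.span A {x : M | x ^ (Nat.card (ResidueField A) ^ r + 1) = 1} =
      LinearMap.range (IsScalarTower.toAlgHom A B M).toLinearMap := by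
  have : Module.Finite A B := IsIntegralClosure.finite A E M B
  have : Module.IsTorsionFree A M := .trans_faithfulSMul A E M
  have : Module.Free A B := IsIntegralClosure.module_free A E M B
  have hAB : Module.finrank A B = 2 * r := (IsIntegralClosure.rank A E M B).trans hEM
  rw [← algebraMap_image_setOf_pow_eq_one A (B := B) (Nat.succ_pos _), ← Submodule.map_top,
    ← span_setOf_pow_eq_one_eq_top_of_finrank_eq hAB hB, Submodule.map_span]
  rfl

theorem stmt_13_general {R K E M : Type*} [CommRing R] [IsDomain R] [IsDiscreteValuationRing R]
    [IsAdicComplete (maximalIdeal R) R] [Finite (ResidueField R)]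
    [Field K] [Algebra R K] [IsFractionRing R K]
    [Field E] [Algebra K E] [FiniteDimensional K E] [Algebra.IsSeparable K E]
    [Algebra R E] [IsScalarTower R K E]
    [Field M] [Algebra E M] [Algebra.IsSeparable E M] [Algebra R M] [IsScalarTower R E M]
    [IsLocalRing (integralClosure R E)] [IsLocalRing (integralClosure R M)]
    {q r : ℕ} (hr : 1 ≤ r) (hEM : Module.finrank E M = 2 * r)
    (hqE : Nat.card (ResidueField (integralClosure R E)) = q)
    (hqM : Nat.card (ResidueField (integralClosure R M)) = q ^ (2 * r)) (z : M) :
    z ∈ Submodule.span (integralClosure R E) {x : M | x ^ (q ^ r + 1) = 1} ↔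
      z ∈ integralClosure R M := by
  subst hqE
  have : FiniteDimensional E M := Module.finite_of_finrank_pos (by omega)
  set A := integralClosure R E
  set B := integralClosure R M
  have : Module.Finite R A := IsIntegralClosure.finite R K E A
  have : IsDedekindDomain A := integralClosure.isDedekindDomain R K E
  have : IsFractionRing A E := IsIntegralClosure.isFractionRing_of_finite_extension R K E A
  have : IsLocalHom (algebraMap R A) := isLocalHom_algebraMap_of_isIntegral
  have : Finite (ResidueField A) := ResidueField.finite_of_finite (R := R) ‹_›
  have hmem (a : A) : algebraMap A M a ∈ B := (Algebra.IsIntegral.isIntegral (R := R) a).algebraMap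
  let : Algebra A B := ((algebraMap A M).codRestrict B hmem).toAlgebra
  have : IsScalarTower A B M := .of_algebraMap_eq fun _ ↦ rfl
  have : IsScalarTower R A B := .of_algebraMap_eq fun x ↦
    Subtype.ext (IsScalarTower.algebraMap_apply R A M x)
  have : IsIntegralClosure B A M := .tower_top (R := R)
  have : Module.Finite A B := IsIntegralClosure.finite A E M B
  have : Module.Finite R B := .trans A B
  have : HenselianLocalRing B := henselianLocalRing_of_moduleFinite (A := R)
  rw [span_setOf_pow_eq_one_eq_range_of_finrank_eq B hEM hqM]
  simp

/-- Let `E` be a finite extension of `ℚ_p` with residue cardinality `q`,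
and `M/E` unramified of degree `2r` (so the residue field of `M` has cardinality `q^{2r}`).
Then the `O_E`-submodule of `O_M` generated by the roots of unity of order dividing
`q^r + 1` is all of `O_M`. -/
theorem stmt_13 (p q r : ℕ) [Fact p.Prime] (hr : 1 ≤ r)
    {E M : Type*} [Field E] [Field M]
    [Algebra ℚ_[p] E] [FiniteDimensional ℚ_[p] E]
    [Algebra ℚ_[p] M] [FiniteDimensional ℚ_[p] M]
    [Algebra ℤ_[p] E] [IsScalarTower ℤ_[p] ℚ_[p] E]
    [Algebra ℤ_[p] M] [IsScalarTower ℤ_[p] ℚ_[p] M]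
    [Algebra E M] [IsScalarTower ℚ_[p] E M] [IsScalarTower ℤ_[p] E M]
    [IsLocalRing (integralClosure ℤ_[p] E)] [IsLocalRing (integralClosure ℤ_[p] M)]
    -- `M/E` unramified of degree `2r`: residue degree equals the field degree
    (hEM : Module.finrank E M = 2 * r)
    (hqE : Nat.card (ResidueField (integralClosure ℤ_[p] E)) = q)
    (hqM : Nat.card (ResidueField (integralClosure ℤ_[p] M)) = q ^ (2 * r))
    -- the action of the ring of integers `O_E` on `M`
    [Algebra (integralClosure ℤ_[p] E) M] [IsScalarTower (integralClosure ℤ_[p] E) E M] :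
    ∀ z : M,
      z ∈ Submodule.span (integralClosure ℤ_[p] E) {x : M | x ^ (q ^ r + 1) = 1} ↔
        z ∈ integralClosure ℤ_[p] M := by
  have : Algebra.IsSeparable E M := Algebra.isSeparable_tower_top_of_isSeparable ℚ_[p] E M
  exact stmt_13_general (K := ℚ_[p]) hr hEM hqE hqM
end
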